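/- arXiv:2106.14044 — 2 statements merged into one kernel-verified Lean document; each statement's English description precedes it below -/
import Mathlib

section
/- Let M = p_i^{n_i} p_j^2 p_k^2 with p_i, p_j, p_k distinct primes and n_i ≥ 2. Assume A ⊕ B = ℤ_M, |A| = p_i p_j p_k, Φ_M | A, and that A ∩ Λ contains a p_i extended corner for some D(M)-grid Λ. Then Λ ⊕ B = ℤ_M is also a tiling, and both A and B satisfy (T2). -/
open Polynomial

/-- The mask polynomial `A(X) = Σ_{a ∈ A} X^a` of a finite subset of `ZMod M`,
using the representatives in `{0, …, M-1}`. -/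
noncomputable def maskPoly (M : ℕ) (A : Finset (ZMod M)) : Polynomial ℤ :=
  ∑ a ∈ A, X ^ a.val

/-- `Φ_s | A` : the `s`-th cyclotomic polynomial divides the mask polynomial of `A` in `ℤ[X]`. -/
def cycDvd (M s : ℕ) (A : Finset (ZMod M)) : Prop :=
  cyclotomic s ℤ ∣ maskPoly M A

/-- `A ⊕ B = ℤ_M` : every element of `ℤ_M` has a unique representation `a + b`
with `a ∈ A` and `b ∈ B`. -/
def IsTiling (M : ℕ) (A B : Set (ZMod M)) : Prop :=
  ∀ z : ZMod M, ∃! ab : ZMod M × ZMod M, ab.1 ∈ A ∧ ab.2 ∈ B ∧ ab.1 + ab.2 = z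

/-- The Coven–Meyerowitz property (T2): whenever `s_1, …, s_m` are prime powers dividing `M`,
powers of pairwise distinct primes, with `Φ_{s_t} | A` for each `t`, then `Φ_{s_1 ⋯ s_m} | A`. -/
def SatisfiesT2 (M : ℕ) (A : Finset (ZMod M)) : Prop :=
  ∀ (P : Finset ℕ) (e : ℕ → ℕ), P.Nonempty →
    (∀ p ∈ P, p.Prime ∧ 1 ≤ e p ∧ p ^ e p ∣ M ∧ cycDvd M (p ^ e p) A) →
    cycDvd M (∏ p ∈ P, p ^ e p) A

/-- The `D`-grid through `x` in `ZMod M` : `Λ(x, D) = {y : D ∣ y - x}`. -/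
def gridSet (M : ℕ) (x : ZMod M) (D : ℕ) : Set (ZMod M) :=
  {y : ZMod M | (D : ZMod M) ∣ (y - x)}

/-- `S` is fibered in the `p` direction on scale `M`: every element of `S` has its whole
fiber `Λ(s, M/p)` contained in `S`. -/
def Fibered (M p : ℕ) (S : Set (ZMod M)) : Prop :=
  ∀ s ∈ S, gridSet M s (M / p) ⊆ S

/-- `Div_N(S)` : the set of values `(s - s', N) = gcd(s - s', N)` for `s, s' ∈ S`. -/
def DivSet (M N : ℕ) (S : Set (ZMod M)) : Set ℕ :=
  {m : ℕ | ∃ s ∈ S, ∃ s' ∈ S, Nat.gcd (s - s').val N = m}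

/-- `A ∩ Λ` contains a `p` extended corner (other two directions `q`, `r`). -/
def ExtCorner (M p q r : ℕ) (A Lam : Set (ZMod M)) : Prop :=
  ∃ a ∈ A ∩ Lam, ∃ a' ∈ A ∩ Lam,
    Nat.gcd (a - a').val M = M / p ∧
    Fibered M q (A ∩ gridSet M a (M / (q * r))) ∧
    ¬ Fibered M r (A ∩ gridSet M a (M / (q * r))) ∧
    Fibered M r (A ∩ gridSet M a' (M / (q * r))) ∧
    ¬ Fibered M q (A ∩ gridSet M a' (M / (q * r)))

/-!
By Tijdeman's theorem a tiling stays a tiling when `B` is multiplied by a unit, so a nonzero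
difference in `A` and a nonzero difference in `B` are never associated. Call a residue modulo
`p^n`, `q²` or `r²` low if it is nonzero and killed by `p`, `q` or `r`. The two faces of the corner
realise all differences with low or zero coordinates, up to associates, except those of type
`(0, low, low)`, so these are the only such differences which `B` can have.

At a point `x` of a face missing from `A` (a hole), averaging the solutions of
`a + t (b' - b) = x` over all units `t` gives a balance equation, in which the terms of `A` outside
the face pair with differences in `B` having a unit coordinate modulo `q²` or `r²`. There are four
kinds of them, of which only one survives. Together with the bound `q r` for the number of points
of `A` over one residue modulo `p^n`, this forces `B` to have no differences of type
`(0, low, low)` either.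

Thus `B` is a complete residue system modulo `p^(n-1) q r`, which is the tiling by the grid and
gives (T2) for `B`. It also makes points of `B` isolated in the relevant cuboids of order `s`, so
that `Φ_s ∤ B` and hence `Φ_s ∣ A`, which is (T2) for `A`.
-/

open scoped Finset

open Classical in
/-- The number of elements of `A` satisfying `P`. Decidability is classical, so that one notion
serves both abstract rings and `ZMod`. -/
noncomputable def countWhere {α : Type*} (A : Finset α) (P : α → Prop) : ℕ := #{a ∈ A | P a}

section Counting

variable {α : Type*}

theorem countWhere_eq_card_filter (A : Finset α) (P : α → Prop) [DecidablePred P] :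
    countWhere A P = #{a ∈ A | P a} := by
  unfold countWhere; congr

theorem countWhere_eq_zero {A : Finset α} {P : α → Prop} :
    countWhere A P = 0 ↔ ∀ a ∈ A, ¬ P a := by
  classical
  rw [countWhere_eq_card_filter, Finset.card_eq_zero, Finset.filter_eq_empty_iff]

theorem countWhere_congr {A : Finset α} {P Q : α → Prop} (h : ∀ a ∈ A, P a ↔ Q a) :
    countWhere A P = countWhere A Q := by
  classical
  rw [countWhere_eq_card_filter, countWhere_eq_card_filter, Finset.filter_congr h]

theorem countWhere_le_countWhere {A : Finset α} {P Q : α → Prop} (h : ∀ a ∈ A, P a → Q a) :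
    countWhere A P ≤ countWhere A Q := by
  classical
  rw [countWhere_eq_card_filter, countWhere_eq_card_filter]
  exact Finset.card_le_card fun a ha => by
    rw [Finset.mem_filter] at ha ⊢
    exact ⟨ha.1, h a ha.1 ha.2⟩

theorem countWhere_le_card (A : Finset α) (P : α → Prop) : countWhere A P ≤ #A := by
  classical
  rw [countWhere_eq_card_filter]
  exact Finset.card_filter_le A P

theorem countWhere_or {A : Finset α} {P Q : α → Prop} (h : ∀ a ∈ A, P a → ¬ Q a) :
    countWhere A (fun a => P a ∨ Q a) = countWhere A P + countWhere A Q := by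
  classical
  simp only [countWhere_eq_card_filter]
  rw [Finset.filter_or, Finset.card_union_of_disjoint (Finset.disjoint_filter.2 h)]

theorem countWhere_eq_self {A : Finset α} {a : α} (ha : a ∈ A) :
    countWhere A (fun c => c = a) = 1 := by
  classical
  refine Finset.card_eq_one.2 ⟨a, Finset.ext fun c => ?_⟩
  rw [Finset.mem_filter, Finset.mem_singleton, and_iff_right_iff_imp]
  rintro rfl
  exact ha

theorem countWhere_lt_countWhere {A : Finset α} {P Q : α → Prop} {a : α} (ha : a ∈ A)
    (h : ∀ c ∈ A, P c → Q c) (hP : ¬ P a) (hQ : Q a) : countWhere A P < countWhere A Q := by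
  rw [Nat.lt_iff_add_one_le, ← countWhere_eq_self ha, ← countWhere_or]
  · refine countWhere_le_countWhere ?_
    rintro c hc (hPc | rfl)
    exacts [h c hc hPc, hQ]
  · rintro c - hc rfl
    exact hP hc

theorem sum_countWhere_and_eq {β : Type*} (A : Finset α) (P : α → Prop) (u : α → β)
    (T : Finset β) :
    ∑ z ∈ T, countWhere A (fun a => P a ∧ u a = z) = countWhere A fun a => P a ∧ u a ∈ T := by
  classical
  simp only [countWhere_eq_card_filter]
  rw [Finset.card_eq_sum_card_fiberwise (f := u) (t := T)
    fun a ha => (Finset.mem_filter.1 ha).2.2]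
  refine Finset.sum_congr rfl fun z hz => congrArg _ (Finset.ext fun a => ?_)
  simp only [Finset.mem_filter]
  exact ⟨fun ⟨ha, hP, hu⟩ => ⟨⟨ha, hP, hu ▸ hz⟩, hu⟩, fun ⟨⟨ha, hP, _⟩, hu⟩ => ⟨ha, hP, hu⟩⟩

theorem dvd_countWhere {β : Type*} {A : Finset α} {P : α → Prop} {m : ℕ} (u : α → β)
    (h : ∀ a ∈ A, P a → countWhere A (fun c => P c ∧ u c = u a) = m) : m ∣ countWhere A P := by
  classical
  have himage : countWhere A P = countWhere A fun c => P c ∧ u c ∈ {a ∈ A | P a}.image u :=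
    countWhere_congr fun c hc => ⟨fun hPc => ⟨hPc, Finset.mem_image_of_mem u
      (Finset.mem_filter.2 ⟨hc, hPc⟩)⟩, And.left⟩
  rw [himage, ← sum_countWhere_and_eq]
  refine Finset.dvd_sum fun z hz => ?_
  obtain ⟨a, ha, rfl⟩ := Finset.mem_image.1 hz
  rw [h a (Finset.mem_filter.1 ha).1 (Finset.mem_filter.1 ha).2]

theorem countWhere_mul_le {β : Type*} {A : Finset α} {P Q : α → Prop} {m : ℕ} (u : α → β)
    (hinj : ∀ a ∈ A, P a → ∀ c ∈ A, P c → u a = u c → a = c)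
    (h : ∀ a ∈ A, P a → m ≤ countWhere A fun c => Q c ∧ u c = u a) :
    countWhere A P * m ≤ countWhere A Q := by
  classical
  calc countWhere A P * m = #({a ∈ A | P a}.image u) * m := by
        rw [countWhere_eq_card_filter, Finset.card_image_of_injOn]
        intro a ha c hc
        obtain ⟨ha, hPa⟩ := Finset.mem_filter.1 ha
        obtain ⟨hc, hPc⟩ := Finset.mem_filter.1 hc
        exact hinj a ha hPa c hc hPc
    _ ≤ ∑ z ∈ {a ∈ A | P a}.image u, countWhere A (fun c => Q c ∧ u c = z) := by
        refine Finset.card_nsmul_le_sum _ _ _ fun z hz => ?_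
        obtain ⟨a, ha, rfl⟩ := Finset.mem_image.1 hz
        exact h a (Finset.mem_filter.1 ha).1 (Finset.mem_filter.1 ha).2
    _ ≤ countWhere A Q := by
        rw [sum_countWhere_and_eq]
        exact countWhere_le_countWhere fun c _ hc => hc.1

theorem sum_ite_eq_countWhere_mul (A : Finset α) (P : α → Prop) [DecidablePred P] (c : ℚ) :
    ∑ a ∈ A, (if P a then c else 0) = countWhere A P * c := by
  rw [← Finset.sum_filter, Finset.sum_const, nsmul_eq_mul, countWhere_eq_card_filter]

end Counting

section Associates

variable {X : Type*} [CommRing X]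

/-- The number of associates of `t`; the orbit of `t` under multiplication by units. -/
noncomputable def assocCount (t : X) : ℕ := {s : X | Associated t s}.ncard

theorem assocCount_zero : assocCount (0 : X) = 1 := by
  have : {s : X | Associated 0 s} = {0} := by
    ext s
    exact Associated.comm.trans (associated_zero_iff_eq_zero s)
  rw [assocCount, this, Set.ncard_singleton]

theorem ncard_units_mul_eq {s t : X} (hst : Associated s t) :
    {u : Xˣ | u * s = t}.ncard * assocCount t = Nat.card Xˣ := by
  obtain ⟨v, rfl⟩ := hst
  have orbit_eq : MulAction.orbit Xˣ s = {t | Associated (s * v) t} := by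
    ext t
    rw [Set.mem_ofPred_eq, associated_mul_unit_left_iff]
    exact exists_congr fun u => Eq.congr_left (mul_comm (u : X) s)
  have transporter_eq : {u : Xˣ | u * s = s * v} =
      (· * v) '' (MulAction.stabilizer Xˣ s : Set Xˣ) := by
    ext u
    simp only [Set.mem_ofPred_eq, Set.mem_image, SetLike.mem_coe, MulAction.mem_stabilizer_iff,
      Units.smul_def, smul_eq_mul]
    constructor
    · intro hu
      refine ⟨u * v⁻¹, ?_, inv_mul_cancel_right u v⟩
      rw [Units.val_mul, mul_right_comm, hu, Units.mul_inv_cancel_right]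
    · rintro ⟨w, hw, rfl⟩
      rw [Units.val_mul, mul_right_comm, hw]
  rw [transporter_eq, Set.ncard_image_of_injective _ (mul_left_injective v), assocCount,
    ← orbit_eq, ← MulAction.index_stabilizer]
  exact Subgroup.card_mul_index _

end Associates

/-! ### Residues modulo prime powers -/

section Levels

variable {X : Type*} [CommRing X] {p : ℕ}

/-- The nonzero elements killed by `p`. In `ℤ/p^m` these are the nonzero multiples of `p^(m-1)`:
the residues of lowest order. -/
def IsLow (p : ℕ) (x : X) : Prop := x ≠ 0 ∧ (p : X) * x = 0

/-- The properties of the ring `ℤ/p^m`, `m ≥ 1`, which concern its residues of lowest order. -/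
structure PrimeLevel (p : ℕ) (X : Type*) [CommRing X] : Prop where
  prime : p.Prime
  ncard_ball : {x : X | (p : X) * x = 0}.ncard = p
  associated_add : ∀ s d : X, (p : X) * d = 0 → s ≠ 0 → s + d ≠ 0 → Associated s (s + d)

/-- The properties of the ring `ℤ/p²`, where a nonzero residue is either of lowest order or a
unit. -/
structure SquareLevel (p : ℕ) (X : Type*) [CommRing X] : Prop extends PrimeLevel p X where
  card_eq : Nat.card X = p ^ 2
  isUnit_iff : ∀ x : X, IsUnit x ↔ (p : X) * x ≠ 0

theorem isLow_sub_comm {x y : X} : IsLow p (x - y) ↔ IsLow p (y - x) := by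
  rw [← neg_sub, IsLow, IsLow, neg_ne_zero, mul_neg, neg_eq_zero]

theorem isUnit_sub_comm {x y : X} : IsUnit (x - y) ↔ IsUnit (y - x) := by
  rw [← neg_sub, IsUnit.neg_iff]

theorem natCast_mul_sub_comm {x y : X} : (p : X) * (x - y) = 0 ↔ (p : X) * (y - x) = 0 := by
  rw [← neg_sub, mul_neg, neg_eq_zero]

theorem natCast_mul_eq_zero_of_associated {s t : X} (h : Associated s t) (hs : (p : X) * s = 0) :
    (p : X) * t = 0 := by
  obtain ⟨u, rfl⟩ := h
  rw [← mul_assoc, hs, zero_mul]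

theorem IsLow.of_associated {s t : X} (hs : IsLow p s) (h : Associated s t) : IsLow p t :=
  ⟨mt h.eq_zero_iff.2 hs.1, natCast_mul_eq_zero_of_associated h hs.2⟩

theorem PrimeLevel.associated (H : PrimeLevel p X) {s t : X} (hs : IsLow p s) (ht : IsLow p t) :
    Associated s t := by
  have := H.associated_add s (t - s) (by rw [mul_sub, hs.2, ht.2, sub_zero]) hs.1
  rw [add_sub_cancel] at this
  exact this ht.1

theorem PrimeLevel.assocCount_eq (H : PrimeLevel p X) {t : X} (ht : IsLow p t) :
    assocCount t = p - 1 := by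
  have : {s : X | Associated t s} = {x : X | (p : X) * x = 0} \ {0} := by
    ext s
    exact ⟨fun h => (ht.of_associated h).symm, fun h => H.associated ht h.symm⟩
  have zero_mem : (0 : X) ∈ {x : X | (p : X) * x = 0} := mul_zero _
  rw [assocCount, this, Set.ncard_sdiff_singleton_of_mem zero_mem, H.ncard_ball]

theorem SquareLevel.not_isUnit_iff (H : SquareLevel p X) {x : X} :
    ¬ IsUnit x ↔ (p : X) * x = 0 := by
  rw [H.isUnit_iff, not_not]

theorem SquareLevel.finite (H : SquareLevel p X) : Finite X :=
  Nat.finite_of_card_ne_zero (H.card_eq ▸ pow_ne_zero 2 H.prime.ne_zero)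

theorem SquareLevel.ncard_isUnit (H : SquareLevel p X) :
    {x : X | IsUnit x}.ncard = p * (p - 1) := by
  have := H.finite
  have : {x : X | IsUnit x} = {x : X | (p : X) * x = 0}ᶜ := by
    ext x
    exact H.isUnit_iff x
  rw [this, Set.ncard_compl, H.card_eq, H.ncard_ball, Nat.mul_sub, sq, mul_one]

theorem SquareLevel.assocCount_eq (H : SquareLevel p X) {t : X} (ht : IsUnit t) :
    assocCount t = p * (p - 1) := by
  rw [← H.ncard_isUnit, assocCount]
  congr 1
  ext s
  exact ⟨fun h => h.isUnit ht, fun h => (associated_one_iff_isUnit.2 ht).trans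
    (associated_one_iff_isUnit.2 h).symm⟩

theorem PrimeLevel.ncard_ball_sub (H : PrimeLevel p X) (c : X) :
    {x : X | (p : X) * (x - c) = 0}.ncard = p := by
  refine Eq.trans ?_ H.ncard_ball
  rw [← Set.ncard_image_of_injective _ (sub_left_injective (b := c))]
  congr 1
  ext x
  simp [sub_eq_iff_eq_add]

theorem PrimeLevel.exists_finset_ball (H : PrimeLevel p X) (c : X) :
    ∃ T : Finset X, #T = p ∧ ∀ x, x ∈ T ↔ (p : X) * (x - c) = 0 := by
  have hcard := H.ncard_ball_sub c
  have hfin : {x : X | (p : X) * (x - c) = 0}.Finite :=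
    Set.finite_of_ncard_ne_zero (hcard.trans_ne H.prime.ne_zero)
  exact ⟨hfin.toFinset, by rw [← Set.ncard_eq_toFinset_card _ hfin, hcard], fun x => by simp⟩

theorem PrimeLevel.card_le (H : PrimeLevel p X) {ι : Type*} {T : Finset ι} {u : ι → X}
    (hlow : ∀ s ∈ T, ∀ t ∈ T, (p : X) * (u s - u t) = 0)
    (hinj : ∀ s ∈ T, ∀ t ∈ T, u s = u t → s = t) : #T ≤ p := by
  rcases T.eq_empty_or_nonempty with rfl | ⟨c, hc⟩
  · exact Nat.zero_le _
  obtain ⟨S, hS, hmem⟩ := H.exists_finset_ball (u c)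
  rw [← hS]
  exact Finset.card_le_card_of_injOn u (fun t ht => (hmem _).2 (hlow t ht c hc))
    fun s hs t ht => hinj s hs t ht

/-- The balls `p * (x - u t) = 0` are pairwise disjoint and have `p` elements each. -/
theorem SquareLevel.card_le (H : SquareLevel p X) {ι : Type*} {T : Finset ι} {u : ι → X}
    (hinj : ∀ s ∈ T, ∀ t ∈ T, (p : X) * (u s - u t) = 0 → s = t) : #T ≤ p := by
  have := H.finite
  have := Fintype.ofFinite X
  obtain ⟨S, hS, hmem⟩ := H.exists_finset_ball 0
  have hle : #(T ×ˢ S) ≤ #(Finset.univ : Finset X) := by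
    refine Finset.card_le_card_of_injOn (fun x => u x.1 + x.2) (by simp) ?_
    rintro ⟨s, c⟩ hs ⟨t, d⟩ ht heq
    simp only [Finset.coe_product, Set.mem_prod, Finset.mem_coe, hmem, sub_zero] at hs ht heq
    have : s = t := hinj s hs.1 t ht.1 (by linear_combination (p : X) * heq - hs.2 + ht.2)
    subst this
    rw [add_left_cancel heq]
  rw [Finset.card_product, hS, Finset.card_univ, ← Nat.card_eq_fintype_card, H.card_eq, sq] at hle
  exact Nat.le_of_mul_le_mul_right hle H.prime.pos

end Levels

/-! ### Tilings whose dilates are tilings -/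

section DilationTiling

variable {R : Type*} [CommRing R] {A B : Finset R}

/-- `A ⊕ tB = R` for every unit `t`. By Tijdeman's theorem every tiling of `ZMod M` has this
property. -/
def IsDilationTiling (A B : Finset R) : Prop :=
  ∀ t : R, IsUnit t → ∀ x : R, ∃! ab : R × R, ab.1 ∈ A ∧ ab.2 ∈ B ∧ ab.1 + t * ab.2 = x

theorem IsDilationTiling.exists_mem_right (H : IsDilationTiling A B) : ∃ b, b ∈ B := by
  obtain ⟨ab, ⟨-, hb, -⟩, -⟩ := H 1 isUnit_one 0
  exact ⟨ab.2, hb⟩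

theorem IsDilationTiling.eq_and_eq (H : IsDilationTiling A B) {a a' b b' : R} (ha : a ∈ A)
    (ha' : a' ∈ A) (hb : b ∈ B) (hb' : b' ∈ B) (h : Associated (a - a') (b - b')) :
    a = a' ∧ b = b' := by
  obtain ⟨u, hu⟩ := h.symm
  have heq : a + u * b' = a' + u * b := by linear_combination -hu
  have := (H u u.isUnit _).unique (y₁ := (a, b')) (y₂ := (a', b)) ⟨ha, hb', rfl⟩
    ⟨ha', hb, heq.symm⟩
  rw [Prod.mk.injEq] at this
  exact ⟨this.1, this.2.symm⟩

/-- For each unit `u` exactly one pair satisfies `x - a = u * (b - b₀)`, and a pair satisfies this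
for a proportion `1 / assocCount (x - a)` of the units or for none. -/
theorem IsDilationTiling.sum_countWhere_div_assocCount [Finite R] (H : IsDilationTiling A B)
    (x b₀ : R) :
    ∑ a ∈ A, (countWhere B (fun b => Associated (b - b₀) (x - a)) : ℚ) / assocCount (x - a) =
      1 := by
  classical
  have := Fintype.ofFinite R
  have card_pairs (u : Rˣ) : #{ab ∈ A ×ˢ B | u * (ab.2 - b₀) = x - ab.1} = 1 := by
    obtain ⟨ab, ⟨ha, hb, hab⟩, huniq⟩ := H u u.isUnit (x + u * b₀)
    refine Finset.card_eq_one.2 ⟨ab, Finset.ext fun cd => ?_⟩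
    rw [Finset.mem_filter, Finset.mem_product, Finset.mem_singleton]
    constructor
    · rintro ⟨⟨hc, hd⟩, hcd⟩
      exact huniq cd ⟨hc, hd, by linear_combination hcd⟩
    · rintro rfl
      exact ⟨⟨ha, hb⟩, by linear_combination hab⟩
  have card_units_pair (a b : R) : (#{u : Rˣ | u * (b - b₀) = x - a} : ℚ) =
      if Associated (b - b₀) (x - a) then (Nat.card Rˣ : ℚ) / assocCount (x - a) else 0 := by
    split_ifs with hab
    · have hcard := ncard_units_mul_eq hab
      rw [Set.ncard_eq_toFinset_card', Set.toFinset_ofPred] at hcard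
      have hne : assocCount (x - a) ≠ 0 := right_ne_zero_of_mul (hcard.trans_ne Nat.card_pos.ne')
      rw [eq_div_iff (Nat.cast_ne_zero.2 hne)]
      exact_mod_cast hcard
    · rw [Nat.cast_eq_zero, Finset.card_eq_zero, Finset.filter_eq_empty_iff]
      exact fun u _ hu => hab ⟨u, by rw [mul_comm, hu]⟩
  have double_count := Finset.sum_card_bipartiteAbove_eq_sum_card_bipartiteBelow
    (s := A ×ˢ B) (t := (Finset.univ : Finset Rˣ)) (fun ab (u : Rˣ) => u * (ab.2 - b₀) = x - ab.1)
  simp only [Finset.bipartiteAbove, Finset.bipartiteBelow, card_pairs, Finset.sum_const,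
    smul_eq_mul, mul_one, Finset.card_univ, ← Nat.card_eq_fintype_card] at double_count
  have hunits : (Nat.card Rˣ : ℚ) ≠ 0 := Nat.cast_ne_zero.2 Nat.card_pos.ne'
  rw [Finset.sum_product] at double_count
  have total := congrArg (Nat.cast (R := ℚ)) double_count
  push_cast [card_units_pair, sum_ite_eq_countWhere_mul] at total
  rw [← mul_right_inj' hunits, mul_one, Finset.mul_sum]
  exact (Finset.sum_congr rfl fun a _ => mul_div_left_comm _ _ _).trans total

end DilationTiling

/-! ### Coordinates -/

section Coordinates

variable {R X Y Z : Type*} [CommRing R] [CommRing X] [CommRing Y] [CommRing Z]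
variable {f : R →+* X} {g : R →+* Y} {h : R →+* Z}

/-- `(f, g, h)` identifies `R` with `X × Y × Z`. Homomorphisms are used in place of the product
itself so that exchanging two factors costs nothing. -/
def IsCoordinateSystem (f : R →+* X) (g : R →+* Y) (h : R →+* Z) : Prop :=
  Function.Bijective fun t => (f t, g t, h t)

namespace IsCoordinateSystem

theorem swap (H : IsCoordinateSystem f g h) : IsCoordinateSystem f h g :=
  (Equiv.prodCongr (Equiv.refl X) (Equiv.prodComm Y Z)).bijective.comp H

theorem exists_eq (H : IsCoordinateSystem f g h) (x : X) (y : Y) (z : Z) :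
    ∃ t, f t = x ∧ g t = y ∧ h t = z := by
  simpa only [Prod.mk.injEq] using H.2 (x, y, z)

theorem ext (H : IsCoordinateSystem f g h) {s t : R} (hf : f s = f t) (hg : g s = g t)
    (hh : h s = h t) : s = t :=
  H.1 (by simp only [hf, hg, hh])

theorem eq_zero (H : IsCoordinateSystem f g h) {t : R} (hf : f t = 0) (hg : g t = 0)
    (hh : h t = 0) : t = 0 :=
  H.ext (by rw [hf, map_zero]) (by rw [hg, map_zero]) (by rw [hh, map_zero])

theorem exists_unit_eq (H : IsCoordinateSystem f g h) (u : Xˣ) (v : Yˣ) (w : Zˣ) :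
    ∃ t : Rˣ, f t = u ∧ g t = v ∧ h t = w := by
  obtain ⟨t, hf, hg, hh⟩ := H.exists_eq u v w
  obtain ⟨t', hf', hg', hh'⟩ := H.exists_eq (u⁻¹ : Xˣ) (v⁻¹ : Yˣ) (w⁻¹ : Zˣ)
  exact ⟨Units.mkOfMulEqOne t t' (H.ext (by simp [hf, hf']) (by simp [hg, hg'])
    (by simp [hh, hh'])), hf, hg, hh⟩

theorem associated_iff (H : IsCoordinateSystem f g h) {s t : R} :
    Associated s t ↔ Associated (f s) (f t) ∧ Associated (g s) (g t) ∧ Associated (h s) (h t) := by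
  refine ⟨fun hst => ⟨hst.map f, hst.map g, hst.map h⟩, ?_⟩
  rintro ⟨⟨u, hu⟩, ⟨v, hv⟩, ⟨w, hw⟩⟩
  obtain ⟨e, hf, hg, hh⟩ := H.exists_unit_eq u v w
  exact ⟨e, H.ext (by rw [map_mul, hf, hu]) (by rw [map_mul, hg, hv]) (by rw [map_mul, hh, hw])⟩

theorem assocCount_eq (H : IsCoordinateSystem f g h) (t : R) :
    assocCount t = assocCount (f t) * (assocCount (g t) * assocCount (h t)) := by
  simp only [assocCount]
  rw [← Set.ncard_prod, ← Set.ncard_prod, ← Set.ncard_image_of_injective _ H.1]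
  congr 1
  ext ⟨x, y, z⟩
  constructor
  · rintro ⟨s, hs, heq⟩
    rw [← heq]
    exact H.associated_iff.1 hs
  · intro hxyz
    obtain ⟨s, rfl, rfl, rfl⟩ := H.exists_eq x y z
    exact ⟨s, H.associated_iff.2 hxyz, rfl⟩

theorem countWhere_line (H : IsCoordinateSystem f g h) {A : Finset R} {x : X} {z : Z}
    (T : Finset Y) (hT : ∀ t, f t = x → g t ∈ T → h t = z → t ∈ A) :
    countWhere A (fun t => f t = x ∧ g t ∈ T ∧ h t = z) = #T := by
  classical
  rw [countWhere_eq_card_filter]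
  refine Finset.card_bij (fun t _ => g t) (fun t ht => (Finset.mem_filter.1 ht).2.2.1) ?_ ?_
  · intro s hs t ht hst
    obtain ⟨-, hfs, -, hhs⟩ := Finset.mem_filter.1 hs
    obtain ⟨-, hft, -, hht⟩ := Finset.mem_filter.1 ht
    exact H.ext (hfs.trans hft.symm) hst (hhs.trans hht.symm)
  · intro y hy
    obtain ⟨t, hf, rfl, hh⟩ := H.exists_eq x y z
    exact ⟨t, Finset.mem_filter.2 ⟨hT t hf hy hh, hf, hy, hh⟩, rfl⟩

end IsCoordinateSystem

end Coordinates

section MapSub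

variable {R X : Type*} [CommRing R] [CommRing X] {f : R →+* X} {p : ℕ}

theorem natCast_mul_map_sub {b s t : R} (hs : (p : X) * f (s - b) = 0)
    (ht : (p : X) * f (t - b) = 0) : (p : X) * f (s - t) = 0 := by
  rw [map_sub] at hs ht ⊢
  linear_combination hs - ht

theorem map_sub_eq_zero {b s t : R} (hs : f (s - b) = 0) (ht : f (t - b) = 0) : f (s - t) = 0 := by
  rw [← sub_sub_sub_cancel_right s t b, map_sub, hs, ht, sub_self]

theorem PrimeLevel.countWhere_le (H : PrimeLevel p X) (f : R →+* X) {B : Finset R} {P : R → Prop}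
    (b : R) (hlow : ∀ s, P s → (p : X) * f (s - b) = 0)
    (hinj : ∀ s ∈ B, P s → ∀ t ∈ B, P t → f (s - t) = 0 → s = t) : countWhere B P ≤ p := by
  classical
  rw [countWhere_eq_card_filter]
  refine H.card_le (u := f) ?_ ?_ <;> simp only [Finset.mem_filter, ← map_sub]
  · exact fun s hs t ht => natCast_mul_map_sub (hlow s hs.2) (hlow t ht.2)
  · exact fun s hs t ht hst =>
      hinj s hs.1 hs.2 t ht.1 ht.2 (by rw [map_sub, hst, sub_self])

theorem SquareLevel.countWhere_le (H : SquareLevel p X) (f : R →+* X) {B : Finset R}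
    {P : R → Prop} (hinj : ∀ s ∈ B, P s → ∀ t ∈ B, P t → (p : X) * f (s - t) = 0 → s = t) :
    countWhere B P ≤ p := by
  classical
  rw [countWhere_eq_card_filter]
  refine H.card_le (u := f) ?_
  simp only [Finset.mem_filter, ← map_sub]
  exact fun s hs t ht => hinj s hs.1 hs.2 t ht.1 ht.2

end MapSub

section Kinds

variable {X : Type*} [CommRing X] {p : ℕ}

/-- `x` is low if `s` holds, and zero otherwise. -/
def HasKind (p : ℕ) (s : Bool) (x : X) : Prop := bif s then IsLow p x else x = 0

theorem HasKind.natCast_mul_eq_zero {s : Bool} {x : X} (hx : HasKind p s x) : (p : X) * x = 0 := by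
  cases s
  · rw [show x = 0 from hx, mul_zero]
  · exact hx.2

theorem exists_hasKind {x : X} (hx : (p : X) * x = 0) : ∃ s, HasKind p s x := by
  by_cases hx₀ : x = 0
  · exact ⟨false, hx₀⟩
  · exact ⟨true, hx₀, hx⟩

theorem PrimeLevel.associated_iff (H : PrimeLevel p X) {s : Bool} {t x : X} (ht : HasKind p s t) :
    Associated x t ↔ HasKind p s x := by
  cases s
  · rw [show t = 0 from ht, associated_zero_iff_eq_zero]
    rfl
  · exact ⟨fun h => IsLow.of_associated ht h.symm, fun hx => H.associated hx ht⟩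

theorem PrimeLevel.assocCount_kind (H : PrimeLevel p X) {s : Bool} {t : X} (ht : HasKind p s t) :
    assocCount t = bif s then p - 1 else 1 := by
  cases s
  · rw [show t = 0 from ht, assocCount_zero]
    rfl
  · exact H.assocCount_eq ht

theorem hasKind_cond_sub_cond {i₀ i₁ : X} (hi : IsLow p (i₁ - i₀)) (s s' : Bool) :
    HasKind p (xor s s') ((bif s then i₁ else i₀) - (bif s' then i₁ else i₀)) := by
  cases s <;> cases s' <;> simp [HasKind, hi, isLow_sub_comm.1 hi]

end Kinds

/-! ### Extended corners -/

section Corner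

variable {R X Y Z : Type*} [CommRing R] [CommRing X] [CommRing Y] [CommRing Z]

/-- On the face `f = i` of the cell around `(i, y, z)`, the set `A` contains the centre, is fibered
in the direction of `g`, and is not fibered in the direction of `h`: some point of the `h`-fiber
through the centre is missing. -/
structure FiberedFace (f : R →+* X) (g : R →+* Y) (h : R →+* Z) (q r : ℕ) (A : Finset R)
    (i : X) (y : Y) (z : Z) : Prop where
  center : ∃ c ∈ A, f c = i ∧ g c = y ∧ h c = z
  fibered : ∀ c ∈ A, f c = i → g c = y → (r : Z) * (h c - z) = 0 →
    ∀ c', f c' = i → (q : Y) * (g c' - y) = 0 → h c' = h c → c' ∈ A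
  hole : ∃ c ∉ A, f c = i ∧ g c = y ∧ (r : Z) * (h c - z) = 0

/-- A tiling `A ⊕ B = R`, in coordinates with moduli powers of `p`, `q²` and `r²`, such that `A` has
an extended corner in the direction of `f` with centres `(i₀, y₀, z₀)` and `(i₁, y₀, z₀)`. -/
structure CornerTiling (f : R →+* X) (g : R →+* Y) (h : R →+* Z) (p q r : ℕ) (A B : Finset R)
    (i₀ i₁ : X) (y₀ : Y) (z₀ : Z) : Prop where
  levelX : PrimeLevel p X
  levelY : SquareLevel q Y
  levelZ : SquareLevel r Z
  p_ne_q : p ≠ q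
  p_ne_r : p ≠ r
  q_ne_r : q ≠ r
  coords : IsCoordinateSystem f g h
  tiling : IsDilationTiling A B
  slice_le : ∀ i, countWhere A (f · = i) ≤ q * r
  isLow_sub : IsLow p (i₁ - i₀)
  face₀ : FiberedFace f g h q r A i₀ y₀ z₀
  face₁ : FiberedFace f h g r q A i₁ z₀ y₀

/-- A point of the face `f = i₀` missing from `A`, on the `h`-fiber through the centre. -/
structure IsHole (f : R →+* X) (g : R →+* Y) (h : R →+* Z) (r : ℕ) (A : Finset R)
    (i₀ : X) (y₀ : Y) (z₀ : Z) (x : R) : Prop where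
  notMem : x ∉ A
  f_eq : f x = i₀
  g_eq : g x = y₀
  h_low : (r : Z) * (h x - z₀) = 0

variable {f : R →+* X} {g : R →+* Y} {h : R →+* Z} {p q r : ℕ} {A B : Finset R}
variable {i₀ i₁ : X} {y₀ : Y} {z₀ : Z}

theorem FiberedFace.mem (F : FiberedFace f g h q r A i₀ y₀ z₀) {c : R} (hf : f c = i₀)
    (hg : (q : Y) * (g c - y₀) = 0) (hh : h c = z₀) : c ∈ A := by
  obtain ⟨c₀, hc₀, hf₀, hg₀, hh₀⟩ := F.center
  exact F.fibered c₀ hc₀ hf₀ hg₀ (by rw [hh₀, sub_self, mul_zero]) c hf hg (by rw [hh, hh₀])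

namespace CornerTiling

theorem swap (C : CornerTiling f g h p q r A B i₀ i₁ y₀ z₀) :
    CornerTiling f h g p r q A B i₁ i₀ z₀ y₀ where
  levelX := C.levelX
  levelY := C.levelZ
  levelZ := C.levelY
  p_ne_q := C.p_ne_r
  p_ne_r := C.p_ne_q
  q_ne_r := C.q_ne_r.symm
  coords := C.coords.swap
  tiling := C.tiling
  slice_le i := mul_comm q r ▸ C.slice_le i
  isLow_sub := isLow_sub_comm.1 C.isLow_sub
  face₀ := C.face₁
  face₁ := C.face₀

theorem i_ne (C : CornerTiling f g h p q r A B i₀ i₁ y₀ z₀) : i₁ ≠ i₀ := sub_ne_zero.1 C.isLow_sub.1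

theorem exists_isHole (C : CornerTiling f g h p q r A B i₀ i₁ y₀ z₀) :
    ∃ x, IsHole f g h r A i₀ y₀ z₀ x := by
  obtain ⟨x, hx, hf, hg, hh⟩ := C.face₀.hole
  exact ⟨x, hx, hf, hg, hh⟩

theorem mem_of_kind (C : CornerTiling f g h p q r A B i₀ i₁ y₀ z₀) {z₁ : Z}
    (hz : (r : Z) * (z₁ - z₀) = 0) {s t : Bool} (hst : s || t) {c : R}
    (hf : f c = bif s then i₁ else i₀) (hg : g c = y₀) (hh : h c = bif t then z₀ else z₁) :
    c ∈ A := by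
  cases s
  · cases t
    · exact absurd hst Bool.false_ne_true
    · exact C.face₀.mem hf (by rw [hg, sub_self, mul_zero]) hh
  · refine C.face₁.mem hf ?_ hg
    cases t
    · rwa [show h c = z₁ from hh]
    · rw [show h c = z₀ from hh, sub_self, mul_zero]

theorem eq_and_eq (C : CornerTiling f g h p q r A B i₀ i₁ y₀ z₀) {a a' b b' : R} (ha : a ∈ A)
    (ha' : a' ∈ A) (hb : b ∈ B) (hb' : b' ∈ B) (hf : Associated (f a - f a') (f (b - b')))
    (hg : Associated (g a - g a') (g (b - b'))) (hh : Associated (h a - h a') (h (b - b'))) :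
    a = a' ∧ b = b' := by
  rw [← map_sub] at hf hg hh
  exact C.tiling.eq_and_eq ha ha' hb hb' (C.coords.associated_iff.2 ⟨hf, hg, hh⟩)

/-- The elements of the two faces of the corner have all other low differences, hence `B` has
none. -/
theorem eq_or_of_low (C : CornerTiling f g h p q r A B i₀ i₁ y₀ z₀) {b b' : R} (hb : b ∈ B)
    (hb' : b' ∈ B) (hf : (p : X) * f (b - b') = 0) (hg : (q : Y) * g (b - b') = 0)
    (hh : (r : Z) * h (b - b') = 0) :
    b = b' ∨ f (b - b') = 0 ∧ IsLow q (g (b - b')) ∧ IsLow r (h (b - b')) := by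
  by_contra! hne
  refine hne.1 ?_
  obtain ⟨a₁, hf₁, hg₁, hh₁⟩ := C.coords.exists_eq i₁ y₀ (z₀ + h (b - b'))
  have ha₁ : a₁ ∈ A := C.face₁.mem hf₁ (by rw [hh₁, add_sub_cancel_left, hh]) hg₁
  by_cases hf₀ : f (b - b') = 0
  · by_cases hg₀ : g (b - b') = 0
    · obtain ⟨a, hfa, hga, hha⟩ := C.coords.exists_eq i₁ y₀ z₀
      have ha : a ∈ A := C.face₁.mem hfa (by rw [hha, sub_self, mul_zero]) hga
      exact (C.eq_and_eq ha₁ ha hb hb' (by rw [hf₁, hfa, sub_self, hf₀])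
        (by rw [hg₁, hga, sub_self, hg₀]) (by rw [hh₁, hha, add_sub_cancel_left])).2
    · have hh₀ : h (b - b') = 0 := by
        by_contra hh₀
        exact hne.2 hf₀ ⟨hg₀, hg⟩ ⟨hh₀, hh⟩
      obtain ⟨a, hfa, hga, hha⟩ := C.coords.exists_eq i₀ y₀ z₀
      have ha : a ∈ A := C.face₀.mem hfa (by rw [hga, sub_self, mul_zero]) hha
      obtain ⟨a₀, hf₀', hg₀', hh₀'⟩ := C.coords.exists_eq i₀ (y₀ + g (b - b')) z₀
      have ha₀ : a₀ ∈ A := C.face₀.mem hf₀' (by rw [hg₀', add_sub_cancel_left, hg]) hh₀'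
      exact (C.eq_and_eq ha₀ ha hb hb' (by rw [hf₀', hfa, sub_self, hf₀])
        (by rw [hg₀', hga, add_sub_cancel_left]) (by rw [hh₀', hha, sub_self, hh₀])).2
  · obtain ⟨a, hfa, hga, hha⟩ := C.coords.exists_eq i₀ (y₀ - g (b - b')) z₀
    have ha : a ∈ A := C.face₀.mem hfa (by rw [hga, sub_sub_cancel_left, mul_neg, hg, neg_zero]) hha
    exact (C.eq_and_eq ha₁ ha hb hb'
      (by rw [hf₁, hfa]; exact C.levelX.associated C.isLow_sub ⟨hf₀, hf⟩)
      (by rw [hg₁, hga, sub_sub_cancel]) (by rw [hh₁, hha, add_sub_cancel_left])).2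

theorem eq_of_low_of_h_eq (C : CornerTiling f g h p q r A B i₀ i₁ y₀ z₀) {b b' : R} (hb : b ∈ B)
    (hb' : b' ∈ B) (hf : (p : X) * f (b - b') = 0) (hg : (q : Y) * g (b - b') = 0)
    (hh : h (b - b') = 0) : b = b' :=
  (C.eq_or_of_low hb hb' hf hg (by rw [hh, mul_zero])).resolve_right fun hlow => hlow.2.2.1 hh

section Hole

variable {x a b b' : R}

theorem isHole_ne (C : CornerTiling f g h p q r A B i₀ i₁ y₀ z₀)
    (hx : IsHole f g h r A i₀ y₀ z₀ x) : h x ≠ z₀ := fun hz =>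
  hx.notMem (C.face₀.mem hx.f_eq (by rw [hx.g_eq, sub_self, mul_zero]) hz)

theorem isLow_hole_sub (C : CornerTiling f g h p q r A B i₀ i₁ y₀ z₀)
    (hx : IsHole f g h r A i₀ y₀ z₀ x) : IsLow r (z₀ - h x) :=
  isLow_sub_comm.1 ⟨sub_ne_zero.2 (C.isHole_ne hx), hx.h_low⟩

theorem exists_f_eq (C : CornerTiling f g h p q r A B i₀ i₁ y₀ z₀)
    (hx : IsHole f g h r A i₀ y₀ z₀ x) (ha : a ∈ A) (hb : b ∈ B) (hb' : b' ∈ B)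
    (hab : Associated (x - a) (b - b')) : ∃ s : Bool, f a = bif s then i₁ else i₀ := by
  by_contra! hne
  have hi₀ : f a ≠ i₀ := hne false
  have hi₁ : f a ≠ i₁ := hne true
  obtain ⟨hf, hg, hh⟩ := C.coords.associated_iff.1 hab
  rw [map_sub] at hf hg hh
  obtain ⟨c, hfc, hgc, hhc⟩ := C.coords.exists_eq i₁ y₀ (h x)
  have hc : c ∈ A := C.face₁.mem hfc (by rw [hhc, hx.h_low]) hgc
  have shift := C.levelX.associated_add (i₀ - f a) (i₁ - i₀) C.isLow_sub.2
    (sub_ne_zero.2 hi₀.symm) (by rw [sub_add_sub_cancel']; exact sub_ne_zero.2 hi₁.symm)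
  rw [sub_add_sub_cancel'] at shift
  rw [hx.f_eq] at hf
  have := (C.eq_and_eq hc ha hb hb' (by rw [hfc]; exact shift.symm.trans hf)
    (by rw [hgc, ← hx.g_eq]; exact hg) (by rw [hhc]; exact hh)).1
  exact hi₁ (by rw [← this, hfc])

theorem exists_h_eq (C : CornerTiling f g h p q r A B i₀ i₁ y₀ z₀)
    (hx : IsHole f g h r A i₀ y₀ z₀ x) (ha : a ∈ A) (hb : b ∈ B) (hb' : b' ∈ B)
    (hab : Associated (x - a) (b - b')) : ∃ t : Bool, h a = bif t then z₀ else h x := by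
  by_contra! hne
  have hzx : h a ≠ h x := hne false
  have hz₀ : h a ≠ z₀ := hne true
  obtain ⟨hf, hg, hh⟩ := C.coords.associated_iff.1 hab
  rw [map_sub] at hf hg hh
  obtain ⟨c, hfc, hgc, hhc⟩ := C.coords.exists_eq i₀ y₀ z₀
  have hc : c ∈ A := C.face₀.mem hfc (by rw [hgc, sub_self, mul_zero]) hhc
  have shift := C.levelZ.associated_add (h x - h a) (z₀ - h x) (C.isLow_hole_sub hx).2
    (sub_ne_zero.2 hzx.symm) (by rw [sub_add_sub_cancel']; exact sub_ne_zero.2 hz₀.symm)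
  rw [sub_add_sub_cancel'] at shift
  have := (C.eq_and_eq hc ha hb hb' (by rw [hfc, ← hx.f_eq]; exact hf)
    (by rw [hgc, ← hx.g_eq]; exact hg) (by rw [hhc]; exact shift.symm.trans hh)).1
  exact hz₀ (by rw [← this, hhc])

theorem eq_of_not_isUnit (C : CornerTiling f g h p q r A B i₀ i₁ y₀ z₀)
    (hx : IsHole f g h r A i₀ y₀ z₀ x) (ha : a ∈ A) (hb : b ∈ B) (hb' : b' ∈ B)
    (hab : Associated (x - a) (b - b')) (hu : ¬ IsUnit (g a - y₀)) :
    f a = i₀ ∧ IsLow q (g a - y₀) ∧ h a = z₀ := by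
  obtain ⟨s, hs⟩ := C.exists_f_eq hx ha hb hb' hab
  obtain ⟨t, ht⟩ := C.exists_h_eq hx ha hb hb' hab
  obtain ⟨hf, hg, hh⟩ := C.coords.associated_iff.1 hab
  rw [map_sub] at hf hg hh
  rw [hx.f_eq] at hf
  rw [hx.g_eq] at hg
  rw [C.levelY.not_isUnit_iff, natCast_mul_sub_comm] at hu
  have hfp : (p : X) * (i₀ - f a) = 0 :=
    hs ▸ (hasKind_cond_sub_cond C.isLow_sub false s).natCast_mul_eq_zero
  have hhr : (r : Z) * (h x - h a) = 0 :=
    ht ▸ (hasKind_cond_sub_cond (C.isLow_hole_sub hx) false t).natCast_mul_eq_zero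
  rcases C.eq_or_of_low hb hb' (natCast_mul_eq_zero_of_associated hf hfp)
    (natCast_mul_eq_zero_of_associated hg hu) (natCast_mul_eq_zero_of_associated hh hhr) with
    rfl | ⟨hf₀, hglow, hhlow⟩
  · rw [sub_self, associated_zero_iff_eq_zero, sub_eq_zero] at hab
    exact absurd (hab ▸ ha) hx.notMem
  · refine ⟨(sub_eq_zero.1 (hf.eq_zero_iff.2 hf₀)).symm,
      isLow_sub_comm.1 (hglow.of_associated hg.symm), ?_⟩
    cases t
    · exact absurd (sub_eq_zero.2 ht.symm) (hhlow.of_associated hh.symm).1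
    · exact ht

end Hole

end CornerTiling

/-! ### The balance equation at a hole -/

/-- The number of elements of `A` on the line `f = i`, `h = z` at unit distance from `y`. -/
noncomputable def lineUnits (f : R →+* X) (g : R →+* Y) (h : R →+* Z) (A : Finset R) (y : Y)
    (i : X) (z : Z) : ℕ :=
  countWhere A fun a => f a = i ∧ IsUnit (g a - y) ∧ h a = z

/-- The number of elements of `B` whose difference from `b` is a unit in the coordinate `g` and has
the kinds `s` and `t` in the coordinates `f` and `h`. -/
noncomputable def unitDiffs (f : R →+* X) (g : R →+* Y) (h : R →+* Z) (p r : ℕ) (B : Finset R)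
    (b : R) (s t : Bool) : ℕ :=
  countWhere B fun b' => HasKind p s (f (b' - b)) ∧ IsUnit (g (b' - b)) ∧ HasKind r t (h (b' - b))

/-- The number of elements of `B` whose difference from `b` vanishes in the coordinate `f` and is
low in the coordinates `g` and `h`. -/
noncomputable def lowDiffs (f : R →+* X) (g : R →+* Y) (h : R →+* Z) (q r : ℕ) (B : Finset R)
    (b : R) : ℕ :=
  countWhere B fun b' => f (b' - b) = 0 ∧ IsLow q (g (b' - b)) ∧ IsLow r (h (b' - b))

/-- The number of associates of an element which is a unit in the coordinate `g` and has
the kinds `s` and `t` in the coordinates `f` and `h`. -/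
def unitWeight (p q r : ℕ) (s t : Bool) : ℕ :=
  (bif s then p - 1 else 1) * (q * (q - 1) * bif t then r - 1 else 1)

namespace CornerTiling

section Hole

variable {x a b : R}

theorem associated_iff_of_isUnit (C : CornerTiling f g h p q r A B i₀ i₁ y₀ z₀)
    (hx : IsHole f g h r A i₀ y₀ z₀ x) {s t : Bool} (hf : f a = bif s then i₁ else i₀)
    (hg : IsUnit (g a - y₀)) (hh : h a = bif t then z₀ else h x) (d : R) :
    Associated d (x - a) ↔ HasKind p s (f d) ∧ IsUnit (g d) ∧ HasKind r t (h d) := by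
  have hfs : HasKind p s (f (x - a)) := by
    rw [map_sub, hx.f_eq, hf]
    simpa using hasKind_cond_sub_cond C.isLow_sub false s
  have hht : HasKind r t (h (x - a)) := by
    rw [map_sub, hh]
    simpa using hasKind_cond_sub_cond (C.isLow_hole_sub hx) false t
  have hgu : IsUnit (g (x - a)) := by rwa [map_sub, hx.g_eq, isUnit_sub_comm]
  rw [C.coords.associated_iff, C.levelX.associated_iff hfs,
    C.levelZ.toPrimeLevel.associated_iff hht]
  refine and_congr_right fun _ => and_congr_left fun _ => ?_
  exact ⟨fun hd => hd.symm.isUnit hgu, fun hd => (associated_one_iff_isUnit.2 hd).trans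
    (associated_one_iff_isUnit.2 hgu).symm⟩

theorem assocCount_of_isUnit (C : CornerTiling f g h p q r A B i₀ i₁ y₀ z₀)
    (hx : IsHole f g h r A i₀ y₀ z₀ x) {s t : Bool} (hf : f a = bif s then i₁ else i₀)
    (hg : IsUnit (g a - y₀)) (hh : h a = bif t then z₀ else h x) :
    assocCount (x - a) = unitWeight p q r s t := by
  obtain ⟨hfs, hgu, hht⟩ := (C.associated_iff_of_isUnit hx hf hg hh _).1 (Associated.refl _)
  rw [C.coords.assocCount_eq, C.levelX.assocCount_kind hfs, C.levelY.assocCount_eq hgu,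
    C.levelZ.assocCount_kind hht, unitWeight]

theorem countWhere_of_isLow (C : CornerTiling f g h p q r A B i₀ i₁ y₀ z₀)
    (hx : IsHole f g h r A i₀ y₀ z₀ x) (hf : f a = i₀) (hg : IsLow q (g a - y₀)) (hh : h a = z₀) :
    (countWhere B (fun b' => Associated (b' - b) (x - a)) : ℚ) / assocCount (x - a) =
      lowDiffs f g h q r B b / ((q - 1 : ℕ) * (r - 1 : ℕ)) := by
  have hf₀ : HasKind p false (f (x - a)) := by rw [map_sub, hx.f_eq, hf]; exact sub_self _
  have hglow : HasKind q true (g (x - a)) := by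
    rw [map_sub, hx.g_eq]
    exact isLow_sub_comm.1 hg
  have hhlow : HasKind r true (h (x - a)) := by
    rw [map_sub, hh]
    exact isLow_sub_comm.1 (C.isLow_hole_sub hx)
  rw [C.coords.assocCount_eq, C.levelX.assocCount_kind hf₀, C.levelY.assocCount_kind hglow,
    C.levelZ.assocCount_kind hhlow]
  simp only [cond_false, cond_true, one_mul, Nat.cast_mul, C.coords.associated_iff,
    C.levelX.associated_iff hf₀, C.levelY.toPrimeLevel.associated_iff hglow,
    C.levelZ.toPrimeLevel.associated_iff hhlow]
  rfl

open Classical in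
theorem countWhere_div_assocCount (C : CornerTiling f g h p q r A B i₀ i₁ y₀ z₀)
    (hx : IsHole f g h r A i₀ y₀ z₀ x) (ha : a ∈ A) (hb : b ∈ B) :
    (countWhere B (fun b' => Associated (b' - b) (x - a)) : ℚ) / assocCount (x - a) =
      (∑ st : Bool × Bool, if f a = (bif st.1 then i₁ else i₀) ∧ IsUnit (g a - y₀) ∧
          h a = (bif st.2 then z₀ else h x) then
        (unitDiffs f g h p r B b st.1 st.2 : ℚ) / unitWeight p q r st.1 st.2 else 0) +
      if f a = i₀ ∧ IsLow q (g a - y₀) ∧ h a = z₀ then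
        (lowDiffs f g h q r B b : ℚ) / ((q - 1 : ℕ) * (r - 1 : ℕ)) else 0 := by
  by_cases hu : IsUnit (g a - y₀)
  · have hnlow : ¬ IsLow q (g a - y₀) := fun hlow => C.levelY.not_isUnit_iff.2 hlow.2 hu
    simp only [hu, hnlow, true_and, false_and, and_false, if_false, add_zero]
    by_cases hst : ∃ st : Bool × Bool, f a = (bif st.1 then i₁ else i₀) ∧
        h a = (bif st.2 then z₀ else h x)
    · obtain ⟨⟨s, t⟩, hf, hh⟩ := hst
      have unique (st : Bool × Bool) : (f a = (bif st.1 then i₁ else i₀) ∧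
          h a = (bif st.2 then z₀ else h x)) ↔ st = (s, t) := by
        have := C.i_ne
        have := C.isHole_ne hx
        obtain ⟨s', t'⟩ := st
        rw [hf, hh]
        cases s <;> cases t <;> cases s' <;> cases t' <;> simp_all [eq_comm]
      simp only [unique, Finset.sum_ite_eq', Finset.mem_univ, if_true,
        C.associated_iff_of_isUnit hx hf hu hh, C.assocCount_of_isUnit hx hf hu hh, unitDiffs]
    · rw [Finset.sum_eq_zero fun st _ => if_neg fun h => hst ⟨st, h⟩, countWhere_eq_zero.2,
        Nat.cast_zero, zero_div]
      intro b' hb' hab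
      obtain ⟨s, hs⟩ := C.exists_f_eq hx ha hb' hb hab.symm
      obtain ⟨t, ht⟩ := C.exists_h_eq hx ha hb' hb hab.symm
      exact hst ⟨(s, t), hs, ht⟩
  · simp only [hu, false_and, and_false, if_false, Finset.sum_const_zero, zero_add]
    split_ifs with hlow
    · exact C.countWhere_of_isLow hx hlow.1 hlow.2.1 hlow.2.2
    · rw [countWhere_eq_zero.2, Nat.cast_zero, zero_div]
      intro b' hb' hab
      exact hlow (C.eq_of_not_isUnit hx ha hb' hb hab.symm hu)

end Hole

theorem countWhere_fiber (C : CornerTiling f g h p q r A B i₀ i₁ y₀ z₀) :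
    countWhere A (fun a => f a = i₀ ∧ IsLow q (g a - y₀) ∧ h a = z₀) = q - 1 := by
  classical
  obtain ⟨T, hT, hmem⟩ := C.levelY.exists_finset_ball y₀
  have hcenter : y₀ ∈ T := by rw [hmem, sub_self, mul_zero]
  have hlow (y : Y) : y ∈ T.erase y₀ ↔ IsLow q (y - y₀) := by
    rw [Finset.mem_erase, hmem, IsLow, sub_ne_zero]
  have hcard : #(T.erase y₀) = q - 1 := by rw [Finset.card_erase_of_mem hcenter, hT]
  simp only [← hlow, ← hcard]
  refine C.coords.countWhere_line _ fun c hf hg hh => C.face₀.mem hf ?_ hh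
  exact (hmem _).1 (Finset.mem_of_mem_erase hg)

theorem balance [Finite R] (C : CornerTiling f g h p q r A B i₀ i₁ y₀ z₀) {x b : R}
    (hx : IsHole f g h r A i₀ y₀ z₀ x) (hb : b ∈ B) :
    ∑ st : Bool × Bool, (lineUnits f g h A y₀ (bif st.1 then i₁ else i₀)
        (bif st.2 then z₀ else h x) : ℚ) *
        (unitDiffs f g h p r B b st.1 st.2 / unitWeight p q r st.1 st.2) +
      (lowDiffs f g h q r B b : ℚ) / (r - 1 : ℕ) = 1 := by
  classical
  rw [← C.tiling.sum_countWhere_div_assocCount x b,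
    Finset.sum_congr rfl fun a ha => C.countWhere_div_assocCount hx ha hb,
    Finset.sum_add_distrib, Finset.sum_comm, sum_ite_eq_countWhere_mul, C.countWhere_fiber]
  simp only [sum_ite_eq_countWhere_mul, lineUnits]
  have : ((q - 1 : ℕ) : ℚ) ≠ 0 := Nat.cast_ne_zero.2 (Nat.sub_ne_zero_of_lt C.levelY.prime.one_lt)
  rw [← mul_div_assoc, mul_div_mul_left _ _ this]

/-- The point `a` and the point of the corner opposite to it differ by an element of kind
`(s', unit, t')`. -/
theorem unitDiffs_eq_zero (C : CornerTiling f g h p q r A B i₀ i₁ y₀ z₀) {x b : R}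
    (hx : IsHole f g h r A i₀ y₀ z₀ x) (hb : b ∈ B) {s t s' t' : Bool}
    (hN : lineUnits f g h A y₀ (bif s then i₁ else i₀) (bif t then z₀ else h x) ≠ 0)
    (hne : (s', t') ≠ (s, t)) : unitDiffs f g h p r B b s' t' = 0 := by
  refine countWhere_eq_zero.2 fun b' hb' hdiff => hN (countWhere_eq_zero.2 ?_)
  rintro a ha ⟨hf, hg, hh⟩
  obtain ⟨c, hfc, hgc, hhc⟩ := C.coords.exists_eq (bif xor s s' then i₁ else i₀) y₀
    (bif xor t t' then z₀ else h x)
  have hc : c ∈ A := by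
    refine C.mem_of_kind hx.h_low ?_ hfc hgc hhc
    revert hne
    cases s <;> cases t <;> cases s' <;> cases t' <;> decide
  have hfac : HasKind p s' (f a - f c) := by
    have := hasKind_cond_sub_cond C.isLow_sub s (xor s s')
    rwa [← Bool.xor_assoc, Bool.xor_self, Bool.false_xor, ← hf, ← hfc] at this
  have hhac : HasKind r t' (h a - h c) := by
    have := hasKind_cond_sub_cond (C.isLow_hole_sub hx) t (xor t t')
    rwa [← Bool.xor_assoc, Bool.xor_self, Bool.false_xor, ← hh, ← hhc] at this
  have hgac : Associated (g a - g c) (g (b' - b)) := by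
    rw [hgc]
    exact (associated_one_iff_isUnit.2 hg).trans (associated_one_iff_isUnit.2 hdiff.2.1).symm
  have hac := (C.eq_and_eq ha hc hb' hb ((C.levelX.associated_iff hdiff.1).2 hfac) hgac
    ((C.levelZ.toPrimeLevel.associated_iff hdiff.2.2).2 hhac)).1
  rw [hac, hgc, sub_self, C.levelY.isUnit_iff, mul_zero] at hg
  exact hg rfl

end CornerTiling

/-- All differences in `B` which are low or zero in the coordinates `f` and `h` and a unit in the
coordinate `g` have one kind `(s, t)`, so that a single product remains in the balance equation. -/
structure PureKind (f : R →+* X) (g : R →+* Y) (h : R →+* Z) (p q r : ℕ) (A B : Finset R)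
    (i₀ i₁ : X) (y₀ : Y) (z₀ : Z) (s t : Bool) : Prop where
  unitDiffs_eq_zero : ∀ b ∈ B, ∀ s' t', (s', t') ≠ (s, t) → unitDiffs f g h p r B b s' t' = 0
  balance : ∀ x, IsHole f g h r A i₀ y₀ z₀ x → ∀ b ∈ B, ∀ k, lowDiffs f g h q r B b + k = r - 1 →
    lineUnits f g h A y₀ (bif s then i₁ else i₀) (bif t then z₀ else h x) *
      unitDiffs f g h p r B b s t * (r - 1) = unitWeight p q r s t * k

namespace CornerTiling

theorem exists_pureKind [Finite R] (C : CornerTiling f g h p q r A B i₀ i₁ y₀ z₀) {b : R}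
    (hb : b ∈ B) (hlow : lowDiffs f g h q r B b ≠ r - 1) :
    ∃ s t, PureKind f g h p q r A B i₀ i₁ y₀ z₀ s t := by
  have hr : ((r - 1 : ℕ) : ℚ) ≠ 0 :=
    Nat.cast_ne_zero.2 (Nat.sub_ne_zero_of_lt C.levelZ.prime.one_lt)
  obtain ⟨x₀, hx₀⟩ := C.exists_isHole
  obtain ⟨⟨s, t⟩, hst⟩ : ∃ st : Bool × Bool, lineUnits f g h A y₀ (bif st.1 then i₁ else i₀)
      (bif st.2 then z₀ else h x₀) ≠ 0 := by
    by_contra! hzero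
    have balance := C.balance hx₀ hb
    simp only [hzero, Nat.cast_zero, zero_mul, Finset.sum_const_zero, zero_add] at balance
    exact hlow (by exact_mod_cast (div_eq_one_iff_eq hr).1 balance)
  have pure : ∀ b ∈ B, ∀ s' t', (s', t') ≠ (s, t) → unitDiffs f g h p r B b s' t' = 0 :=
    fun b hb s' t' hne => C.unitDiffs_eq_zero hx₀ hb hst hne
  refine ⟨s, t, pure, fun x hx b' hb' k hk => ?_⟩
  have balance := C.balance hx hb'
  rw [Finset.sum_eq_single (s, t) (fun st _ hne => by
    rw [pure b' hb' st.1 st.2 hne, Nat.cast_zero, zero_div, mul_zero]) (by simp)] at balance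
  have hw : (unitWeight p q r s t : ℚ) ≠ 0 := by
    have hp₁ := Nat.sub_ne_zero_of_lt C.levelX.prime.one_lt
    have hq₁ := Nat.sub_ne_zero_of_lt C.levelY.prime.one_lt
    have hr₁ := Nat.sub_ne_zero_of_lt C.levelZ.prime.one_lt
    have hq₀ := C.levelY.prime.ne_zero
    cases s <;> cases t <;> simp [unitWeight, hp₁, hq₁, hr₁, hq₀]
  have hk' : (lowDiffs f g h q r B b' : ℚ) + k = (r - 1 : ℕ) := by exact_mod_cast hk
  field_simp at balance
  exact_mod_cast (by linear_combination balance - unitWeight p q r s t * hk' :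
    (lineUnits f g h A y₀ (bif s then i₁ else i₀) (bif t then z₀ else h x) : ℚ) *
      unitDiffs f g h p r B b' s t * (r - 1 : ℕ) = unitWeight p q r s t * k)

theorem natCast_mul_eq_zero_of_unitDiffs (C : CornerTiling f g h p q r A B i₀ i₁ y₀ z₀) {b b' : R}
    (hb : b ∈ B) {s t : Bool} (hzero : unitDiffs f g h p r B b' s t = 0)
    (hf : HasKind p s (f (b - b'))) (hh : HasKind r t (h (b - b'))) :
    (q : Y) * g (b - b') = 0 :=
  C.levelY.not_isUnit_iff.1 fun hg => countWhere_eq_zero.1 hzero b hb ⟨hf, hg, hh⟩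

theorem lowDiffs_swap (b : R) : lowDiffs f h g r q B b = lowDiffs f g h q r B b :=
  countWhere_congr fun _ _ => and_congr_right fun _ => and_comm

theorem eq_of_low (C : CornerTiling f g h p q r A B i₀ i₁ y₀ z₀) {b b' : R} (hb : b ∈ B)
    (hb' : b' ∈ B) (hzero : lowDiffs f g h q r B b' = 0) (hf : (p : X) * f (b - b') = 0)
    (hg : (q : Y) * g (b - b') = 0) (hh : (r : Z) * h (b - b') = 0) : b = b' :=
  (C.eq_or_of_low hb hb' hf hg hh).resolve_right (countWhere_eq_zero.1 hzero b hb)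

theorem countWhere_low (C : CornerTiling f g h p q r A B i₀ i₁ y₀ z₀) {b : R} (hb : b ∈ B) :
    countWhere B (fun b' => (p : X) * f (b' - b) = 0 ∧ (q : Y) * g (b' - b) = 0 ∧
      (r : Z) * h (b' - b) = 0) = lowDiffs f g h q r B b + 1 := by
  rw [lowDiffs, ← countWhere_eq_self hb, ← countWhere_or]
  · refine countWhere_congr fun b' hb' => ⟨fun ⟨hf, hg, hh⟩ =>
      (C.eq_or_of_low hb' hb hf hg hh).symm, ?_⟩
    rintro (⟨hf, hg, hh⟩ | rfl)
    · exact ⟨by rw [hf, mul_zero], hg.2, hh.2⟩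
    · simp only [sub_self, map_zero, mul_zero, and_self]
  · rintro b' - ⟨-, hg, -⟩ rfl
    exact hg.1 (by rw [sub_self, map_zero])

theorem lowDiffs_lt (C : CornerTiling f g h p q r A B i₀ i₁ y₀ z₀) {b : R} (hb : b ∈ B) :
    lowDiffs f g h q r B b < r := by
  rw [Nat.lt_iff_add_one_le, ← C.countWhere_low hb]
  refine C.levelZ.toPrimeLevel.countWhere_le h b (fun s hs => hs.2.2) ?_
  rintro s hsB ⟨hfs, hgs, -⟩ t htB ⟨hft, hgt, -⟩
  exact C.eq_of_low_of_h_eq hsB htB (natCast_mul_map_sub hfs hft) (natCast_mul_map_sub hgs hgt)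

theorem lowDiffs_lt' (C : CornerTiling f g h p q r A B i₀ i₁ y₀ z₀) {b : R} (hb : b ∈ B) :
    lowDiffs f g h q r B b < q := by
  rw [← lowDiffs_swap (f := f)]
  exact C.swap.lowDiffs_lt hb

theorem not_isUnit_self (C : CornerTiling f g h p q r A B i₀ i₁ y₀ z₀) (b : R) {P Q : Prop} :
    ¬ (P ∧ IsUnit (g (b - b)) ∧ Q) := by
  rw [sub_self, map_zero, C.levelY.isUnit_iff, mul_zero]
  exact fun hb => hb.2.1 rfl

theorem unitDiffs_false_lt (C : CornerTiling f g h p q r A B i₀ i₁ y₀ z₀) {b : R} (hb : b ∈ B)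
    (s : Bool) : unitDiffs f g h p r B b s false < q := by
  calc unitDiffs f g h p r B b s false
      < countWhere B fun b' => (p : X) * f (b' - b) = 0 ∧ h (b' - b) = 0 :=
        countWhere_lt_countWhere hb (fun b' _ hb' => ⟨hb'.1.natCast_mul_eq_zero, hb'.2.2⟩)
          (C.not_isUnit_self b) (by simp)
    _ ≤ q := by
      refine C.levelY.countWhere_le g ?_
      rintro s hsB ⟨hfs, hhs⟩ t htB ⟨hft, hht⟩ hg
      exact C.eq_of_low_of_h_eq hsB htB (natCast_mul_map_sub hfs hft) hg (map_sub_eq_zero hhs hht)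

theorem unitDiffs_true_false_lt (C : CornerTiling f g h p q r A B i₀ i₁ y₀ z₀)
    (hff : ∀ b ∈ B, unitDiffs f g h p r B b false false = 0) {b : R} (hb : b ∈ B) :
    unitDiffs f g h p r B b true false < p := by
  calc unitDiffs f g h p r B b true false
      < countWhere B fun b' => (p : X) * f (b' - b) = 0 ∧ h (b' - b) = 0 :=
        countWhere_lt_countWhere hb (fun b' _ hb' => ⟨hb'.1.natCast_mul_eq_zero, hb'.2.2⟩)
          (C.not_isUnit_self b) (by simp)
    _ ≤ p := by
      refine C.levelX.countWhere_le f b (fun s hs => hs.1) ?_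
      rintro s hsB ⟨-, hhs⟩ t htB ⟨-, hht⟩ hf
      have hh : h (s - t) = 0 := map_sub_eq_zero hhs hht
      exact C.eq_of_low_of_h_eq hsB htB (by rw [hf, mul_zero])
        (C.natCast_mul_eq_zero_of_unitDiffs hsB (hff t htB) hf hh) hh

theorem countWhere_ball_le (C : CornerTiling f g h p q r A B i₀ i₁ y₀ z₀)
    (hzero : ∀ b ∈ B, ∀ s, unitDiffs f g h p r B b s false = 0) (b : R) :
    countWhere B (fun b' => (p : X) * f (b' - b) = 0 ∧ (r : Z) * h (b' - b) = 0) ≤ r := by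
  refine C.levelZ.toPrimeLevel.countWhere_le h b (fun s hs => hs.2) ?_
  rintro s hsB ⟨hfs, -⟩ t htB ⟨hft, -⟩ hh
  have hf : (p : X) * f (s - t) = 0 := natCast_mul_map_sub hfs hft
  obtain ⟨e, he⟩ := exists_hasKind hf
  exact C.eq_of_low_of_h_eq hsB htB hf
    (C.natCast_mul_eq_zero_of_unitDiffs hsB (hzero t htB e) he hh) hh

theorem lowDiffs_add_unitDiffs_lt (C : CornerTiling f g h p q r A B i₀ i₁ y₀ z₀) {b : R}
    (hb : b ∈ B) (s t : Bool) :
    lowDiffs f g h q r B b + unitDiffs f g h p r B b s t <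
      countWhere B fun b' => (p : X) * f (b' - b) = 0 ∧ (r : Z) * h (b' - b) = 0 := by
  rw [Nat.lt_iff_add_one_le, add_right_comm, ← C.countWhere_low hb, unitDiffs, ← countWhere_or
    fun b' _ hlow hu => C.levelY.not_isUnit_iff.2 hlow.2.1 hu.2.1]
  refine countWhere_le_countWhere fun b' _ => ?_
  rintro (⟨hf, -, hh⟩ | ⟨hf, -, hh⟩)
  · exact ⟨hf, hh⟩
  · exact ⟨hf.natCast_mul_eq_zero, hh.natCast_mul_eq_zero⟩

theorem unitDiffs_false_true_lt (C : CornerTiling f g h p q r A B i₀ i₁ y₀ z₀)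
    (hlow : ∀ b ∈ B, lowDiffs f g h q r B b = 0) {b : R} (hb : b ∈ B) :
    unitDiffs f g h p r B b false true < q := by
  calc unitDiffs f g h p r B b false true
      < countWhere B fun b' => f (b' - b) = 0 ∧ (r : Z) * h (b' - b) = 0 :=
        countWhere_lt_countWhere hb (fun b' _ hb' => ⟨hb'.1, hb'.2.2.natCast_mul_eq_zero⟩)
          (C.not_isUnit_self b) (by simp)
    _ ≤ q := by
      refine C.levelY.countWhere_le g ?_
      rintro s hsB ⟨hfs, hhs⟩ t htB ⟨hft, hht⟩ hg
      exact C.eq_of_low hsB htB (hlow t htB) (by rw [map_sub_eq_zero hfs hft, mul_zero]) hg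
        (natCast_mul_map_sub hhs hht)

theorem unitDiffs_true_true_lt (C : CornerTiling f g h p q r A B i₀ i₁ y₀ z₀)
    (hlow : ∀ b ∈ B, lowDiffs f g h q r B b = 0)
    (hzero : ∀ b ∈ B, ∀ t, unitDiffs f g h p r B b false t = 0) {b : R} (hb : b ∈ B) :
    unitDiffs f g h p r B b true true < p := by
  calc unitDiffs f g h p r B b true true
      < countWhere B fun b' => (p : X) * f (b' - b) = 0 ∧ (r : Z) * h (b' - b) = 0 :=
        countWhere_lt_countWhere hb (fun b' _ hb' => ⟨hb'.1.natCast_mul_eq_zero,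
          hb'.2.2.natCast_mul_eq_zero⟩) (C.not_isUnit_self b) (by simp)
    _ ≤ p := by
      refine C.levelX.countWhere_le f b (fun s hs => hs.1) ?_
      rintro s hsB ⟨-, hhs⟩ t htB ⟨-, hht⟩ hf
      have hh : (r : Z) * h (s - t) = 0 := natCast_mul_map_sub hhs hht
      obtain ⟨e, he⟩ := exists_hasKind hh
      exact C.eq_of_low hsB htB (hlow t htB) (by rw [hf, mul_zero])
        (C.natCast_mul_eq_zero_of_unitDiffs hsB (hzero t htB e) hf he) hh

theorem lineUnits_le (C : CornerTiling f g h p q r A B i₀ i₁ y₀ z₀) (i : X) (z : Z) :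
    lineUnits f g h A y₀ i z ≤ q * (q - 1) := by
  classical
  have := C.levelY.finite
  rw [← C.levelY.ncard_isUnit, lineUnits, countWhere_eq_card_filter, ← Set.ncard_coe_finset]
  refine Set.ncard_le_ncard_of_injOn (fun a => g a - y₀) ?_ ?_
  · exact fun a ha => (Finset.mem_filter.1 ha).2.2.1
  · intro a ha c hc hac
    obtain ⟨-, hfa, -, hha⟩ := Finset.mem_filter.1 ha
    obtain ⟨-, hfc, -, hhc⟩ := Finset.mem_filter.1 hc
    exact C.coords.ext (hfa.trans hfc.symm) (sub_left_injective hac) (hha.trans hhc.symm)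

theorem lineUnits_lt (C : CornerTiling f g h p q r A B i₀ i₁ y₀ z₀) {z : Z}
    (hz : (r : Z) * (z - z₀) = 0) :
    lineUnits f g h A y₀ i₁ z < countWhere A fun a => f a = i₁ ∧ h a = z := by
  obtain ⟨c, hf, hg, hh⟩ := C.coords.exists_eq i₁ y₀ z
  refine countWhere_lt_countWhere (C.face₁.mem hf (by rwa [hh]) hg)
    (fun a _ ha => ⟨ha.1, ha.2.2⟩) ?_ ⟨hf, hh⟩
  rw [hg, sub_self, C.levelY.isUnit_iff, mul_zero]
  exact fun hc => hc.2.1 rfl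

theorem add_lineUnits_le (C : CornerTiling f g h p q r A B i₀ i₁ y₀ z₀) {c : R} (hc : c ∈ A)
    (hf : f c = i₀) (hg : g c = y₀) (hh : (r : Z) * (h c - z₀) = 0) :
    q + lineUnits f g h A y₀ i₀ (h c) ≤ countWhere A fun a => f a = i₀ ∧ h a = h c := by
  obtain ⟨T, hT, hmem⟩ := C.levelY.exists_finset_ball y₀
  have fiber := C.coords.countWhere_line (A := A) (x := i₀) (z := h c) T fun c' hf' hg' hh' =>
    C.face₀.fibered c hc hf hg hh c' hf' ((hmem _).1 hg') hh'
  rw [lineUnits, ← hT, ← fiber, ← countWhere_or]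
  · exact countWhere_le_countWhere fun a _ ha => ha.elim (fun ha => ⟨ha.1, ha.2.2⟩)
      fun ha => ⟨ha.1, ha.2.2⟩
  · exact fun a _ ha hu => C.levelY.not_isUnit_iff.2 ((hmem _).1 ha.2.1) hu.2.1

theorem add_lineUnits_center_le (C : CornerTiling f g h p q r A B i₀ i₁ y₀ z₀) :
    q + lineUnits f g h A y₀ i₀ z₀ ≤ q * r := by
  obtain ⟨c, hc, hf, hg, rfl⟩ := C.face₀.center
  exact (C.add_lineUnits_le hc hf hg (by rw [sub_self, mul_zero])).trans
    ((countWhere_le_countWhere fun a _ ha => ha.1).trans (C.slice_le i₀))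

theorem sum_line_le (C : CornerTiling f g h p q r A B i₀ i₁ y₀ z₀) (i : X) (T : Finset Z) :
    ∑ z ∈ T, countWhere A (fun a => f a = i ∧ h a = z) ≤ q * r := by
  rw [sum_countWhere_and_eq]
  exact (countWhere_le_countWhere fun a _ ha => ha.1).trans (C.slice_le i)

theorem add_sum_lineUnits_le (C : CornerTiling f g h p q r A B i₀ i₁ y₀ z₀) {T : Finset Z}
    (hT : #T = r) (hmem : ∀ z ∈ T, (r : Z) * (z - z₀) = 0) :
    r + ∑ z ∈ T, lineUnits f g h A y₀ i₁ z ≤ q * r := by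
  calc r + ∑ z ∈ T, lineUnits f g h A y₀ i₁ z
      = ∑ z ∈ T, (lineUnits f g h A y₀ i₁ z + 1) := by
        rw [Finset.sum_add_distrib, ← Finset.card_eq_sum_ones, hT, add_comm]
    _ ≤ ∑ z ∈ T, countWhere A (fun a => f a = i₁ ∧ h a = z) :=
      Finset.sum_le_sum fun z hz => C.lineUnits_lt (hmem z hz)
    _ ≤ q * r := C.sum_line_le i₁ T

theorem add_lineUnits_le_of_low (C : CornerTiling f g h p q r A B i₀ i₁ y₀ z₀) {z : Z}
    (hz : (r : Z) * (z - z₀) = 0) : r + lineUnits f g h A y₀ i₁ z ≤ q * r := by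
  obtain ⟨T, hT, hmem⟩ := C.levelZ.exists_finset_ball z₀
  refine le_trans (Nat.add_le_add_left ?_ r)
    (C.add_sum_lineUnits_le hT fun z hz => (hmem z).1 hz)
  exact Finset.single_le_sum (f := lineUnits f g h A y₀ i₁) (fun _ _ => Nat.zero_le _)
    ((hmem z).2 hz)

/-- If every line of the face `f = i` near the centre has `q` elements, these exhaust the slice. -/
theorem slice_eq (C : CornerTiling f g h p q r A B i₀ i₁ y₀ z₀) {i : X}
    (hline : ∀ z, (r : Z) * (z - z₀) = 0 → q ≤ countWhere A fun a => f a = i ∧ h a = z) :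
    countWhere A (f · = i) = q * r ∧ (∀ a ∈ A, f a = i → (r : Z) * (h a - z₀) = 0) ∧
      ∀ z, (r : Z) * (z - z₀) = 0 → countWhere A (fun a => f a = i ∧ h a = z) = q := by
  obtain ⟨T, hT, hmem⟩ := C.levelZ.exists_finset_ball z₀
  have hconst : ∑ _z ∈ T, q = q * r := by rw [Finset.sum_const, hT, smul_eq_mul, mul_comm]
  have hle : ∀ z ∈ T, q ≤ countWhere A fun a => f a = i ∧ h a = z :=
    fun z hz => hline z ((hmem z).1 hz)
  have hsum : ∑ z ∈ T, countWhere A (fun a => f a = i ∧ h a = z) = q * r :=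
    (C.sum_line_le i T).antisymm (hconst.symm.trans_le (Finset.sum_le_sum hle))
  have hball : countWhere A (fun a => f a = i ∧ h a ∈ T) = q * r := by
    rw [← sum_countWhere_and_eq, hsum]
  refine ⟨(C.slice_le i).antisymm (hball.symm.trans_le (countWhere_le_countWhere fun a _ ha =>
    ha.1)), fun a ha hfa => ?_, fun z hz => ?_⟩
  · by_contra hha
    have := countWhere_lt_countWhere (P := fun a => f a = i ∧ h a ∈ T) (Q := (f · = i)) ha
      (fun c _ hc => hc.1) (fun hc => hha ((hmem _).1 hc.2)) hfa
    exact (hball.symm.trans_lt this).not_ge (C.slice_le i)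
  · exact (((Finset.sum_eq_sum_iff_of_le hle).1 (hconst.trans hsum.symm)) z ((hmem z).2 hz)).symm

variable {s : Bool} {b : R} {k : ℕ}

theorem balance_true (C : CornerTiling f g h p q r A B i₀ i₁ y₀ z₀)
    (P : PureKind f g h p q r A B i₀ i₁ y₀ z₀ s true) (hb : b ∈ B)
    (hk : lowDiffs f g h q r B b + k = r - 1) :
    lineUnits f g h A y₀ (bif s then i₁ else i₀) z₀ * unitDiffs f g h p r B b s true =
      q * (q - 1) * ((bif s then p - 1 else 1) * k) := by
  obtain ⟨x, hx⟩ := C.exists_isHole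
  refine Nat.eq_of_mul_eq_mul_right (Nat.sub_pos_of_lt C.levelZ.prime.one_lt)
    ((P.balance x hx b hb k hk).trans ?_)
  simp only [unitWeight, cond_true]
  ring

theorem unitDiffs_true_le (C : CornerTiling f g h p q r A B i₀ i₁ y₀ z₀)
    (P : PureKind f g h p q r A B i₀ i₁ y₀ z₀ s true) (hb : b ∈ B)
    (hk : lowDiffs f g h q r B b + k = r - 1) : unitDiffs f g h p r B b s true ≤ k := by
  have hball := C.countWhere_ball_le (fun b hb s' => P.unitDiffs_eq_zero b hb s' false (by simp)) b
  have hlt := C.lowDiffs_add_unitDiffs_lt hb s true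
  lia

theorem le_unitDiffs_true (C : CornerTiling f g h p q r A B i₀ i₁ y₀ z₀)
    (P : PureKind f g h p q r A B i₀ i₁ y₀ z₀ s true) (hb : b ∈ B)
    (hk : lowDiffs f g h q r B b + k = r - 1) :
    (bif s then p - 1 else 1) * k ≤ unitDiffs f g h p r B b s true := by
  have hW : 0 < q * (q - 1) :=
    Nat.mul_pos C.levelY.prime.pos (Nat.sub_pos_of_lt C.levelY.prime.one_lt)
  refine Nat.le_of_mul_le_mul_left ?_ hW
  rw [← C.balance_true P hb hk]
  exact Nat.mul_le_mul_right _ (C.lineUnits_le _ z₀)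

theorem one_le_weight (C : CornerTiling f g h p q r A B i₀ i₁ y₀ z₀) (s : Bool) :
    1 ≤ bif s then p - 1 else 1 := by
  cases s
  · exact le_rfl
  · exact Nat.sub_pos_of_lt C.levelX.prime.one_lt

theorem q_lt_r_of_le (C : CornerTiling f g h p q r A B i₀ i₁ y₀ z₀) {m : ℕ} (hm : 0 < m)
    (hle : m + q * (q - 1) ≤ q * r) : q < r := by
  have : q - 1 < r := Nat.lt_of_mul_lt_mul_left (by lia : q * (q - 1) < q * r)
  have := C.q_ne_r
  lia

theorem q_lt_r_of_pureKind_true (C : CornerTiling f g h p q r A B i₀ i₁ y₀ z₀)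
    (P : PureKind f g h p q r A B i₀ i₁ y₀ z₀ s true) (hb : b ∈ B)
    (hlow : lowDiffs f g h q r B b ≠ r - 1) : q < r := by
  have hlt := C.lowDiffs_lt hb
  obtain ⟨k, hk⟩ := Nat.exists_eq_add_of_le (Nat.le_sub_one_of_lt hlt)
  have hk₀ : 0 < k := by lia
  have hN : q * (q - 1) ≤ lineUnits f g h A y₀ (bif s then i₁ else i₀) z₀ := by
    refine Nat.le_of_mul_le_mul_right ?_ hk₀
    calc q * (q - 1) * k ≤ q * (q - 1) * ((bif s then p - 1 else 1) * k) :=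
          Nat.mul_le_mul_left _ (Nat.le_mul_of_pos_left k (C.one_le_weight s))
      _ = _ := (C.balance_true P hb hk.symm).symm
      _ ≤ _ := Nat.mul_le_mul_left _ (C.unitDiffs_true_le P hb hk.symm)
  cases s
  · exact C.q_lt_r_of_le C.levelY.prime.pos
      ((Nat.add_le_add_left hN q).trans C.add_lineUnits_center_le)
  · exact C.q_lt_r_of_le C.levelZ.prime.pos
      ((Nat.add_le_add_left hN r).trans (C.add_lineUnits_le_of_low (by rw [sub_self, mul_zero])))

theorem slice_of_pureKind_false_false (C : CornerTiling f g h p q r A B i₀ i₁ y₀ z₀)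
    (P : PureKind f g h p q r A B i₀ i₁ y₀ z₀ false false) (hb : b ∈ B)
    (hlow : lowDiffs f g h q r B b = 0) :
    countWhere A (f · = i₀) = q * r ∧ (∀ a ∈ A, f a = i₀ → (r : Z) * (h a - z₀) = 0) ∧
      unitDiffs f g h p r B b false false = q - 1 := by
  have hr : 0 < r - 1 := Nat.sub_pos_of_lt C.levelZ.prime.one_lt
  have hq : 0 < q - 1 := Nat.sub_pos_of_lt C.levelY.prime.one_lt
  have balance : ∀ x, IsHole f g h r A i₀ y₀ z₀ x →
      lineUnits f g h A y₀ i₀ (h x) * unitDiffs f g h p r B b false false = q * (q - 1) := by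
    intro x hx
    have := P.balance x hx b hb (r - 1) (by rw [hlow, zero_add])
    simpa only [unitWeight, cond_false, one_mul, mul_one] using Nat.eq_of_mul_eq_mul_right hr this
  have hline : ∀ x, IsHole f g h r A i₀ y₀ z₀ x → q ≤ lineUnits f g h A y₀ i₀ (h x) := by
    refine fun x hx => Nat.le_of_mul_le_mul_right ?_ hq
    exact (balance x hx).symm.trans_le
      (Nat.mul_le_mul_left _ (Nat.le_sub_one_of_lt (C.unitDiffs_false_lt hb false)))
  obtain ⟨hcard, hball, hlines⟩ := C.slice_eq (i := i₀) fun z hz => by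
    obtain ⟨x, hf, hg, rfl⟩ := C.coords.exists_eq i₀ y₀ z
    by_cases hx : x ∈ A
    · exact (Nat.le_add_right _ _).trans (C.add_lineUnits_le hx hf hg hz)
    · exact (hline x ⟨hx, hf, hg, hz⟩).trans
        (countWhere_le_countWhere fun a _ ha => ⟨ha.1, ha.2.2⟩)
  refine ⟨hcard, hball, ?_⟩
  obtain ⟨x, hx⟩ := C.exists_isHole
  have hN : lineUnits f g h A y₀ i₀ (h x) = q := (hline x hx).antisymm' <|
    (countWhere_le_countWhere fun a _ ha => ⟨ha.1, ha.2.2⟩).trans_eq (hlines _ hx.h_low)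
  exact Nat.eq_of_mul_eq_mul_left C.levelY.prime.pos (hN ▸ balance x hx)

theorem lineUnits_ge_of_pureKind_true_false (C : CornerTiling f g h p q r A B i₀ i₁ y₀ z₀)
    (P : PureKind f g h p q r A B i₀ i₁ y₀ z₀ true false) {x : R}
    (hx : IsHole f g h r A i₀ y₀ z₀ x) (hb : b ∈ B) (hk : lowDiffs f g h q r B b + k = r - 1) :
    q * (q - 1) * k ≤ (r - 1) * lineUnits f g h A y₀ i₁ (h x) ∧
      (p - 1) * q * k ≤ (r - 1) * lineUnits f g h A y₀ i₁ (h x) := by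
  have balance := P.balance x hx b hb k hk
  simp only [unitWeight, cond_true, cond_false, mul_one] at balance
  have hp := Nat.le_sub_one_of_lt (C.unitDiffs_true_false_lt
    (fun b hb => P.unitDiffs_eq_zero b hb false false (by simp)) hb)
  have hq := Nat.le_sub_one_of_lt (C.unitDiffs_false_lt hb true)
  constructor
  · refine Nat.le_of_mul_le_mul_left ?_ (Nat.sub_pos_of_lt C.levelX.prime.one_lt)
    calc (p - 1) * (q * (q - 1) * k)
        = lineUnits f g h A y₀ i₁ (h x) * unitDiffs f g h p r B b true false * (r - 1) := by
          rw [balance]; ring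
      _ ≤ lineUnits f g h A y₀ i₁ (h x) * (p - 1) * (r - 1) := by gcongr
      _ = _ := by ring
  · refine Nat.le_of_mul_le_mul_left ?_ (Nat.sub_pos_of_lt C.levelY.prime.one_lt)
    calc (q - 1) * ((p - 1) * q * k)
        = lineUnits f g h A y₀ i₁ (h x) * unitDiffs f g h p r B b true false * (r - 1) := by
          rw [balance]; ring
      _ ≤ lineUnits f g h A y₀ i₁ (h x) * (q - 1) * (r - 1) := by gcongr
      _ = _ := by ring

theorem pureKind_or_of_lowDiffs_eq_zero [Finite R] (C : CornerTiling f g h p q r A B i₀ i₁ y₀ z₀)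
    (hB : B.Nonempty) (hlow : ∀ b ∈ B, lowDiffs f g h q r B b = 0) :
    PureKind f g h p q r A B i₀ i₁ y₀ z₀ false false ∨
      q < r ∧ ∃ a ∈ A, f a = i₁ ∧ IsUnit (g a - y₀) := by
  obtain ⟨b, hb⟩ := hB
  have hr := C.levelZ.prime.two_le
  have hne : lowDiffs f g h q r B b ≠ r - 1 := by have := hlow b hb; lia
  have hk : lowDiffs f g h q r B b + (r - 1) = r - 1 := by rw [hlow b hb, zero_add]
  obtain ⟨s, t, P⟩ := C.exists_pureKind hb hne
  cases t
  · cases s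
    · exact Or.inl P
    refine Or.inr ?_
    obtain ⟨x, hx⟩ := C.exists_isHole
    have hN : q * (q - 1) ≤ lineUnits f g h A y₀ i₁ (h x) := by
      have := (C.lineUnits_ge_of_pureKind_true_false P hx hb hk).1
      rw [mul_comm] at this
      exact Nat.le_of_mul_le_mul_left this (by lia)
    refine ⟨C.q_lt_r_of_le C.levelZ.prime.pos
      ((Nat.add_le_add_left hN r).trans (C.add_lineUnits_le_of_low hx.h_low)), ?_⟩
    by_contra! hno
    have hq := C.levelY.prime.two_le
    rw [lineUnits, countWhere_eq_zero.2 fun a ha haP => hno a ha haP.1 haP.2.1] at hN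
    simp only [nonpos_iff_eq_zero, mul_eq_zero] at hN
    lia
  · exfalso
    have hqr := C.q_lt_r_of_pureKind_true P hb hne
    have hle := C.unitDiffs_true_le P hb hk
    have hge := C.le_unitDiffs_true P hb hk
    cases s
    · have := C.unitDiffs_false_true_lt hlow hb
      simp only [cond_false, one_mul] at hge
      lia
    · have hlt := C.unitDiffs_true_true_lt hlow
        (fun b hb t => P.unitDiffs_eq_zero b hb false t (by simp)) hb
      have hp : p = 2 := by
        have : p - 1 ≤ 1 := Nat.le_of_mul_le_mul_right
          ((hge.trans hle).trans_eq (one_mul _).symm) (by lia)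
        have := C.levelX.prime.two_le
        lia
      have := C.p_ne_r
      simp only [cond_true, hp] at hge
      lia

theorem not_isUnit_of_pureKind_false_false (C : CornerTiling f g h p q r A B i₀ i₁ y₀ z₀)
    (P : PureKind f g h p q r A B i₀ i₁ y₀ z₀ false false) (hb : b ∈ B)
    (hlow : lowDiffs f g h q r B b = 0) {a : R} (ha : a ∈ A) (hfa : f a = i₀) :
    ¬ IsUnit (h a - z₀) :=
  C.levelZ.not_isUnit_iff.2 ((C.slice_of_pureKind_false_false P hb hlow).2.1 a ha hfa)

theorem slice_of_lowDiffs_eq_zero [Finite R] (C : CornerTiling f g h p q r A B i₀ i₁ y₀ z₀)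
    (hB : B.Nonempty) (hlow : ∀ b ∈ B, lowDiffs f g h q r B b = 0) :
    countWhere A (f · = i₀) = q * r ∧
      ∀ b ∈ B, unitDiffs f g h p r B b false false = q - 1 := by
  have hlow' : ∀ b ∈ B, lowDiffs f h g r q B b = 0 := fun b hb =>
    (lowDiffs_swap b).trans (hlow b hb)
  obtain ⟨b, hb⟩ := hB
  rcases C.pureKind_or_of_lowDiffs_eq_zero ⟨b, hb⟩ hlow with P | ⟨hqr, a, ha, hfa, hu⟩ <;>
    rcases C.swap.pureKind_or_of_lowDiffs_eq_zero ⟨b, hb⟩ hlow' with P' | ⟨hrq, a', ha', hfa', hu'⟩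
  · exact ⟨(C.slice_of_pureKind_false_false P hb (hlow b hb)).1, fun b hb =>
      (C.slice_of_pureKind_false_false P hb (hlow b hb)).2.2⟩
  · exact absurd hu' (C.not_isUnit_of_pureKind_false_false P hb (hlow b hb) ha' hfa')
  · exact absurd hu (C.swap.not_isUnit_of_pureKind_false_false P' hb (hlow' b hb) ha hfa)
  · exact absurd hqr hrq.asymm

theorem lowDiffs_eq_of_pureKind_false_false (C : CornerTiling f g h p q r A B i₀ i₁ y₀ z₀)
    (P : PureKind f g h p q r A B i₀ i₁ y₀ z₀ false false) (hb : b ∈ B)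
    (hlow : lowDiffs f g h q r B b ≠ 0) : lowDiffs f g h q r B b = r - 1 := by
  obtain ⟨c, hc, hfc, hgc, hhc⟩ : ∃ c ∈ B, f (c - b) = 0 ∧ IsLow q (g (c - b)) ∧
      IsLow r (h (c - b)) := by simpa only [lowDiffs, Ne, countWhere_eq_zero, not_forall, not_not,
        exists_prop] using hlow
  have hunit : unitDiffs f g h p r B b false false = 0 := by
    refine countWhere_eq_zero.2 fun d hd ⟨hfd, hgd, hhd⟩ => ?_
    refine countWhere_eq_zero.1 (P.unitDiffs_eq_zero c hc false true (by simp)) d hd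
      ⟨map_sub_eq_zero hfd hfc, ?_, ?_⟩
    · by_contra hg
      rw [C.levelY.not_isUnit_iff] at hg
      refine C.levelY.not_isUnit_iff.2 ?_ hgd
      rw [← sub_add_sub_cancel d c b, map_add, mul_add, hg, hgc.2, add_zero]
    · have : h (d - c) = -h (c - b) := by
        rw [← sub_sub_sub_cancel_right d c b, map_sub, show h (d - b) = 0 from hhd, zero_sub]
      exact this ▸ ⟨neg_ne_zero.2 hhc.1, by rw [mul_neg, hhc.2, neg_zero]⟩
  obtain ⟨x, hx⟩ := C.exists_isHole
  obtain ⟨k, hk⟩ := Nat.exists_eq_add_of_le (Nat.le_sub_one_of_lt (C.lowDiffs_lt hb))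
  have balance := P.balance x hx b hb k hk.symm
  have hq := C.levelY.prime.two_le
  simp only [hunit, mul_zero, zero_mul, unitWeight, cond_false, one_mul, mul_one, zero_eq_mul,
    mul_eq_zero] at balance
  lia

theorem isHole_of_lowDiffs_ne_zero (C : CornerTiling f g h p q r A B i₀ i₁ y₀ z₀) (hb : b ∈ B)
    (hlow : lowDiffs f g h q r B b ≠ 0) {x : R} (hf : f x = i₀) (hg : g x = y₀)
    (hh : (r : Z) * (h x - z₀) = 0) (hne : h x ≠ z₀) : IsHole f g h r A i₀ y₀ z₀ x := by
  refine ⟨fun hx => hlow (countWhere_eq_zero.2 ?_), hf, hg, hh⟩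
  rintro c hc ⟨hfc, hgc, hhc⟩
  obtain ⟨a, hfa, hga, hha⟩ := C.coords.exists_eq i₀ (y₀ - g (c - b)) z₀
  have ha : a ∈ A := C.face₀.mem hfa
    (by rw [hga, sub_sub_cancel_left, mul_neg, hgc.2, neg_zero]) hha
  have := (C.eq_and_eq hx ha hc hb (by rw [hf, hfa, sub_self, hfc])
    (by rw [hg, hga, sub_sub_cancel])
    (C.levelZ.associated (by rw [hha]; exact ⟨sub_ne_zero.2 hne, hh⟩) hhc)).1
  exact hne (by rw [this, hha])

theorem add_le_of_forall_isHole (C : CornerTiling f g h p q r A B i₀ i₁ y₀ z₀)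
    (hb : b ∈ B) (hlow : lowDiffs f g h q r B b ≠ 0) {m : ℕ}
    (hm : ∀ x, IsHole f g h r A i₀ y₀ z₀ x → m ≤ (r - 1) * lineUnits f g h A y₀ i₁ (h x)) :
    r + m ≤ q * r := by
  classical
  obtain ⟨T, hT, hmem⟩ := C.levelZ.exists_finset_ball z₀
  have hz₀ : z₀ ∈ T := (hmem z₀).2 (by rw [sub_self, mul_zero])
  refine le_trans (Nat.add_le_add_left ?_ r)
    (C.add_sum_lineUnits_le hT fun z hz => (hmem z).1 hz)
  refine Nat.le_of_mul_le_mul_left ?_ (Nat.sub_pos_of_lt C.levelZ.prime.one_lt)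
  calc (r - 1) * m = ∑ _z ∈ T.erase z₀, m := by
        rw [Finset.sum_const, Finset.card_erase_of_mem hz₀, hT, smul_eq_mul]
    _ ≤ ∑ z ∈ T.erase z₀, (r - 1) * lineUnits f g h A y₀ i₁ z := by
        refine Finset.sum_le_sum fun z hz => ?_
        obtain ⟨x, hf, hg, rfl⟩ := C.coords.exists_eq i₀ y₀ z
        obtain ⟨hne, hzT⟩ := Finset.mem_erase.1 hz
        exact hm x (C.isHole_of_lowDiffs_ne_zero hb hlow hf hg ((hmem _).1 hzT) hne)
    _ ≤ ∑ z ∈ T, (r - 1) * lineUnits f g h A y₀ i₁ z :=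
        Finset.sum_le_sum_of_subset (Finset.erase_subset z₀ T)
    _ = (r - 1) * ∑ z ∈ T, lineUnits f g h A y₀ i₁ z := (Finset.mul_sum ..).symm

theorem add_weight_le_of_pureKind_true_false (C : CornerTiling f g h p q r A B i₀ i₁ y₀ z₀)
    (P : PureKind f g h p q r A B i₀ i₁ y₀ z₀ true false) (hb : b ∈ B)
    (hlow : lowDiffs f g h q r B b ≠ 0) {c : R} (hc : c ∈ B)
    (hk : lowDiffs f g h q r B c + k = r - 1) :
    r + q * (q - 1) * k ≤ q * r ∧ r + (p - 1) * q * k ≤ q * r :=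
  ⟨C.add_le_of_forall_isHole hb hlow fun _ hx =>
      (C.lineUnits_ge_of_pureKind_true_false P hx hc hk).1,
    C.add_le_of_forall_isHole hb hlow fun _ hx =>
      (C.lineUnits_ge_of_pureKind_true_false P hx hc hk).2⟩

theorem pureKind_false_false_of_lt [Finite R] (C : CornerTiling f g h p q r A B i₀ i₁ y₀ z₀)
    (hrq : r < q) (hb : b ∈ B) (hlow : lowDiffs f g h q r B b ≠ 0) {c : R} (hc : c ∈ B)
    (hne : lowDiffs f g h q r B c ≠ r - 1) :
    PureKind f g h p q r A B i₀ i₁ y₀ z₀ false false := by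
  obtain ⟨s, t, P⟩ := C.exists_pureKind hc hne
  cases t
  · cases s
    · exact P
    obtain ⟨k, hk⟩ := Nat.exists_eq_add_of_le (Nat.le_sub_one_of_lt (C.lowDiffs_lt hc))
    have hle := (C.add_weight_le_of_pureKind_true_false P hb hlow hc hk.symm).1
    exact absurd (C.q_lt_r_of_le C.levelZ.prime.pos ((Nat.add_le_add_left
      (Nat.le_mul_of_pos_right _ (by lia)) r).trans hle)) hrq.asymm
  · exact absurd (C.q_lt_r_of_pureKind_true P hc hne) hrq.asymm

end CornerTiling

theorem eq_two_of_add_mul_le {q r k : ℕ} (hq : q.Prime) (hr : r.Prime) (hqr : q < r)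
    (hk : r - q ≤ k) (hle : r + q * (q - 1) * k ≤ q * r) : q = 2 ∧ r = 3 := by
  obtain ⟨d, rfl⟩ := Nat.exists_eq_add_of_lt hqr
  obtain ⟨e, rfl⟩ := Nat.exists_eq_add_of_le' hq.two_le
  have hed : (e + 1) * (d + 1) ≤ e + 2 := by
    have hk' : (e + 2) * (e + 1) * (d + 1) ≤ (e + 2) * (e + 1) * k :=
      Nat.mul_le_mul_left _ (by lia)
    simp only [Nat.add_succ_sub_one] at hle
    nlinarith
  have hd : e = 0 ∨ d = 0 := by
    by_contra! hne
    have : 1 * 1 ≤ e * d := Nat.mul_le_mul (Nat.one_le_iff_ne_zero.2 hne.1)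
      (Nat.one_le_iff_ne_zero.2 hne.2)
    nlinarith
  rcases hd with rfl | rfl
  · have : d ≠ 1 := by rintro rfl; exact absurd hr (by decide)
    lia
  · rcases hq.eq_two_or_odd' with h2 | hodd
    · lia
    · exact absurd (hr.eq_two_or_odd'.resolve_left (by lia)) (Nat.not_odd_iff_even.2 hodd.add_one)

namespace CornerTiling

theorem exists_pureKind_true [Finite R] (C : CornerTiling f g h p q r A B i₀ i₁ y₀ z₀)
    (hqr : q < r) (hb : b ∈ B) (hlow : lowDiffs f g h q r B b ≠ 0) :
    ∃ s, PureKind f g h p q r A B i₀ i₁ y₀ z₀ s true := by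
  have hlt := C.lowDiffs_lt' hb
  have hne : lowDiffs f g h q r B b ≠ r - 1 := by lia
  obtain ⟨s, t, P⟩ := C.exists_pureKind hb hne
  cases t
  · exfalso
    cases s
    · exact hne (C.lowDiffs_eq_of_pureKind_false_false P hb hlow)
    obtain ⟨k, hk⟩ := Nat.exists_eq_add_of_le (Nat.le_sub_one_of_lt (C.lowDiffs_lt hb))
    obtain ⟨hleq, hlep⟩ := C.add_weight_le_of_pureKind_true_false P hb hlow hb hk.symm
    obtain ⟨rfl, rfl⟩ := eq_two_of_add_mul_le C.levelY.prime C.levelZ.prime hqr (by lia) hleq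
    have : (p - 1) * 2 * 1 ≤ (p - 1) * 2 * k := Nat.mul_le_mul_left _ (by lia)
    have := C.levelX.prime.two_le
    have := C.p_ne_q
    lia
  · exact ⟨s, P⟩

theorem countWhere_ball_eq (C : CornerTiling f g h p q r A B i₀ i₁ y₀ z₀)
    (P : PureKind f g h p q r A B i₀ i₁ y₀ z₀ s true) (hb : b ∈ B) :
    countWhere B (fun b' => (p : X) * f (b' - b) = 0 ∧ (r : Z) * h (b' - b) = 0) = r := by
  refine (C.countWhere_ball_le
    (fun b hb s' => P.unitDiffs_eq_zero b hb s' false (by simp)) b).antisymm ?_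
  obtain ⟨k, hk⟩ := Nat.exists_eq_add_of_le (Nat.le_sub_one_of_lt (C.lowDiffs_lt hb))
  have hge := (Nat.le_mul_of_pos_left k (C.one_le_weight s)).trans
    (C.le_unitDiffs_true P hb hk.symm)
  have hlt := C.lowDiffs_add_unitDiffs_lt hb s true
  lia

theorem exists_isUnit_of_pureKind_true_true (C : CornerTiling f g h p q r A B i₀ i₁ y₀ z₀)
    (P : PureKind f g h p q r A B i₀ i₁ y₀ z₀ true true) (hb : b ∈ B)
    (hne : lowDiffs f g h q r B b ≠ r - 1) : ∃ a ∈ A, f a = i₁ ∧ IsUnit (g a - y₀) := by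
  by_contra! hno
  have hlt := C.lowDiffs_lt hb
  obtain ⟨k, hk⟩ := Nat.exists_eq_add_of_le (Nat.le_sub_one_of_lt hlt)
  have balance := C.balance_true P hb hk.symm
  have hq := C.levelY.prime.two_le
  have hp := C.levelX.prime.two_le
  rw [lineUnits, countWhere_eq_zero.2 fun a ha haP => hno a ha haP.1 haP.2.1] at balance
  simp only [zero_mul, cond_true, zero_eq_mul, mul_eq_zero] at balance
  lia

/-- Otherwise `p f = 0`, `q g = 0` defines classes of `q` elements which split into classes of `r`
elements by the value of `r h`. -/
theorem exists_lowDiffs_ne (C : CornerTiling f g h p q r A B i₀ i₁ y₀ z₀)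
    (hball : countWhere B (fun b' => (p : X) * f (b' - b) = 0 ∧ (q : Y) * g (b' - b) = 0) = q) :
    ∃ c ∈ B, lowDiffs f g h q r B c ≠ r - 1 := by
  by_contra! hall
  refine C.q_ne_r.symm ((Nat.prime_dvd_prime_iff_eq C.levelZ.prime C.levelY.prime).1 ?_)
  have hr : r - 1 + 1 = r := Nat.sub_add_cancel C.levelZ.prime.one_le
  rw [← hball]
  refine dvd_countWhere (fun b' => (r : Z) * h b') fun c hc ⟨hfc, hgc⟩ => ?_
  refine Eq.trans (countWhere_congr fun b' _ => ?_)
    ((C.countWhere_low hc).trans (by rw [hall c hc, hr]))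
  rw [map_sub h, mul_sub, sub_eq_zero, and_assoc]
  constructor
  · rintro ⟨hf, hg, hh⟩
    exact ⟨natCast_mul_map_sub hf hfc, natCast_mul_map_sub hg hgc, hh⟩
  · rintro ⟨hf, hg, hh⟩
    refine ⟨?_, ?_, hh⟩
    · rw [← sub_add_sub_cancel b' c b, map_add, mul_add, hf, hfc, add_zero]
    · rw [← sub_add_sub_cancel b' c b, map_add, mul_add, hg, hgc, add_zero]

theorem countWhere_line_eq (C : CornerTiling f g h p q r A B i₀ i₁ y₀ z₀) (hb : b ∈ B) :
    countWhere B (fun c => f (c - b) = 0 ∧ h (c - b) = 0) =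
      unitDiffs f g h p r B b false false + 1 := by
  rw [unitDiffs, ← countWhere_eq_self hb, ← countWhere_or fun c _ hc hcb =>
    C.not_isUnit_self b (hcb ▸ hc)]
  refine countWhere_congr fun c hc => ⟨fun ⟨hf, hh⟩ => or_iff_not_imp_left.2 fun hno => ?_, ?_⟩
  · refine C.eq_of_low_of_h_eq hc hb (by rw [hf, mul_zero]) ?_ hh
    exact C.levelY.not_isUnit_iff.1 fun hg => hno ⟨hf, hg, hh⟩
  · rintro (⟨hf, -, hh⟩ | rfl)
    · exact ⟨hf, hh⟩
    · rw [sub_self, map_zero, map_zero]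
      exact ⟨rfl, rfl⟩

/-- The slices `f = i` of `A` and `f = j` of `B` add injectively. -/
theorem countWhere_mul_countWhere_le (C : CornerTiling f g h p q r A B i₀ i₁ y₀ z₀) (i j : X) :
    countWhere A (f · = i) * countWhere B (f · = j) ≤ q ^ 2 * r ^ 2 := by
  classical
  have := C.levelY.finite
  have := C.levelZ.finite
  rw [← C.levelY.card_eq, ← C.levelZ.card_eq, ← Nat.card_prod, countWhere_eq_card_filter,
    countWhere_eq_card_filter, ← Finset.card_product, ← Set.ncard_coe_finset, ← Set.ncard_univ]
  refine Set.ncard_le_ncard_of_injOn (fun ab => (g (ab.1 + ab.2), h (ab.1 + ab.2)))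
    (fun _ _ => Set.mem_univ _) ?_
  rintro ⟨a, b⟩ hab ⟨a', b'⟩ hab' heq
  simp only [Finset.coe_product, Set.mem_prod, Finset.mem_coe, Finset.mem_filter] at hab hab'
  rw [Prod.mk.injEq] at heq
  obtain ⟨⟨ha, hfa⟩, hb, hfb⟩ := hab
  obtain ⟨⟨ha', hfa'⟩, hb', hfb'⟩ := hab'
  have hsum : a + b = a' + b' :=
    C.coords.ext (by rw [map_add, map_add, hfa, hfb, hfa', hfb']) heq.1 heq.2
  obtain ⟨rfl, rfl⟩ := C.tiling.eq_and_eq ha ha' hb' hb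
    (by rw [show a - a' = b' - b by linear_combination hsum])
  rfl

theorem f_eq_of_pureKind_false_true (C : CornerTiling f g h p q r A B i₀ i₁ y₀ z₀)
    (P : PureKind f g h p q r A B i₀ i₁ y₀ z₀ false true) {c : R} (hb : b ∈ B) (hc : c ∈ B)
    (hf : (p : X) * f (c - b) = 0) (hh : (r : Z) * h (c - b) = 0) : f (c - b) = 0 := by
  by_contra hf₀
  obtain ⟨t, ht⟩ := exists_hasKind hh
  have hg := C.natCast_mul_eq_zero_of_unitDiffs hc (P.unitDiffs_eq_zero b hb true t (by simp))
    ⟨hf₀, hf⟩ ht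
  rcases C.eq_or_of_low hc hb hf hg hh with rfl | hlow
  · exact hf₀ (by rw [sub_self, map_zero])
  · exact hf₀ hlow.1

theorem mul_self_le_countWhere (C : CornerTiling f g h p q r A B i₀ i₁ y₀ z₀)
    (P : PureKind f g h p q r A B i₀ i₁ y₀ z₀ false true)
    (hline : countWhere B (fun c => f (c - b) = 0 ∧ g (c - b) = 0) = r) :
    r * r ≤ countWhere B (f · = f b) := by
  conv_lhs => rw [← hline]
  nth_rewrite 2 [hline]
  refine countWhere_mul_le (fun c => (r : Z) * h c) ?_ ?_
  · rintro c₁ hc₁ ⟨hf₁, hg₁⟩ c₂ hc₂ ⟨hf₂, hg₂⟩ heq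
    exact C.swap.eq_of_low_of_h_eq hc₁ hc₂ (by rw [map_sub_eq_zero hf₁ hf₂, mul_zero])
      (by rw [map_sub, mul_sub, heq, sub_self]) (map_sub_eq_zero hg₁ hg₂)
  · rintro c hc ⟨hf, -⟩
    refine (C.countWhere_ball_eq P hc).symm.trans_le (countWhere_le_countWhere ?_)
    rintro d hd ⟨hfd, hhd⟩
    have hfdc := C.f_eq_of_pureKind_false_true P hc hd hfd hhd
    rw [map_sub, sub_eq_zero] at hfdc hf
    rw [map_sub, mul_sub, sub_eq_zero] at hhd
    exact ⟨hfdc.trans hf, hhd⟩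

theorem lowDiffs_eq_zero_of_lt [Finite R] (C : CornerTiling f g h p q r A B i₀ i₁ y₀ z₀)
    (hrq : r < q) (hb : b ∈ B) : lowDiffs f g h q r B b = 0 := by
  by_contra hlow
  obtain ⟨s, P'⟩ := C.swap.exists_pureKind_true hrq hb (by rwa [lowDiffs_swap])
  obtain ⟨c, hc, hne⟩ := C.exists_lowDiffs_ne (C.swap.countWhere_ball_eq P' hb)
  have P := C.pureKind_false_false_of_lt hrq hb hlow hc hne
  have hc₀ : lowDiffs f g h q r B c = 0 :=
    of_not_not fun h₀ => hne (C.lowDiffs_eq_of_pureKind_false_false P hc h₀)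
  obtain ⟨hslice, -, hunit⟩ := C.slice_of_pureKind_false_false P hc hc₀
  have hq := C.levelY.prime.pos
  cases s
  · have hline := C.countWhere_line_eq hc
    rw [hunit, Nat.sub_add_cancel hq] at hline
    have hsq : q * q ≤ countWhere B (f · = f c) := C.swap.mul_self_le_countWhere P' hline
    have hle := C.countWhere_mul_countWhere_le i₀ (f c)
    rw [hslice] at hle
    have : q * r * (q * q) ≤ q * r * (q * r) :=
      (Nat.mul_le_mul_left _ hsq).trans (hle.trans_eq (by ring))
    exact hrq.not_ge (Nat.le_of_mul_le_mul_left (Nat.le_of_mul_le_mul_left this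
      (Nat.mul_pos hq C.levelZ.prime.pos)) hq)
  · have hlt := C.lowDiffs_lt hb
    obtain ⟨a, ha, hfa, hu⟩ := C.swap.exists_isUnit_of_pureKind_true_true P' hb
      (by rw [lowDiffs_swap]; lia)
    exact C.not_isUnit_of_pureKind_false_false P hc hc₀ ha hfa hu

theorem lowDiffs_eq_zero [Finite R] (C : CornerTiling f g h p q r A B i₀ i₁ y₀ z₀) (hb : b ∈ B) :
    lowDiffs f g h q r B b = 0 := by
  rcases C.q_ne_r.lt_or_gt with hqr | hrq
  · rw [← lowDiffs_swap (f := f)]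
    exact C.swap.lowDiffs_eq_zero_of_lt hqr hb
  · exact C.lowDiffs_eq_zero_of_lt hrq hb

theorem eq_of_forall_low [Finite R] (C : CornerTiling f g h p q r A B i₀ i₁ y₀ z₀) {b' : R}
    (hb : b ∈ B) (hb' : b' ∈ B) (hf : (p : X) * f (b - b') = 0) (hg : (q : Y) * g (b - b') = 0)
    (hh : (r : Z) * h (b - b') = 0) : b = b' :=
  C.eq_of_low hb hb' (C.lowDiffs_eq_zero hb') hf hg hh

theorem countWhere_slice [Finite R] (C : CornerTiling f g h p q r A B i₀ i₁ y₀ z₀)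
    (hB : B.Nonempty) : countWhere A (f · = i₀) = q * r :=
  (C.slice_of_lowDiffs_eq_zero hB fun _ hb => C.lowDiffs_eq_zero hb).1

theorem countWhere_line [Finite R] (C : CornerTiling f g h p q r A B i₀ i₁ y₀ z₀) (hb : b ∈ B) :
    countWhere B (fun c => f (c - b) = 0 ∧ h (c - b) = 0) = q := by
  rw [C.countWhere_line_eq hb, ((C.slice_of_lowDiffs_eq_zero ⟨b, hb⟩
    fun _ hb => C.lowDiffs_eq_zero hb).2 b hb), Nat.sub_add_cancel C.levelY.prime.one_le]

theorem eq_zero_of_low [Finite R] (C : CornerTiling f g h p q r A B i₀ i₁ y₀ z₀) {b' : R}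
    (hb : b ∈ B) (hb' : b' ∈ B) (hf : (p : X) * f (b' - b) = 0) (hh : (r : Z) * h (b' - b) = 0) :
    f (b' - b) = 0 ∧ h (b' - b) = 0 := by
  by_contra hne
  have hle : countWhere B (fun c => (p : X) * f (c - b) = 0 ∧ (r : Z) * h (c - b) = 0) ≤ q :=
    C.levelY.countWhere_le g fun s hs hsb t ht htb hg => C.eq_of_forall_low hs ht
      (natCast_mul_map_sub hsb.1 htb.1) hg (natCast_mul_map_sub hsb.2 htb.2)
  refine hle.not_gt ((C.countWhere_line hb).symm.trans_lt
    (countWhere_lt_countWhere hb' (fun c _ hc => ?_) hne ⟨hf, hh⟩))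
  rw [hc.1, hc.2, mul_zero, mul_zero]
  exact ⟨rfl, rfl⟩

end CornerTiling

end Corner

/-! ### Mask polynomials at roots of unity -/

section RootsOfUnity

variable {M : ℕ}

theorem pow_val_natCast {G : Type*} [Monoid G] {ζ : G} (hζ : ζ ^ M = 1) (k : ℕ) :
    ζ ^ (k : ZMod M).val = ζ ^ k := by
  rw [ZMod.val_natCast, ← pow_eq_pow_mod _ hζ]

theorem pow_val_mul {G : Type*} [Monoid G] {ζ : G} (hζ : ζ ^ M = 1) (x y : ZMod M) :
    ζ ^ (x * y).val = (ζ ^ x.val) ^ y.val := by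
  rw [ZMod.val_mul, ← pow_mul, ← pow_eq_pow_mod _ hζ]

theorem cycDvd_iff_sum_eq_zero {s : ℕ} (hs : 0 < s) {A : Finset (ZMod M)} {ζ : ℂ}
    (hζ : IsPrimitiveRoot ζ s) : cycDvd M s A ↔ ∑ a ∈ A, ζ ^ a.val = 0 := by
  rw [cycDvd, cyclotomic_eq_minpoly hζ hs,
    ← minpoly.isIntegrallyClosed_dvd_iff (hζ.isIntegral hs)]
  simp [maskPoly]

variable [NeZero M]

theorem pow_val_add {G : Type*} [Monoid G] {ζ : G} (hζ : ζ ^ M = 1) (x y : ZMod M) :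
    ζ ^ (x + y).val = ζ ^ x.val * ζ ^ y.val := by
  rw [ZMod.val_add, ← pow_add, ← pow_eq_pow_mod _ hζ]

theorem pow_val_sum {ι G : Type*} [CommMonoid G] {ζ : G} (hζ : ζ ^ M = 1) (T : Finset ι)
    (d : ι → ZMod M) : ζ ^ (∑ i ∈ T, d i).val = ∏ i ∈ T, ζ ^ (d i).val := by
  classical
  induction T using Finset.induction_on with
  | empty => simp
  | insert i T hi ih => rw [Finset.sum_insert hi, Finset.prod_insert hi, pow_val_add hζ, ih]

theorem ringHom_apply_eq_natCast_val {S : Type*} [Ring S] (φ : ZMod M →+* S) (x : ZMod M) :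
    φ x = x.val := by
  conv_lhs => rw [← ZMod.natCast_zmod_val x, map_natCast]

theorem pow_val_ringHom {G : Type*} [Monoid G] {s : ℕ} {ζ : G} (hζ : ζ ^ s = 1)
    (φ : ZMod M →+* ZMod s) (x : ZMod M) : ζ ^ (φ x).val = ζ ^ x.val := by
  rw [ringHom_apply_eq_natCast_val, pow_val_natCast hζ]

/-- The value at `ζ` of the polynomial `∑ c(x) X^x`; for `ζ` running over the `M`-th roots of
unity this is the discrete Fourier transform of `c`. -/
noncomputable def rootTransform (c : ZMod M → ℂ) (ζ : ℂ) : ℂ := ∑ x, c x * ζ ^ x.val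

theorem eq_of_forall_rootTransform_eq {c d : ZMod M → ℂ}
    (h : ∀ ζ : ℂ, ζ ^ M = 1 → rootTransform c ζ = rootTransform d ζ) : c = d := by
  have pow_stdAddChar (k : ZMod M) (m : ℕ) :
      ZMod.stdAddChar k ^ m = ZMod.stdAddChar (N := M) (m * k) := by
    rw [← AddChar.map_nsmul_eq_pow, nsmul_eq_mul]
  have dft_eq (c : ZMod M → ℂ) (k : ZMod M) :
      ZMod.dft c k = rootTransform c (ZMod.stdAddChar (-k)) := by
    simp [ZMod.dft_apply, rootTransform, pow_stdAddChar, mul_comm]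
  apply ZMod.dft.injective
  ext k
  rw [dft_eq, dft_eq]
  exact h _ (by simp [pow_stdAddChar])

theorem rootTransform_countWhere {ι : Type*} (S : Finset ι) (w : ι → ZMod M) (ζ : ℂ) :
    rootTransform (fun x => (countWhere S (w · = x) : ℂ)) ζ = ∑ i ∈ S, ζ ^ (w i).val := by
  simp only [rootTransform, countWhere_eq_card_filter, Finset.natCast_card_filter,
    Finset.sum_mul, ite_mul, one_mul, zero_mul]
  rw [Finset.sum_comm]
  simp

theorem rootTransform_sub (c : ZMod M → ℂ) (d : ZMod M) {ζ : ℂ} (hζ : ζ ^ M = 1) :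
    rootTransform (fun x => c (x - d)) ζ = ζ ^ d.val * rootTransform c ζ := by
  rw [rootTransform, ← Equiv.sum_comp (Equiv.addRight d), rootTransform, Finset.mul_sum]
  refine Finset.sum_congr rfl fun x _ => ?_
  rw [Equiv.coe_addRight, add_sub_cancel_right, pow_val_add hζ]
  ring

theorem sum_pow_val_eq_zero_of_translation_invariant {ζ : ℂ} (hζ : ζ ^ M = 1) {w : ZMod M}
    (hw : ζ ^ w.val ≠ 1) {V : Finset (ZMod M)} (hV : ∀ x, x + w ∈ V ↔ x ∈ V) :
    ∑ x ∈ V, ζ ^ x.val = 0 := by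
  have shift : ∑ x ∈ V, ζ ^ x.val * ζ ^ w.val = ∑ x ∈ V, ζ ^ x.val := by
    simp only [← pow_val_add hζ]
    exact Finset.sum_equiv (Equiv.addRight w) (fun x => (hV x).symm) fun _ _ => rfl
  rw [← Finset.sum_mul] at shift
  by_contra hne
  exact hw (mul_left_cancel₀ hne (shift.trans (mul_one _).symm))

theorem sum_univ_pow_val_eq_zero {ζ : ℂ} (hζ : ζ ^ M = 1) (h1 : ζ ≠ 1) :
    ∑ x : ZMod M, ζ ^ x.val = 0 := by
  refine sum_pow_val_eq_zero_of_translation_invariant hζ (w := 1) ?_ (by simp)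
  have hval : ζ ^ (1 : ZMod M).val = ζ := by simpa using pow_val_natCast hζ 1
  rwa [hval]

theorem exists_isPrimitiveRoot_of_pow_eq_one {s : ℕ} (hs : 0 < s) {ζ : ℂ} (hζ : ζ ^ s = 1) :
    ∃ d, 0 < d ∧ d ∣ s ∧ IsPrimitiveRoot ζ d :=
  ⟨orderOf ζ, orderOf_pos_iff.2 (isOfFinOrder_iff_pow_eq_one.2 ⟨s, hs, hζ⟩),
    orderOf_dvd_of_pow_eq_one hζ, IsPrimitiveRoot.orderOf ζ⟩

end RootsOfUnity

section Tilings

variable {M : ℕ} [NeZero M] {A B : Finset (ZMod M)}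

/-- Only part of `A` and `B` may take part: `V` is any set tiled by `A'` and `B'`. -/
theorem IsTiling.sum_mul_sum_eq (hAB : IsTiling M (A : Set (ZMod M)) B) {A' B' V : Finset (ZMod M)}
    (hA : A' ⊆ A) (hB : B' ⊆ B) (hV : ∀ a ∈ A, ∀ b ∈ B, a + b ∈ V ↔ a ∈ A' ∧ b ∈ B') {ζ : ℂ}
    (hζ : ζ ^ M = 1) : (∑ a ∈ A', ζ ^ a.val) * ∑ b ∈ B', ζ ^ b.val = ∑ x ∈ V, ζ ^ x.val := by
  rw [Finset.sum_mul_sum, ← Finset.sum_product']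
  refine Finset.sum_bij (fun ab _ => ab.1 + ab.2) ?_ ?_ ?_ fun ab _ => (pow_val_add hζ _ _).symm
  · rintro ⟨a, b⟩ hab
    obtain ⟨ha, hb⟩ := Finset.mem_product.1 hab
    exact (hV a (hA ha) b (hB hb)).2 ⟨ha, hb⟩
  · intro ab hab ab' hab' heq
    rw [Finset.mem_product] at hab hab'
    exact (hAB _).unique ⟨hA hab.1, hB hab.2, rfl⟩ ⟨hA hab'.1, hB hab'.2, heq.symm⟩
  · intro x hx
    obtain ⟨⟨a, b⟩, ⟨ha, hb, rfl⟩, -⟩ := hAB x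
    exact ⟨(a, b), Finset.mem_product.2 ((hV a ha b hb).1 hx), rfl⟩

theorem IsTiling.sum_mul_sum_eq_sum_univ (hAB : IsTiling M (A : Set (ZMod M)) B) {ζ : ℂ}
    (hζ : ζ ^ M = 1) : (∑ a ∈ A, ζ ^ a.val) * ∑ b ∈ B, ζ ^ b.val = ∑ x : ZMod M, ζ ^ x.val :=
  hAB.sum_mul_sum_eq subset_rfl subset_rfl (by simp +contextual) hζ

theorem IsTiling.card_mul_card (hAB : IsTiling M (A : Set (ZMod M)) B) : #A * #B = M := by
  have := hAB.sum_mul_sum_eq_sum_univ (one_pow M)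
  simp only [one_pow, Finset.sum_const, Finset.card_univ, ZMod.card, nsmul_eq_mul, mul_one] at this
  exact_mod_cast this

theorem IsTiling.sum_eq_zero_or (hAB : IsTiling M (A : Set (ZMod M)) B) {ζ : ℂ} (hζ : ζ ^ M = 1)
    (h1 : ζ ≠ 1) : ∑ a ∈ A, ζ ^ a.val = 0 ∨ ∑ b ∈ B, ζ ^ b.val = 0 := by
  rw [← mul_eq_zero, hAB.sum_mul_sum_eq_sum_univ hζ, sum_univ_pow_val_eq_zero hζ h1]

theorem IsTiling.cycDvd_or (hAB : IsTiling M (A : Set (ZMod M)) B) {s : ℕ} (hs : 1 < s)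
    (hsM : s ∣ M) : cycDvd M s A ∨ cycDvd M s B := by
  have hprim := Complex.isPrimitiveRoot_exp s (by lia)
  rw [cycDvd_iff_sum_eq_zero (by lia) hprim, cycDvd_iff_sum_eq_zero (by lia) hprim]
  exact hAB.sum_eq_zero_or ((hprim.pow_eq_one_iff_dvd M).2 hsM) (hprim.ne_one hs)

/-- Tijdeman's theorem. Replacing `B` by `tB` permutes the primitive roots of each order, so every
nontrivial `M`-th root of unity remains a zero of one of the two masks. -/
theorem IsTiling.existsUnique_add_mul (hAB : IsTiling M (A : Set (ZMod M)) B) {t : ZMod M}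
    (ht : IsUnit t) (x : ZMod M) :
    ∃! ab : ZMod M × ZMod M, ab.1 ∈ A ∧ ab.2 ∈ B ∧ ab.1 + t * ab.2 = x := by
  classical
  have eval_dilate (ζ : ℂ) (hζ : ζ ^ M = 1) : (∑ a ∈ A, ζ ^ a.val) * ∑ b ∈ B, (ζ ^ t.val) ^ b.val =
      ∑ x : ZMod M, ζ ^ x.val := by
    rcases eq_or_ne ζ 1 with rfl | h1
    · simpa using hAB.sum_mul_sum_eq_sum_univ (one_pow M)
    obtain ⟨s, hs, hsM, hprim⟩ := exists_isPrimitiveRoot_of_pow_eq_one (NeZero.pos M) hζ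
    have hcop : t.val.Coprime s := by
      refine Nat.Coprime.coprime_dvd_right hsM ?_
      rwa [← ZMod.isUnit_iff_coprime, ZMod.natCast_zmod_val]
    rw [sum_univ_pow_val_eq_zero hζ h1, mul_eq_zero,
      ← cycDvd_iff_sum_eq_zero hs (hprim.pow_of_coprime _ hcop), cycDvd_iff_sum_eq_zero hs hprim]
    exact hAB.sum_eq_zero_or hζ h1
  have hcount : (fun y => (countWhere (A ×ˢ B) (fun ab => ab.1 + t * ab.2 = y) : ℂ)) = 1 := by
    refine eq_of_forall_rootTransform_eq fun ζ hζ => ?_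
    simp only [rootTransform_countWhere, pow_val_add hζ, pow_val_mul hζ]
    rw [Finset.sum_product]
    dsimp only
    rw [← Finset.sum_mul_sum, eval_dilate ζ hζ]
    simp [rootTransform]
  have hone : countWhere (A ×ˢ B) (fun ab => ab.1 + t * ab.2 = x) = 1 := by
    simpa using congrFun hcount x
  obtain ⟨ab, hab⟩ := Finset.card_eq_one.1 hone
  refine ⟨ab, ?_, fun ab' hab' => ?_⟩
  · simpa [and_assoc] using hab.ge (Finset.mem_singleton_self ab)
  · exact Finset.mem_singleton.1 (hab.le (by simpa [and_assoc] using hab'))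

end Tilings

/-! ### Cyclotomic divisors and the distribution of a set -/

section Distribution

variable {M : ℕ}

theorem pow_card_dvd_card_of_cycDvd {l : ℕ} (hl : l.Prime) {A : Finset (ZMod M)} {E : Finset ℕ}
    (hE : ∀ e ∈ E, 1 ≤ e ∧ cycDvd M (l ^ e) A) : l ^ #E ∣ #A := by
  have : Fact l.Prime := ⟨hl⟩
  have hirr (e : ℕ) : Irreducible (cyclotomic (l ^ e) ℤ) :=
    cyclotomic.irreducible (pow_pos hl.pos e)
  have hprod : ∏ e ∈ E, cyclotomic (l ^ e) ℤ ∣ maskPoly M A := by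
    refine Finset.prod_dvd_of_isRelPrime (fun e _ e' _ hne => ?_) fun e he => (hE e he).2
    refine (hirr e).isRelPrime_iff_not_dvd.2 fun hdvd => hne ?_
    have hassoc := (hirr e).associated_of_dvd (hirr e') hdvd
    exact Nat.pow_right_injective hl.two_le <| cyclotomic_injective <|
      eq_of_monic_of_associated (cyclotomic.monic _ _) (cyclotomic.monic _ _) hassoc
  have heval : ∏ e ∈ E, (cyclotomic (l ^ e) ℤ).eval 1 = (l : ℤ) ^ #E := by
    refine Finset.prod_eq_pow_card fun e he => ?_
    obtain ⟨e, rfl⟩ := Nat.exists_eq_add_of_le' (hE e he).1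
    exact eval_one_cyclotomic_prime_pow e
  have := eval_dvd (x := 1) hprod
  rw [eval_prod, heval] at this
  simp only [maskPoly, eval_finsetSum, eval_pow, eval_X, one_pow, Finset.sum_const,
    nsmul_eq_mul, mul_one] at this
  exact_mod_cast this

variable [NeZero M]

/-- The vanishing of `M`-cuboids. On the Fourier side the alternating sum is multiplication by
`∏ (1 - ζ ^ (s / l))`, killing the `s`-th roots of unity that are not primitive; the mask kills the
primitive ones. -/
theorem sum_powerset_countWhere_eq_zero {s : ℕ} [NeZero s] (φ : ZMod M →+* ZMod s)
    {B : Finset (ZMod M)} (hB : cycDvd M s B) (x : ZMod s) :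
    ∑ T ∈ s.primeFactors.powerset,
      (-1 : ℂ) ^ #T * countWhere B (φ · = x - ∑ l ∈ T, ((s / l : ℕ) : ZMod s)) = 0 := by
  have hs : 0 < s := NeZero.pos s
  set c : ZMod s → ℂ := fun x => countWhere B (φ · = x)
  suffices (fun x => ∑ T ∈ s.primeFactors.powerset,
      (-1 : ℂ) ^ #T * c (x - ∑ l ∈ T, ((s / l : ℕ) : ZMod s))) = 0 from congrFun this x
  refine eq_of_forall_rootTransform_eq fun ζ hζ => ?_
  have hfactor : rootTransform (fun x => ∑ T ∈ s.primeFactors.powerset,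
        (-1 : ℂ) ^ #T * c (x - ∑ l ∈ T, ((s / l : ℕ) : ZMod s))) ζ =
      (∏ l ∈ s.primeFactors, (1 - ζ ^ (s / l))) * ∑ b ∈ B, ζ ^ b.val := by
    have hc : rootTransform c ζ = ∑ b ∈ B, ζ ^ b.val := by
      rw [rootTransform_countWhere]
      exact Finset.sum_congr rfl fun b _ => pow_val_ringHom hζ φ b
    rw [← hc, Finset.prod_sub, Finset.sum_mul]
    simp only [rootTransform, Finset.sum_mul, mul_assoc]
    rw [Finset.sum_comm]
    refine Finset.sum_congr rfl fun T _ => ?_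
    rw [← Finset.mul_sum]
    congr 1
    have := rootTransform_sub c (∑ l ∈ T, ((s / l : ℕ) : ZMod s)) hζ
    rw [pow_val_sum hζ] at this
    simpa only [pow_val_natCast hζ, rootTransform, Finset.prod_const_one, one_mul] using this
  have hzero : (∏ l ∈ s.primeFactors, (1 - ζ ^ (s / l))) * ∑ b ∈ B, ζ ^ b.val = 0 := by
    obtain ⟨d, -, ⟨k, rfl⟩, hprim⟩ := exists_isPrimitiveRoot_of_pow_eq_one hs hζ
    rcases eq_or_ne k 1 with rfl | hk
    · rw [mul_one] at hB hs
      rw [(cycDvd_iff_sum_eq_zero hs hprim).1 hB, mul_zero]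
    · obtain ⟨l, hl, m, rfl⟩ := Nat.exists_prime_and_dvd hk
      have hdl : d * (l * m) / l = d * m := by
        rw [mul_left_comm, Nat.mul_div_cancel_left _ hl.pos]
      have hmem : l ∈ (d * (l * m)).primeFactors :=
        Nat.mem_primeFactors.2 ⟨hl, ⟨d * m, mul_left_comm _ _ _⟩, hs.ne'⟩
      rw [Finset.prod_eq_zero hmem, zero_mul]
      rw [hdl, pow_mul, hprim.pow_eq_one, one_pow, sub_self]
  rw [hfactor, hzero]
  simp [rootTransform]

theorem not_dvd_sum_div_primeFactors {s : ℕ} (hs : s ≠ 0) {T : Finset ℕ}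
    (hT : T ⊆ s.primeFactors) (hne : T.Nonempty) : ¬ s ∣ ∑ l ∈ T, s / l := by
  obtain ⟨l, hl⟩ := hne
  have hdvd {l : ℕ} (hl : l ∈ T) : l ∣ s := Nat.dvd_of_mem_primeFactors (hT hl)
  have hprime {l : ℕ} (hl : l ∈ T) : l.Prime := Nat.prime_of_mem_primeFactors (hT hl)
  set R := ∏ l' ∈ T.erase l, l'
  have hR : ∀ l' ∈ T.erase l, s ∣ R * (s / l') := fun l' hl' => by
    have h : l' * (s / l') = s := Nat.mul_div_cancel' (hdvd (Finset.mem_of_mem_erase hl'))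
    exact (dvd_of_eq h.symm).trans (mul_dvd_mul_right (Finset.dvd_prod_of_mem _ hl') _)
  have hlR : ¬ l ∣ R := by
    rw [Prime.dvd_finsetProd_iff (hprime hl).prime]
    rintro ⟨l', hl', hdvd'⟩
    rw [Finset.mem_erase] at hl'
    exact hl'.1 ((Nat.prime_dvd_prime_iff_eq (hprime hl) (hprime hl'.2)).1 hdvd').symm
  intro h
  rw [← Finset.add_sum_erase T _ hl] at h
  have hsl : s ∣ R * (s / l) := by
    have := h.mul_left R
    rw [mul_add, Finset.mul_sum] at this
    exact (Nat.dvd_add_left (Finset.dvd_sum hR)).1 this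
  obtain ⟨k, rfl⟩ := hdvd hl
  rw [Nat.mul_div_cancel_left _ (hprime hl).pos] at hsl
  exact hlR (Nat.dvd_of_mul_dvd_mul_right (Nat.pos_of_ne_zero (right_ne_zero_of_mul hs)) hsl)

/-- In a cuboid with one vertex at an isolated point, that vertex is the only one which counts. -/
theorem not_cycDvd_of_isolated {s R k : ℕ} (hsM : s ∣ M) (hR : s ∣ R ^ k)
    {B : Finset (ZMod M)} {b₀ : ZMod M} (hb₀ : b₀ ∈ B)
    (hiso : ∀ b ∈ B, s ∣ R * (b - b₀).val → s ∣ (b - b₀).val) : ¬ cycDvd M s B := by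
  have hs : s ≠ 0 := ne_zero_of_dvd_ne_zero (NeZero.ne M) hsM
  have : NeZero s := ⟨hs⟩
  let φ : ZMod M →+* ZMod s := ZMod.castHom hsM _
  intro hB
  have hsum := sum_powerset_countWhere_eq_zero φ hB (φ b₀)
  rw [Finset.sum_eq_single_of_mem ∅ (Finset.empty_mem_powerset _)] at hsum
  · simp only [Finset.card_empty, pow_zero, Finset.sum_empty, sub_zero, one_mul,
      Nat.cast_eq_zero, countWhere_eq_card_filter, Finset.card_eq_zero] at hsum
    exact Finset.filter_eq_empty_iff.1 hsum hb₀ rfl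
  · intro T hT hne
    rw [Finset.mem_powerset] at hT
    rw [countWhere_eq_card_filter, Finset.filter_eq_empty_iff.2, Finset.card_empty,
      Nat.cast_zero, mul_zero]
    intro b hb hvertex
    have hdiff : (((b - b₀).val : ℕ) : ZMod s) + ((∑ l ∈ T, s / l : ℕ) : ZMod s) = 0 := by
      rw [← ringHom_apply_eq_natCast_val φ, map_sub, hvertex, Nat.cast_sum]
      ring
    rw [← Nat.cast_add, ZMod.natCast_eq_zero_iff] at hdiff
    refine not_dvd_sum_div_primeFactors hs hT (Finset.nonempty_iff_ne_empty.2 hne)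
      ((Nat.dvd_add_right (hiso b hb ?_)).1 hdiff)
    have hedge : s ∣ R * ∑ l ∈ T, s / l := by
      rw [Finset.mul_sum]
      refine Finset.dvd_sum fun l hl => ?_
      have hls := Nat.dvd_of_mem_primeFactors (hT hl)
      obtain ⟨m, rfl⟩ := (Nat.prime_of_mem_primeFactors (hT hl)).dvd_of_dvd_pow (hls.trans hR)
      rw [mul_right_comm, Nat.mul_div_cancel' hls]
      exact dvd_mul_right _ _
    exact (Nat.dvd_add_left hedge).1 (mul_add R _ _ ▸ hdiff.mul_left R)

theorem countWhere_add_eq_of_cycDvd_prime_pow {p n : ℕ} (hp : p.Prime)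
    (φ : ZMod M →+* ZMod (p ^ (n + 1))) {A : Finset (ZMod M)} (hA : cycDvd M (p ^ (n + 1)) A)
    (x : ZMod (p ^ (n + 1))) :
    countWhere A (φ · = x - (p ^ n : ℕ)) = countWhere A (φ · = x) := by
  have : NeZero (p ^ (n + 1)) := ⟨(pow_pos hp.pos _).ne'⟩
  have := sum_powerset_countWhere_eq_zero φ hA x
  have hdiv : p ^ (n + 1) / p = p ^ n := by rw [pow_succ, Nat.mul_div_cancel _ hp.pos]
  rw [Nat.primeFactors_prime_pow n.succ_ne_zero hp,
    ← insert_empty_eq, Finset.sum_powerset_insert (Finset.notMem_empty p)] at this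
  simp only [Finset.powerset_empty, insert_empty_eq, Finset.card_empty, pow_zero,
    Finset.sum_empty, sub_zero, one_mul, Finset.card_singleton, pow_one, Finset.sum_singleton,
    hdiv] at this
  have : (countWhere A (φ · = x - (p ^ n : ℕ)) : ℂ) = countWhere A (φ · = x) := by
    linear_combination -this
  exact_mod_cast this

end Distribution

section PrimePower

variable {p n : ℕ}

theorem natCast_pow_zmod_eq_zero_iff (hp : p.Prime) {j : ℕ} :
    (p : ZMod (p ^ (n + 1))) ^ j = 0 ↔ n + 1 ≤ j := by
  rw [← Nat.cast_pow, ZMod.natCast_eq_zero_iff, Nat.pow_dvd_pow_iff_le_right hp.one_lt]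

theorem isUnit_natCast_zmod_iff (hp : p.Prime) {m : ℕ} :
    IsUnit (m : ZMod (p ^ (n + 1))) ↔ ¬ p ∣ m := by
  rw [ZMod.isUnit_iff_coprime, Nat.coprime_pow_right_iff n.succ_pos, Nat.coprime_comm,
    hp.coprime_iff_not_dvd]

theorem exists_unit_mul_pow_eq (hp : p.Prime) {x : ZMod (p ^ (n + 1))} (hx : x ≠ 0) :
    ∃ (u : (ZMod (p ^ (n + 1)))ˣ) (k : ℕ), k ≤ n ∧
      (u : ZMod (p ^ (n + 1))) * (p : ZMod (p ^ (n + 1))) ^ k = x := by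
  have : NeZero (p ^ (n + 1)) := ⟨pow_ne_zero _ hp.ne_zero⟩
  obtain ⟨k, m, hm, hk⟩ := Nat.exists_eq_pow_mul_and_not_dvd
    (n := x.val) (by rwa [Ne, ZMod.val_eq_zero]) p hp.ne_one
  obtain ⟨u, hu⟩ := (isUnit_natCast_zmod_iff (n := n) hp).2 hm
  have hux : (u : ZMod (p ^ (n + 1))) * (p : ZMod (p ^ (n + 1))) ^ k = x := by
    rw [hu, mul_comm, ← Nat.cast_pow, ← Nat.cast_mul, ← hk, ZMod.natCast_zmod_val]
  refine ⟨u, k, Nat.le_of_lt_succ (not_le.1 fun hnk => hx ?_), hux⟩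
  rw [← hux, (natCast_pow_zmod_eq_zero_iff hp).2 hnk, mul_zero]

theorem ncard_natCast_mul_eq_zero (hp : p.Prime) :
    {x : ZMod (p ^ (n + 1)) | (p : ZMod (p ^ (n + 1))) * x = 0}.ncard = p := by
  have : NeZero (p ^ (n + 1)) := ⟨pow_ne_zero _ hp.ne_zero⟩
  have hker : {x : ZMod (p ^ (n + 1)) | (p : ZMod (p ^ (n + 1))) * x = 0} =
      (nsmulAddMonoidHom (α := ZMod (p ^ (n + 1))) p).ker := by
    ext x
    simp [AddMonoidHom.mem_ker]
  rw [hker, ← Nat.card_coe_set_eq]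
  refine (IsAddCyclic.card_nsmulAddMonoidHom_ker (ZMod _) p).trans ?_
  rw [Nat.card_zmod, Nat.gcd_eq_right (dvd_pow_self p n.succ_ne_zero)]

/-- An element `u p^k` with `u` a unit and `k ≤ n` is determined up to units by which multiples
`p^j x`, `j ≥ 1`, vanish, and these are not affected by `d`. -/
theorem primeLevel_zmod (hp : p.Prime) : PrimeLevel p (ZMod (p ^ (n + 1))) where
  prime := hp
  ncard_ball := ncard_natCast_mul_eq_zero hp
  associated_add s d hd hs hsd := by
    obtain ⟨u, k, hk, hu⟩ := exists_unit_mul_pow_eq hp hs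
    obtain ⟨v, l, hl, hv⟩ := exists_unit_mul_pow_eq hp hsd
    have hiff (j : ℕ) : n + 1 ≤ j + 1 + k ↔ n + 1 ≤ j + 1 + l := by
      have heq : (p : ZMod (p ^ (n + 1))) ^ (j + 1) * (s + d) = p ^ (j + 1) * s := by
        linear_combination (p : ZMod (p ^ (n + 1))) ^ j * hd
      rw [← hv, ← hu, mul_left_comm, mul_left_comm _ (u : ZMod (p ^ (n + 1))), ← pow_add,
        ← pow_add] at heq
      rw [← natCast_pow_zmod_eq_zero_iff hp, ← natCast_pow_zmod_eq_zero_iff hp,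
        ← u.mul_right_eq_zero, ← heq, v.mul_right_eq_zero]
    obtain rfl : k = l := by
      have := hiff (n - k)
      have := hiff (n - l)
      lia
    rw [← hv, ← hu]
    exact (associated_unit_mul_left _ _ u.isUnit).trans
      (associated_unit_mul_right _ _ v.isUnit)

theorem squareLevel_zmod (hp : p.Prime) : SquareLevel p (ZMod (p ^ 2)) where
  toPrimeLevel := primeLevel_zmod hp
  card_eq := Nat.card_zmod _
  isUnit_iff x := by
    have : NeZero (p ^ 2) := ⟨pow_ne_zero _ hp.ne_zero⟩
    have hdvd : p ^ 2 ∣ p * x.val ↔ p ∣ x.val := by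
      simp only [sq, Nat.mul_dvd_mul_iff_left hp.pos]
    rw [← ZMod.natCast_zmod_val x, ← Nat.cast_mul, Ne, ZMod.natCast_eq_zero_iff, hdvd]
    exact isUnit_natCast_zmod_iff (n := 1) hp

end PrimePower

/-! ### Chinese remainder coordinates -/

section Coordinates

variable {M P Q S : ℕ}

/-- A factorization `M = P Q S` into pairwise coprime factors. -/
structure IsCoprimeFactorization (M P Q S : ℕ) : Prop where
  coprime_PQ : P.Coprime Q
  coprime_PS : P.Coprime S
  coprime_QS : Q.Coprime S
  eq_mul : M = P * Q * S

theorem natCast_mul_eq_zero_iff {s : ℕ} [NeZero M] (φ : ZMod M →+* ZMod s) (k : ℕ) (d : ZMod M) :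
    (k : ZMod s) * φ d = 0 ↔ s ∣ k * d.val := by
  rw [ringHom_apply_eq_natCast_val, ← Nat.cast_mul, ZMod.natCast_eq_zero_iff]

theorem ringHom_eq_zero_iff {s : ℕ} [NeZero M] (φ : ZMod M →+* ZMod s) (d : ZMod M) :
    φ d = 0 ↔ s ∣ d.val := by
  simpa using natCast_mul_eq_zero_iff φ 1 d

theorem natCast_dvd_iff_dvd_val {N : ℕ} [NeZero M] (hN : N ∣ M) {d : ZMod M} :
    (N : ZMod M) ∣ d ↔ N ∣ d.val := by
  refine ⟨?_, fun ⟨k, hk⟩ => ⟨k, by rw [← Nat.cast_mul, ← hk, ZMod.natCast_zmod_val]⟩⟩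
  rintro ⟨k, rfl⟩
  rw [ZMod.val_mul, ZMod.val_natCast, Nat.dvd_mod_iff hN]
  exact ((Nat.dvd_mod_iff hN).2 dvd_rfl).mul_right _

namespace IsCoprimeFactorization

theorem dvd_P (F : IsCoprimeFactorization M P Q S) : P ∣ M :=
  F.eq_mul ▸ (dvd_mul_right P Q).mul_right S

theorem dvd_Q (F : IsCoprimeFactorization M P Q S) : Q ∣ M :=
  F.eq_mul ▸ (dvd_mul_left Q P).mul_right S

theorem dvd_S (F : IsCoprimeFactorization M P Q S) : S ∣ M := F.eq_mul ▸ dvd_mul_left S (P * Q)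

theorem dvd_iff (F : IsCoprimeFactorization M P Q S) (k : ℕ) : M ∣ k ↔ P ∣ k ∧ Q ∣ k ∧ S ∣ k := by
  rw [F.eq_mul, ← (F.coprime_PS.mul_left F.coprime_QS).lcm_eq_mul, Nat.lcm_dvd_iff,
    ← F.coprime_PQ.lcm_eq_mul, Nat.lcm_dvd_iff, and_assoc]

variable [NeZero M]

theorem dvd_mul_val_iff (F : IsCoprimeFactorization M P Q S) (f : ZMod M →+* ZMod P)
    (g : ZMod M →+* ZMod Q) (h : ZMod M →+* ZMod S) {s t k u v w : ℕ} (hst : s * t = M)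
    (hkt : k * t = u * v * w) (hu : u ∣ P) (hv : v ∣ Q) (hw : w ∣ S) (d : ZMod M) :
    s ∣ k * d.val ↔
      (u : ZMod P) * f d = 0 ∧ (v : ZMod Q) * g d = 0 ∧ (w : ZMod S) * h d = 0 := by
  have ht : 0 < t := Nat.pos_of_ne_zero fun h => NeZero.ne M (by rw [← hst, h, mul_zero])
  have hPv : P.Coprime v := F.coprime_PQ.coprime_dvd_right hv
  have hPw : P.Coprime w := F.coprime_PS.coprime_dvd_right hw
  have hQu : Q.Coprime u := F.coprime_PQ.symm.coprime_dvd_right hu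
  have hQw : Q.Coprime w := F.coprime_QS.coprime_dvd_right hw
  have hSu : S.Coprime u := F.coprime_PS.symm.coprime_dvd_right hu
  have hSv : S.Coprime v := F.coprime_QS.symm.coprime_dvd_right hv
  rw [natCast_mul_eq_zero_iff, natCast_mul_eq_zero_iff, natCast_mul_eq_zero_iff,
    ← Nat.mul_dvd_mul_iff_right ht, hst, mul_right_comm, hkt, F.dvd_iff]
  refine and_congr ?_ (and_congr ?_ ?_)
  · rw [show u * v * w * d.val = u * d.val * (v * w) by ring, (hPv.mul_right hPw).dvd_mul_right]
  · rw [show u * v * w * d.val = v * d.val * (u * w) by ring, (hQu.mul_right hQw).dvd_mul_right]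
  · rw [show u * v * w * d.val = w * d.val * (u * v) by ring, (hSu.mul_right hSv).dvd_mul_right]

theorem mem_gridSet_iff (F : IsCoprimeFactorization M P Q S) (f : ZMod M →+* ZMod P)
    (g : ZMod M →+* ZMod Q) (h : ZMod M →+* ZMod S) {u v w N : ℕ} (hN : N * (u * v * w) = M)
    (hu : u ∣ P) (hv : v ∣ Q) (hw : w ∣ S) {x y : ZMod M} :
    y ∈ gridSet M x N ↔ (u : ZMod P) * (f y - f x) = 0 ∧ (v : ZMod Q) * (g y - g x) = 0 ∧
      (w : ZMod S) * (h y - h x) = 0 := by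
  have hiff := F.dvd_mul_val_iff f g h hN (one_mul _) hu hv hw (y - x)
  rw [one_mul, map_sub, map_sub, map_sub] at hiff
  rw [← hiff]
  exact natCast_dvd_iff_dvd_val ⟨_, hN.symm⟩

theorem isCoordinateSystem (F : IsCoprimeFactorization M P Q S) (f : ZMod M →+* ZMod P)
    (g : ZMod M →+* ZMod Q) (h : ZMod M →+* ZMod S) : IsCoordinateSystem f g h := by
  have hM := NeZero.ne M
  rw [F.eq_mul] at hM
  have : NeZero P := ⟨left_ne_zero_of_mul (left_ne_zero_of_mul hM)⟩
  have : NeZero Q := ⟨right_ne_zero_of_mul (left_ne_zero_of_mul hM)⟩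
  have : NeZero S := ⟨right_ne_zero_of_mul hM⟩
  refine (Fintype.bijective_iff_injective_and_card _).2 ⟨?_, ?_⟩
  · refine (injective_iff_map_eq_zero (f.prod (g.prod h))).2 fun d hd => ?_
    simp only [RingHom.prod_apply, Prod.mk_eq_zero, ringHom_eq_zero_iff] at hd
    rw [← ZMod.val_eq_zero]
    exact Nat.eq_zero_of_dvd_of_lt ((F.dvd_iff _).2 hd) (ZMod.val_lt d)
  · simp only [ZMod.card, Fintype.card_prod]
    rw [F.eq_mul, mul_assoc]

end IsCoprimeFactorization

end Coordinates

section T2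

variable {M : ℕ}

theorem satisfiesT2_of_squarefree_card [NeZero M] {A : Finset (ZMod M)} (hA : Squarefree #A)
    {v : ℕ → ℕ} (hv : ∀ l ∈ M.primeFactors, 1 ≤ v l)
    (h : ∀ P ⊆ M.primeFactors, P.Nonempty → cycDvd M (∏ l ∈ P, l ^ v l) A) :
    SatisfiesT2 M A := by
  intro P e hP hPe
  have hPM : P ⊆ M.primeFactors := fun l hl => by
    obtain ⟨hprime, h1, hdvd, -⟩ := hPe l hl
    exact Nat.mem_primeFactors.2 ⟨hprime, (dvd_pow_self l (by lia)).trans hdvd, NeZero.ne M⟩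
  have heq : ∀ l ∈ P, l ^ e l = l ^ v l := by
    intro l hl
    obtain ⟨hprime, h1, -, hcyc⟩ := hPe l hl
    by_contra hne
    have hvl : cycDvd M (l ^ v l) A := by
      simpa using h {l} (Finset.singleton_subset_iff.2 (hPM hl)) (Finset.singleton_nonempty l)
    have hdvd : l ^ #{e l, v l} ∣ #A := pow_card_dvd_card_of_cycDvd hprime <| by
      simpa using ⟨⟨h1, hcyc⟩, hv l (hPM hl), hvl⟩
    rw [Finset.card_pair (fun h => hne (by rw [h])), sq] at hdvd
    exact hprime.not_isUnit (hA l hdvd)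
  rw [Finset.prod_congr rfl heq]
  exact h P hPM hP

variable {B : Finset (ZMod M)}

theorem pow_dvd_card_of_cycDvd {l e : ℕ} (hl : l.Prime) (hB : B.Nonempty)
    (h : ∀ e, 1 ≤ e → l ^ e ∣ #B → cycDvd M (l ^ e) B) (he : 1 ≤ e) (hcyc : cycDvd M (l ^ e) B) :
    l ^ e ∣ #B := by
  have hiff (e : ℕ) : l ^ e ∣ #B ↔ e ≤ (#B).factorization l :=
    hl.pow_dvd_iff_le_factorization hB.card_ne_zero
  by_contra hlt
  rw [hiff, not_le] at hlt
  have hdvd := pow_card_dvd_card_of_cycDvd hl (A := B)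
    (E := insert e (Finset.Icc 1 ((#B).factorization l))) fun e' he' => by
      rcases Finset.mem_insert.1 he' with rfl | he'
      · exact ⟨he, hcyc⟩
      · obtain ⟨h1, hle⟩ := Finset.mem_Icc.1 he'
        exact ⟨h1, h e' h1 ((hiff e').2 hle)⟩
  rw [Finset.card_insert_of_notMem (by simp [hlt]), Nat.card_Icc, Nat.add_sub_cancel, hiff] at hdvd
  exact Nat.not_succ_le_self _ hdvd

theorem satisfiesT2_of_forall_dvd_card (hB : B.Nonempty)
    (h : ∀ s, 1 < s → s ∣ #B → cycDvd M s B) : SatisfiesT2 M B := by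
  intro P e hP hPe
  have hdvd : ∏ l ∈ P, l ^ e l ∣ #B := by
    refine Finset.prod_dvd_of_isRelPrime (fun l hl l' hl' hne => ?_) fun l hl => ?_
    · exact Nat.coprime_iff_isRelPrime.1
        (((Nat.coprime_primes (hPe l hl).1 (hPe l' hl').1).2 hne).pow _ _)
    · obtain ⟨hprime, h1, -, hcyc⟩ := hPe l hl
      exact pow_dvd_card_of_cycDvd hprime hB
        (fun e' he' => h _ (Nat.one_lt_pow (by lia) hprime.one_lt)) h1 hcyc
  refine h _ ?_ hdvd
  obtain ⟨l, hl⟩ := hP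
  obtain ⟨hprime, h1, -, -⟩ := hPe l hl
  calc 1 < l ^ e l := Nat.one_lt_pow (by lia) hprime.one_lt
    _ ≤ ∏ l ∈ P, l ^ e l := Nat.le_of_dvd (Finset.prod_pos fun l hl => pow_pos (hPe l hl).1.pos _)
        (Finset.dvd_prod_of_mem _ hl)

end T2

section Residues

variable {M D : ℕ} [NeZero M] {B : Finset (ZMod M)}

theorem isTiling_gridSet_of_bijOn (hD : D ∣ M) (hB : Set.BijOn (ZMod.castHom hD (ZMod D)) B .univ)
    (x : ZMod M) : IsTiling M (gridSet M x D) B := by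
  have hmem (y : ZMod M) : y ∈ gridSet M x D ↔
      ZMod.castHom hD (ZMod D) y = ZMod.castHom hD (ZMod D) x := by
    rw [← sub_eq_zero, ← map_sub, ringHom_eq_zero_iff]
    exact natCast_dvd_iff_dvd_val hD
  intro z
  obtain ⟨b, hb, hbz⟩ := hB.surjOn (Set.mem_univ (ZMod.castHom hD (ZMod D) (z - x)))
  refine ⟨(z - b, b), ⟨(hmem _).2 ?_, hb, sub_add_cancel z b⟩, ?_⟩
  · rw [map_sub, hbz, map_sub, sub_sub_cancel]
  · rintro ⟨y, b'⟩ ⟨hy, hb', rfl⟩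
    obtain rfl : b' = b := by
      refine hB.injOn hb' hb ?_
      rw [hbz, map_sub, map_add, (hmem y).1 hy, add_sub_cancel_left]
    rw [add_sub_cancel_right]

theorem cycDvd_of_bijOn [NeZero D] (hD : D ∣ M)
    (hB : Set.BijOn (ZMod.castHom hD (ZMod D)) B .univ) {s : ℕ} (hs : 1 < s) (hsD : s ∣ D) :
    cycDvd M s B := by
  have hprim := Complex.isPrimitiveRoot_exp s (by lia)
  have hpow := (hprim.pow_eq_one_iff_dvd D).2 hsD
  rw [cycDvd_iff_sum_eq_zero (by lia) hprim, ← sum_univ_pow_val_eq_zero hpow (hprim.ne_one hs)]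
  refine Finset.sum_nbij (ZMod.castHom hD (ZMod D)) (fun _ _ => Finset.mem_univ _) hB.injOn ?_
    fun b _ => (pow_val_ringHom hpow _ b).symm
  rw [Finset.coe_univ]
  exact hB.surjOn

end Residues

section Cosets

variable {M s : ℕ} [NeZero M] {A B : Finset (ZMod M)}

/-- If `A` lies in one coset of `K` then it tiles the cosets of `K` separately, and the masks of
the parts of `B` inherit the divisibility properties of the mask of `B`. -/
theorem IsTiling.cycDvd_or_filter (hAB : IsTiling M (A : Set (ZMod M)) B) (hs : 0 < s)
    (hsM : s ∣ M) {K : AddSubgroup (ZMod M)} {a₀ : ZMod M} (hA : ∀ a ∈ A, a - a₀ ∈ K)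
    {w : ZMod M} (hw : w ∈ K) (hsw : ¬ s ∣ w.val) (b₀ : ZMod M)
    [DecidablePred fun b => b - b₀ ∈ K] :
    cycDvd M s A ∨ cycDvd M s {b ∈ B | b - b₀ ∈ K} := by
  classical
  have hprim := Complex.isPrimitiveRoot_exp s hs.ne'
  have hpow := (hprim.pow_eq_one_iff_dvd M).2 hsM
  rw [cycDvd_iff_sum_eq_zero hs hprim, cycDvd_iff_sum_eq_zero hs hprim, ← mul_eq_zero,
    hAB.sum_mul_sum_eq (V := {x | x - (a₀ + b₀) ∈ K}) subset_rfl (Finset.filter_subset _ _) ?_ hpow]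
  · refine sum_pow_val_eq_zero_of_translation_invariant hpow
      (mt (hprim.pow_eq_one_iff_dvd _).1 hsw) fun x => ?_
    simp only [Finset.mem_filter_univ, add_sub_right_comm x w, K.add_mem_cancel_right hw]
  · intro a ha b hb
    simp only [Finset.mem_filter, Finset.mem_univ, ha, hb, true_and]
    rw [add_sub_add_comm, K.add_mem_cancel_left (hA a ha)]

end Cosets

section PrimePowerOrder

variable {M p n : ℕ} [NeZero M]

theorem countWhere_sub_mul_eq_of_cycDvd_prime_pow (hp : p.Prime)
    (φ : ZMod M →+* ZMod (p ^ (n + 1))) {A : Finset (ZMod M)} (hA : cycDvd M (p ^ (n + 1)) A)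
    (x : ZMod (p ^ (n + 1))) (k : ℕ) :
    countWhere A (φ · = x - k * (p ^ n : ℕ)) = countWhere A (φ · = x) := by
  induction k with
  | zero => rw [Nat.cast_zero, zero_mul, sub_zero]
  | succ k ih =>
    rw [Nat.cast_succ, add_one_mul, sub_add_eq_sub_sub,
      countWhere_add_eq_of_cycDvd_prime_pow hp φ hA, ih]

theorem countWhere_ball_of_cycDvd_prime_pow (hp : p.Prime)
    (φ : ZMod M →+* ZMod (p ^ (n + 1))) {A : Finset (ZMod M)} (hA : cycDvd M (p ^ (n + 1)) A)
    (x : ZMod (p ^ (n + 1))) :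
    countWhere A (fun a => (p : ZMod (p ^ (n + 1))) * (φ a - x) = 0) =
      p * countWhere A (φ · = x) := by
  have : NeZero (p ^ (n + 1)) := ⟨pow_ne_zero _ hp.ne_zero⟩
  obtain ⟨T, hT, hmem⟩ := (primeLevel_zmod (n := n) hp).exists_finset_ball x
  have hconst (z) (hz : z ∈ T) : countWhere A (fun a => True ∧ φ a = z) =
      countWhere A (φ · = x) := by
    have hxz := natCast_mul_sub_comm.1 ((hmem z).1 hz)
    rw [← ZMod.natCast_zmod_val (x - z), ← Nat.cast_mul, ZMod.natCast_eq_zero_iff] at hxz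
    obtain ⟨k, hk⟩ : p ^ n ∣ (x - z).val :=
      Nat.dvd_of_mul_dvd_mul_left hp.pos (pow_succ' p n ▸ hxz)
    have hz : z = x - k * (p ^ n : ℕ) := by
      rw [← Nat.cast_mul, mul_comm, ← hk, ZMod.natCast_zmod_val, sub_sub_cancel]
    simp only [true_and, hz, countWhere_sub_mul_eq_of_cycDvd_prime_pow hp φ hA]
  have hsum := sum_countWhere_and_eq A (fun _ => True) φ T
  rw [Finset.sum_congr rfl hconst, Finset.sum_const, hT, smul_eq_mul] at hsum
  rw [hsum]
  simp only [true_and, hmem]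

end PrimePowerOrder

/-! ### The modulus `p^(n+1) q² r²` -/

section CornerModulus

variable {M p q r n : ℕ}

/-- The modulus `M = p^(n+1) q² r²` of the theorem. -/
structure IsCornerModulus (M p q r n : ℕ) : Prop where
  prime_p : p.Prime
  prime_q : q.Prime
  prime_r : r.Prime
  p_ne_q : p ≠ q
  p_ne_r : p ≠ r
  q_ne_r : q ≠ r
  eq_mul : M = p ^ (n + 1) * q ^ 2 * r ^ 2

namespace IsCornerModulus

theorem swap (H : IsCornerModulus M p q r n) : IsCornerModulus M p r q n where
  prime_p := H.prime_p
  prime_q := H.prime_r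
  prime_r := H.prime_q
  p_ne_q := H.p_ne_r
  p_ne_r := H.p_ne_q
  q_ne_r := H.q_ne_r.symm
  eq_mul := H.eq_mul.trans (mul_right_comm _ _ _)

theorem coprime_p_q (H : IsCornerModulus M p q r n) : p.Coprime q :=
  (Nat.coprime_primes H.prime_p H.prime_q).2 H.p_ne_q

theorem coprime_q_r (H : IsCornerModulus M p q r n) : q.Coprime r :=
  (Nat.coprime_primes H.prime_q H.prime_r).2 H.q_ne_r

theorem isCoprimeFactorization (H : IsCornerModulus M p q r n) :
    IsCoprimeFactorization M (p ^ (n + 1)) (q ^ 2) (r ^ 2) where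
  coprime_PQ := H.coprime_p_q.pow _ _
  coprime_PS := H.swap.coprime_p_q.pow _ _
  coprime_QS := H.coprime_q_r.pow _ _
  eq_mul := H.eq_mul

theorem neZero (H : IsCornerModulus M p q r n) : NeZero M :=
  ⟨H.eq_mul ▸ mul_ne_zero (mul_ne_zero (pow_ne_zero _ H.prime_p.ne_zero)
    (pow_ne_zero _ H.prime_q.ne_zero)) (pow_ne_zero _ H.prime_r.ne_zero)⟩

theorem not_pow_dvd (H : IsCornerModulus M p q r n) : ¬ p ^ (n + 1) ∣ p ^ n * q * r := by
  rw [pow_succ, mul_assoc, Nat.mul_dvd_mul_iff_left (pow_pos H.prime_p.pos n),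
    H.prime_p.dvd_mul, Nat.prime_dvd_prime_iff_eq H.prime_p H.prime_q,
    Nat.prime_dvd_prime_iff_eq H.prime_p H.prime_r]
  exact not_or_intro H.p_ne_q H.p_ne_r

theorem not_sq_dvd (H : IsCornerModulus M p q r n) : ¬ q ^ 2 ∣ p ^ n * q * r := by
  rw [mul_right_comm, sq, Nat.mul_dvd_mul_iff_right H.prime_q.pos, H.prime_q.dvd_mul,
    Nat.prime_dvd_prime_iff_eq H.prime_q H.prime_r]
  exact not_or_intro (fun h => H.p_ne_q
    ((Nat.prime_dvd_prime_iff_eq H.prime_q H.prime_p).1 (H.prime_q.dvd_of_dvd_pow h)).symm)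
    H.q_ne_r

theorem primeFactors_eq (H : IsCornerModulus M p q r n) : M.primeFactors = {p, q, r} := by
  have F := H.isCoprimeFactorization
  rw [F.eq_mul, (F.coprime_PS.mul_left F.coprime_QS).primeFactors_mul,
    F.coprime_PQ.primeFactors_mul, Nat.primeFactors_prime_pow n.succ_ne_zero H.prime_p,
    Nat.primeFactors_prime_pow two_ne_zero H.prime_q,
    Nat.primeFactors_prime_pow two_ne_zero H.prime_r, Finset.union_assoc]
  rfl

theorem pow_mul_mul_dvd (H : IsCornerModulus M p q r n) : p ^ n * q * r ∣ M := by
  rw [H.eq_mul, pow_succ, sq, sq]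
  exact mul_dvd_mul (mul_dvd_mul (dvd_mul_right _ _) (dvd_mul_right _ _)) (dvd_mul_right _ _)

variable [NeZero M] {A B : Finset (ZMod M)}

theorem card_right (H : IsCornerModulus M p q r n) (hAB : IsTiling M (A : Set (ZMod M)) B)
    (hA : #A = p * q * r) : #B = p ^ n * q * r := by
  have := hAB.card_mul_card
  have hpos : 0 < p * q * r :=
    Nat.mul_pos (Nat.mul_pos H.prime_p.pos H.prime_q.pos) H.prime_r.pos
  rw [hA] at this
  refine Nat.eq_of_mul_eq_mul_left hpos (this.trans (H.eq_mul.trans ?_))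
  ring

/-- Some `Φ_{p^(m+1)}` divides `A`, since otherwise `p^(n+1)` would divide `#B`; then each class
modulo `p^(m+1)` contains at most `#A / p` points of `A`. -/
theorem countWhere_slice_le (H : IsCornerModulus M p q r n)
    (hAB : IsTiling M (A : Set (ZMod M)) B) (hA : #A = p * q * r)
    (f : ZMod M →+* ZMod (p ^ (n + 1))) (i : ZMod (p ^ (n + 1))) :
    countWhere A (f · = i) ≤ q * r := by
  have hcyc : ∃ m ≤ n, cycDvd M (p ^ (m + 1)) A := by
    by_contra! hno
    have hB : ∀ e ∈ Finset.Icc 1 (n + 1), 1 ≤ e ∧ cycDvd M (p ^ e) B := by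
      intro e he
      obtain ⟨h1, hn⟩ := Finset.mem_Icc.1 he
      obtain ⟨m, rfl⟩ := Nat.exists_eq_add_of_le' h1
      exact ⟨h1, (hAB.cycDvd_or (Nat.one_lt_pow m.succ_ne_zero H.prime_p.one_lt)
        ((pow_dvd_pow p hn).trans H.isCoprimeFactorization.dvd_P)).resolve_left (hno m (by lia))⟩
    have := pow_card_dvd_card_of_cycDvd H.prime_p hB
    rw [Nat.card_Icc, Nat.add_sub_cancel, H.card_right hAB hA] at this
    exact H.not_pow_dvd this
  obtain ⟨m, hm, hcyc⟩ := hcyc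
  let ψ : ZMod (p ^ (n + 1)) →+* ZMod (p ^ (m + 1)) :=
    ZMod.castHom (pow_dvd_pow p (Nat.succ_le_succ hm)) _
  refine Nat.le_of_mul_le_mul_left ?_ H.prime_p.pos
  calc p * countWhere A (f · = i) ≤ p * countWhere A (ψ.comp f · = ψ i) :=
        Nat.mul_le_mul_left p (countWhere_le_countWhere fun a _ ha => congrArg ψ ha)
    _ = countWhere A _ := (countWhere_ball_of_cycDvd_prime_pow H.prime_p _ hcyc _).symm
    _ ≤ #A := countWhere_le_card _ _
    _ = p * (q * r) := hA.trans (mul_assoc _ _ _)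

variable (f : ZMod M →+* ZMod (p ^ (n + 1))) (g : ZMod M →+* ZMod (q ^ 2))
  (h : ZMod M →+* ZMod (r ^ 2))

theorem mem_gridSet_div_mul_iff (H : IsCornerModulus M p q r n) {x y : ZMod M} :
    y ∈ gridSet M x (M / (q * r)) ↔ f y = f x ∧ (q : ZMod (q ^ 2)) * (g y - g x) = 0 ∧
      (r : ZMod (r ^ 2)) * (h y - h x) = 0 := by
  have hdvd : 1 * q * r ∣ M := by
    rw [H.eq_mul, one_mul, mul_assoc, sq, sq]
    exact (mul_dvd_mul (dvd_mul_right q q) (dvd_mul_right r r)).mul_left _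
  have hiff := H.isCoprimeFactorization.mem_gridSet_iff f g h (x := x) (y := y)
    (Nat.div_mul_cancel hdvd) (one_dvd _) (dvd_pow_self q two_ne_zero) (dvd_pow_self r two_ne_zero)
  simpa only [Nat.cast_one, one_mul, sub_eq_zero (b := f x)] using hiff

theorem mem_gridSet_div_iff (H : IsCornerModulus M p q r n) {x y : ZMod M} :
    y ∈ gridSet M x (M / q) ↔ f y = f x ∧ (q : ZMod (q ^ 2)) * (g y - g x) = 0 ∧ h y = h x := by
  have hdvd : 1 * q * 1 ∣ M := by
    rw [H.eq_mul, one_mul, mul_one, sq]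
    exact ((dvd_mul_right q q).mul_left _).mul_right _
  have hiff := H.isCoprimeFactorization.mem_gridSet_iff f g h (x := x) (y := y)
    (Nat.div_mul_cancel hdvd) (one_dvd _) (dvd_pow_self q two_ne_zero) (one_dvd _)
  simpa only [Nat.cast_one, one_mul, mul_one, sub_eq_zero (b := f x), sub_eq_zero (b := h x)]
    using hiff

theorem fiberedFace (H : IsCornerModulus M p q r n) {a : ZMod M} (ha : a ∈ A)
    (hq : Fibered M q (A ∩ gridSet M a (M / (q * r))))
    (hr : ¬ Fibered M r (A ∩ gridSet M a (M / (q * r)))) :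
    FiberedFace f g h q r A (f a) (g a) (h a) := by
  have fibered : ∀ c ∈ A, f c = f a → g c = g a → (r : ZMod (r ^ 2)) * (h c - h a) = 0 →
      ∀ c', f c' = f a → (q : ZMod (q ^ 2)) * (g c' - g a) = 0 → h c' = h c → c' ∈ A := by
    intro c hc hfc hgc hhc c' hfc' hgc' hhc'
    refine (hq c ⟨hc, (H.mem_gridSet_div_mul_iff f g h).2 ⟨hfc, ?_, hhc⟩⟩
      ((H.mem_gridSet_div_iff f g h).2 ⟨hfc'.trans hfc.symm, ?_, hhc'⟩)).1
    · rw [hgc, sub_self, mul_zero]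
    · rwa [hgc]
  refine ⟨⟨a, ha, rfl, rfl, rfl⟩, fibered, ?_⟩
  simp only [Fibered, not_forall, Set.not_subset] at hr
  obtain ⟨s, ⟨-, hs⟩, c, hcs, hc⟩ := hr
  obtain ⟨hfs, hgs, hhs⟩ := (H.mem_gridSet_div_mul_iff f g h).1 hs
  obtain ⟨hfc, hhc, hgc⟩ := (H.swap.mem_gridSet_div_iff f h g).1 hcs
  have hga : (q : ZMod (q ^ 2)) * (g c - g a) = 0 := by rwa [hgc]
  have hha : (r : ZMod (r ^ 2)) * (h c - h a) = 0 := by linear_combination hhc + hhs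
  have hcA : c ∉ A := fun hcA =>
    hc ⟨hcA, (H.mem_gridSet_div_mul_iff f g h).2 ⟨hfc.trans hfs, hga, hha⟩⟩
  obtain ⟨x, hfx, hgx, hhx⟩ :=
    (H.isCoprimeFactorization.isCoordinateSystem f g h).exists_eq (f a) (g a) (h c)
  exact ⟨x, fun hx => hcA (fibered x hx hfx hgx (by rwa [hhx]) c (hfc.trans hfs) hga hhx.symm),
    hfx, hgx, by rwa [hhx]⟩

theorem isLow_and_eq_zero_of_gcd_eq (H : IsCornerModulus M p q r n) {d : ZMod M}
    (hd : d.val.gcd M = M / p) : IsLow p (f d) ∧ g d = 0 ∧ h d = 0 := by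
  have hpM : p ∣ M := by
    rw [H.eq_mul, pow_succ', mul_assoc, mul_assoc]
    exact dvd_mul_right _ _
  have hpM' : M / p * (p * 1 * 1) = M := by rw [mul_one, mul_one, Nat.div_mul_cancel hpM]
  have hdvd : M / p ∣ 1 * d.val := by
    rw [one_mul, ← hd]
    exact Nat.gcd_dvd_left _ _
  obtain ⟨hf, hg, hh⟩ := (H.isCoprimeFactorization.dvd_mul_val_iff f g h hpM' (one_mul _)
    (dvd_pow_self p n.succ_ne_zero) (one_dvd _) (one_dvd _) d).1 hdvd
  rw [Nat.cast_one, one_mul] at hg hh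
  refine ⟨⟨fun hf₀ => ?_, hf⟩, hg, hh⟩
  obtain rfl := (H.isCoprimeFactorization.isCoordinateSystem f g h).eq_zero hf₀ hg hh
  rw [ZMod.val_zero, Nat.gcd_zero_left] at hd
  exact (Nat.div_lt_self (NeZero.pos M) H.prime_p.one_lt).ne' hd

theorem exists_cornerTiling (H : IsCornerModulus M p q r n)
    (hAB : IsTiling M (A : Set (ZMod M)) B) (hA : #A = p * q * r) {Lam : Set (ZMod M)}
    (hcorner : ExtCorner M p q r A Lam) :
    ∃ i₀ i₁ y₀ z₀, CornerTiling f g h p q r A B i₀ i₁ y₀ z₀ := by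
  obtain ⟨a, ⟨ha, -⟩, a', ⟨ha', -⟩, hgcd, hq, hr, hr', hq'⟩ := hcorner
  obtain ⟨hlow, hg, hh⟩ := H.isLow_and_eq_zero_of_gcd_eq f g h hgcd
  rw [map_sub] at hlow hg hh
  rw [mul_comm q r] at hr' hq'
  refine ⟨f a, f a', g a, h a, ?_⟩
  exact {
    levelX := primeLevel_zmod H.prime_p
    levelY := squareLevel_zmod H.prime_q
    levelZ := squareLevel_zmod H.prime_r
    p_ne_q := H.p_ne_q
    p_ne_r := H.p_ne_r
    q_ne_r := H.q_ne_r
    coords := H.isCoprimeFactorization.isCoordinateSystem f g h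
    tiling := fun _ ht x => hAB.existsUnique_add_mul ht x
    slice_le := H.countWhere_slice_le hAB hA f
    isLow_sub := isLow_sub_comm.1 hlow
    face₀ := H.fiberedFace f g h ha hq hr
    face₁ := sub_eq_zero.1 hg ▸ sub_eq_zero.1 hh ▸ H.swap.fiberedFace f h g ha' hr' hq' }

section Conclusions

variable {f : ZMod M →+* ZMod (p ^ (n + 1))} {g : ZMod M →+* ZMod (q ^ 2)}
  {h : ZMod M →+* ZMod (r ^ 2)} {i₀ i₁ : ZMod (p ^ (n + 1))} {y₀ : ZMod (q ^ 2)}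
  {z₀ : ZMod (r ^ 2)}

theorem bijOn_castHom (H : IsCornerModulus M p q r n)
    (hAB : IsTiling M (A : Set (ZMod M)) B) (hA : #A = p * q * r)
    (C : CornerTiling f g h p q r A B i₀ i₁ y₀ z₀) :
    Set.BijOn (ZMod.castHom H.pow_mul_mul_dvd (ZMod (p ^ n * q * r))) B .univ := by
  have : NeZero (p ^ n * q * r) := ⟨ne_zero_of_dvd_ne_zero (NeZero.ne M) H.pow_mul_mul_dvd⟩
  have hinj : Set.InjOn (ZMod.castHom H.pow_mul_mul_dvd (ZMod (p ^ n * q * r))) B := by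
    intro b hb b' hb' hbb'
    rw [← sub_eq_zero, ← map_sub, ringHom_eq_zero_iff, ← one_mul (ZMod.val _),
      H.isCoprimeFactorization.dvd_mul_val_iff f g h (t := p * q * r) (by rw [H.eq_mul]; ring)
        (one_mul _) (dvd_pow_self p n.succ_ne_zero) (dvd_pow_self q two_ne_zero)
        (dvd_pow_self r two_ne_zero)] at hbb'
    exact C.eq_of_forall_low hb hb' hbb'.1 hbb'.2.1 hbb'.2.2
  refine ⟨fun _ _ => Set.mem_univ _, hinj, ?_⟩
  rw [← Finset.coe_univ]
  refine Finset.surjOn_of_injOn_of_card_le _ (fun _ _ => Finset.mem_univ _) hinj ?_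
  rw [Finset.card_univ, ZMod.card, H.card_right hAB hA]

theorem cycDvd_right_of_dvd (H : IsCornerModulus M p q r n)
    (hAB : IsTiling M (A : Set (ZMod M)) B) (hA : #A = p * q * r)
    (C : CornerTiling f g h p q r A B i₀ i₁ y₀ z₀) {s : ℕ} (hs : 1 < s) (hsB : s ∣ #B) :
    cycDvd M s B := by
  have : NeZero (p ^ n * q * r) := ⟨ne_zero_of_dvd_ne_zero (NeZero.ne M) H.pow_mul_mul_dvd⟩
  exact cycDvd_of_bijOn H.pow_mul_mul_dvd (H.bijOn_castHom hAB hA C) hs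
    (H.card_right hAB hA ▸ hsB)

theorem cycDvd_prime_pow (H : IsCornerModulus M p q r n)
    (hAB : IsTiling M (A : Set (ZMod M)) B) (hA : #A = p * q * r)
    (C : CornerTiling f g h p q r A B i₀ i₁ y₀ z₀) {l e : ℕ} (hl : l.Prime) (he : 1 ≤ e)
    (hM : l ^ e ∣ M) (hndvd : ¬ l ^ e ∣ p ^ n * q * r) : cycDvd M (l ^ e) A := by
  refine (hAB.cycDvd_or (Nat.one_lt_pow (by lia) hl.one_lt) hM).resolve_right fun hB => hndvd ?_
  rw [← H.card_right hAB hA]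
  obtain ⟨b, hb⟩ := C.tiling.exists_mem_right
  exact pow_dvd_card_of_cycDvd hl ⟨b, hb⟩ (fun e' he' => H.cycDvd_right_of_dvd hAB hA C
    (Nat.one_lt_pow (by lia) hl.one_lt)) he hB

theorem cycDvd_p (H : IsCornerModulus M p q r n)
    (hAB : IsTiling M (A : Set (ZMod M)) B) (hA : #A = p * q * r)
    (C : CornerTiling f g h p q r A B i₀ i₁ y₀ z₀) : cycDvd M (p ^ (n + 1)) A :=
  H.cycDvd_prime_pow hAB hA C H.prime_p n.succ_pos
    H.isCoprimeFactorization.dvd_P H.not_pow_dvd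

theorem cycDvd_q (H : IsCornerModulus M p q r n)
    (hAB : IsTiling M (A : Set (ZMod M)) B) (hA : #A = p * q * r)
    (C : CornerTiling f g h p q r A B i₀ i₁ y₀ z₀) : cycDvd M (q ^ 2) A :=
  H.cycDvd_prime_pow hAB hA C H.prime_q one_le_two
    H.isCoprimeFactorization.dvd_Q H.not_sq_dvd

theorem cycDvd_pq (H : IsCornerModulus M p q r n) (hAB : IsTiling M (A : Set (ZMod M)) B)
    (C : CornerTiling f g h p q r A B i₀ i₁ y₀ z₀) : cycDvd M (p ^ (n + 1) * q ^ 2) A := by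
  have hM : p ^ (n + 1) * q ^ 2 * r ^ 2 = M := H.eq_mul.symm
  have hs : 1 < p ^ (n + 1) * q ^ 2 := one_lt_mul_of_lt_of_le
    (Nat.one_lt_pow n.succ_ne_zero H.prime_p.one_lt) (Nat.pow_pos H.prime_q.pos)
  have hR : p ^ (n + 1) * q ^ 2 ∣ (p * q) ^ (n + 2) := by
    rw [mul_pow]
    exact mul_dvd_mul (pow_dvd_pow p (by lia)) (pow_dvd_pow q (by lia))
  obtain ⟨b₀, hb₀⟩ := C.tiling.exists_mem_right
  refine (hAB.cycDvd_or hs ⟨_, hM.symm⟩).resolve_right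
    (not_cycDvd_of_isolated ⟨_, hM.symm⟩ hR hb₀ fun b hb hdvd => ?_)
  rw [H.isCoprimeFactorization.dvd_mul_val_iff f g h hM rfl (dvd_pow_self p n.succ_ne_zero)
    (dvd_pow_self q two_ne_zero) dvd_rfl] at hdvd
  obtain ⟨hf, hg⟩ := C.swap.eq_zero_of_low hb₀ hb hdvd.1 hdvd.2.1
  rw [ringHom_eq_zero_iff] at hf hg
  exact H.isCoprimeFactorization.coprime_PQ.mul_dvd_of_dvd_of_dvd hf hg

theorem cycDvd_pqr (H : IsCornerModulus M p q r n) (hAB : IsTiling M (A : Set (ZMod M)) B)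
    (C : CornerTiling f g h p q r A B i₀ i₁ y₀ z₀) :
    cycDvd M (p ^ (n + 1) * q ^ 2 * r ^ 2) A := by
  have hM : p ^ (n + 1) * q ^ 2 * r ^ 2 * 1 = M := (mul_one _).trans H.eq_mul.symm
  have hs : 1 < p ^ (n + 1) * q ^ 2 * r ^ 2 := one_lt_mul_of_lt_of_le (one_lt_mul_of_lt_of_le
    (Nat.one_lt_pow n.succ_ne_zero H.prime_p.one_lt) (Nat.pow_pos H.prime_q.pos))
    (Nat.pow_pos H.prime_r.pos)
  have hR : p ^ (n + 1) * q ^ 2 * r ^ 2 ∣ (p * q * r) ^ (n + 2) := by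
    rw [mul_pow, mul_pow]
    exact mul_dvd_mul (mul_dvd_mul (pow_dvd_pow p (by lia)) (pow_dvd_pow q (by lia)))
      (pow_dvd_pow r (by lia))
  obtain ⟨b₀, hb₀⟩ := C.tiling.exists_mem_right
  refine (hAB.cycDvd_or hs ⟨_, hM.symm⟩).resolve_right
    (not_cycDvd_of_isolated ⟨_, hM.symm⟩ hR hb₀ fun b hb hdvd => ?_)
  rw [H.isCoprimeFactorization.dvd_mul_val_iff f g h hM (mul_one _)
    (dvd_pow_self p n.succ_ne_zero) (dvd_pow_self q two_ne_zero)
    (dvd_pow_self r two_ne_zero)] at hdvd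
  rw [C.eq_of_forall_low hb hb₀ hdvd.1 hdvd.2.1 hdvd.2.2, sub_self, ZMod.val_zero]
  exact dvd_zero _

theorem mul_sub_eq_zero_of_mem (H : IsCornerModulus M p q r n)
    (hAB : IsTiling M (A : Set (ZMod M)) B) (hA : #A = p * q * r)
    (C : CornerTiling f g h p q r A B i₀ i₁ y₀ z₀) {a : ZMod M} (ha : a ∈ A) :
    (p : ZMod (p ^ (n + 1))) * (f a - i₀) = 0 := by
  have hball := countWhere_ball_of_cycDvd_prime_pow H.prime_p f (H.cycDvd_p hAB hA C) i₀
  obtain ⟨b₀, hb₀⟩ := C.tiling.exists_mem_right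
  rw [C.countWhere_slice ⟨b₀, hb₀⟩, ← mul_assoc, ← hA, countWhere_eq_card_filter,
    Finset.card_filter_eq_iff] at hball
  exact hball a ha

theorem cycDvd_qr (H : IsCornerModulus M p q r n) (hAB : IsTiling M (A : Set (ZMod M)) B)
    (hA : #A = p * q * r) (C : CornerTiling f g h p q r A B i₀ i₁ y₀ z₀) :
    cycDvd M (q ^ 2 * r ^ 2) A := by
  classical
  have hM : q ^ 2 * r ^ 2 * p ^ (n + 1) = M := by rw [H.eq_mul]; ring
  have hR : q ^ 2 * r ^ 2 ∣ (q * r) ^ 2 := (mul_pow q r 2).symm.dvd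
  let K : AddSubgroup (ZMod M) :=
    ((AddMonoidHom.mulLeft (p : ZMod (p ^ (n + 1)))).comp f.toAddMonoidHom).ker
  have hK (d : ZMod M) : d ∈ K ↔ (p : ZMod (p ^ (n + 1))) * f d = 0 := Iff.rfl
  obtain ⟨a₀, ha₀, -, -⟩ := C.coords.exists_eq i₀ 0 0
  obtain ⟨b₀, hb₀⟩ := C.tiling.exists_mem_right
  have hAK : ∀ a ∈ A, a - a₀ ∈ K := fun a ha => by
    rw [hK, map_sub, ha₀]
    exact H.mul_sub_eq_zero_of_mem hAB hA C ha
  obtain ⟨w, hfw, hgw, -⟩ := C.coords.exists_eq 0 1 0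
  have hw : w ∈ K := by rw [hK, hfw, mul_zero]
  have hqw : ¬ q ^ 2 * r ^ 2 ∣ w.val := by
    have : Fact (1 < q ^ 2) := ⟨Nat.one_lt_pow two_ne_zero H.prime_q.one_lt⟩
    refine fun hdvd => one_ne_zero (hgw.symm.trans ?_)
    exact (ringHom_eq_zero_iff g w).2 (dvd_of_mul_right_dvd hdvd)
  refine (hAB.cycDvd_or_filter (Nat.mul_pos (Nat.pow_pos H.prime_q.pos) (Nat.pow_pos H.prime_r.pos))
    ⟨_, hM.symm⟩ hAK hw hqw b₀).resolve_right (not_cycDvd_of_isolated (b₀ := b₀) ⟨_, hM.symm⟩ hR ?_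
      fun b hb hdvd => ?_)
  · exact Finset.mem_filter.2 ⟨hb₀, by rw [sub_self]; exact K.zero_mem⟩
  · obtain ⟨hb, hbK⟩ := Finset.mem_filter.1 hb
    rw [H.isCoprimeFactorization.dvd_mul_val_iff f g h hM (by ring) dvd_rfl
      (dvd_pow_self q two_ne_zero) (dvd_pow_self r two_ne_zero)] at hdvd
    rw [C.eq_of_forall_low hb hb₀ hbK hdvd.2.1 hdvd.2.2, sub_self, ZMod.val_zero]
    exact dvd_zero _

theorem satisfiesT2_left (H : IsCornerModulus M p q r n)
    (hAB : IsTiling M (A : Set (ZMod M)) B) (hA : #A = p * q * r)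
    (C : CornerTiling f g h p q r A B i₀ i₁ y₀ z₀) : SatisfiesT2 M A := by
  have hsq : Squarefree #A := by
    rw [hA, Nat.squarefree_mul_iff, Nat.squarefree_mul_iff]
    exact ⟨.mul_left H.swap.coprime_p_q H.coprime_q_r, ⟨H.coprime_p_q, H.prime_p.squarefree,
      H.prime_q.squarefree⟩, H.prime_r.squarefree⟩
  refine satisfiesT2_of_squarefree_card hsq (v := fun l => if l = p then n + 1 else 2)
    (fun l _ => by split_ifs <;> lia) fun P hP hne => ?_
  have hsubsets : P = {r} ∨ P = {q} ∨ P = {q, r} ∨ P = {p} ∨ P = {p, r} ∨ P = {p, q} ∨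
      P = {p, q, r} := by
    rw [H.primeFactors_eq, ← Finset.mem_powerset] at hP
    simpa [Finset.powerset_insert, hne.ne_empty, or_and_right, exists_or, or_assoc,
      eq_comm (b := P)] using hP
  have hA' : #A = p * r * q := hA.trans (mul_right_comm p q r)
  have hpq := H.p_ne_q
  have hpr := H.p_ne_r
  have hqr := H.q_ne_r
  rcases hsubsets with rfl | rfl | rfl | rfl | rfl | rfl | rfl
  · simpa [hpr.symm] using H.swap.cycDvd_q hAB hA' C.swap
  · simpa [hpq.symm] using H.cycDvd_q hAB hA C
  · simpa [hqr, hpq.symm, hpr.symm] using H.cycDvd_qr hAB hA C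
  · simpa using H.cycDvd_p hAB hA C
  · simpa [hpr, hpr.symm] using H.swap.cycDvd_pq hAB C.swap
  · simpa [hpq, hpq.symm] using H.cycDvd_pq hAB C
  · simpa [hpq, hpr, hqr, hpq.symm, hpr.symm, mul_assoc] using H.cycDvd_pqr hAB C

end Conclusions

end IsCornerModulus

end CornerModulus

theorem statement15_general {M p q r n : ℕ} (H : IsCornerModulus M p q r n)
    {A B : Finset (ZMod M)} (hAB : IsTiling M (A : Set (ZMod M)) (B : Set (ZMod M)))
    (hA : #A = p * q * r) {Lam : Set (ZMod M)} (hcorner : ExtCorner M p q r A Lam) :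
    (∀ x, IsTiling M (gridSet M x (p ^ n * q * r)) (B : Set (ZMod M))) ∧
      SatisfiesT2 M A ∧ SatisfiesT2 M B := by
  have : NeZero M := H.neZero
  have F := H.isCoprimeFactorization
  obtain ⟨_, _, _, _, C⟩ := H.exists_cornerTiling (ZMod.castHom F.dvd_P _)
    (ZMod.castHom F.dvd_Q _) (ZMod.castHom F.dvd_S _) hAB hA hcorner
  obtain ⟨b, hb⟩ := C.tiling.exists_mem_right
  exact ⟨isTiling_gridSet_of_bijOn H.pow_mul_mul_dvd (H.bijOn_castHom hAB hA C),
    H.satisfiesT2_left hAB hA C,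
    satisfiesT2_of_forall_dvd_card ⟨b, hb⟩ fun _ => H.cycDvd_right_of_dvd hAB hA C⟩

/-- **Extended corner theorem.** Let `M = p_i^{n_i} p_j² p_k²` with `n_i ≥ 2`,
`A ⊕ B = ℤ_M`, `|A| = p_i p_j p_k`, `Φ_M | A`, and suppose `A ∩ Λ` contains a `p_i` extended
corner for some `D(M)`-grid `Λ`. Then `Λ ⊕ B = ℤ_M` is also a tiling and both `A`, `B`
satisfy (T2). -/
theorem statement15
    (pi pj pk : ℕ) (hpi : pi.Prime) (hpj : pj.Prime) (hpk : pk.Prime)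
    (hij : pi ≠ pj) (hik : pi ≠ pk) (hjk : pj ≠ pk)
    (ni : ℕ) (hni : 2 ≤ ni)
    (M : ℕ) (hM : M = pi ^ ni * pj ^ 2 * pk ^ 2)
    (A B : Finset (ZMod M))
    (htile : IsTiling M (A : Set (ZMod M)) (B : Set (ZMod M)))
    (hcardA : A.card = pi * pj * pk)
    (hPhiM : cycDvd M M A)
    (x0 : ZMod M) (D : ℕ) (hD : D = pi ^ (ni - 1) * pj * pk)
    (hcorner : ExtCorner M pi pj pk (A : Set (ZMod M)) (gridSet M x0 D)) :
    IsTiling M (gridSet M x0 D) (B : Set (ZMod M)) ∧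
      SatisfiesT2 M A ∧ SatisfiesT2 M B := by
  obtain ⟨n, rfl⟩ := Nat.exists_eq_add_of_le' (one_le_two.trans hni)
  obtain ⟨hgrid, hT2⟩ := statement15_general ⟨hpi, hpj, hpk, hij, hik, hjk, hM⟩ htile hcardA hcorner
  exact ⟨hD ▸ hgrid x0, hT2⟩
end

section
/- Let M = p_i^{n_i} p_j^{n_j} p_k^{n_k} with p_i, p_j, p_k distinct primes and n_j ≥ 2, and let A ⊆ ℤ_M. Suppose there exist a, a_i ∈ A with (a − a_i, M) = M/p_i such that a∗F_j ⊆ A, a_i∗F_k ⊆ A, and a∗F_k is not contained in A, and suppose both Φ_M and Φ_{M/p_j} divide A. Then: (i) for every a_k ∈ A with (a_k − a_i, M) = M/p_k such that no a′ ∈ A ∩ ℓ_k(a) satisfies (a_k − a′, M) = M/p_i, one has A_{M/p_j^2}[a] + A_{M/p_j^2}[a_k] ≥ φ(p_j^2); (ii) both M/p_j^2 and M/(p_i p_j^2 p_k) belong to Div(A); moreover, if A_{M/p_j^2}[a] > 0 then M/(p_i p_j^2) ∈ Div(A), and if A_{M/p_j^2}[a] < φ(p_j^2) then M/(p_j^2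 p_k) ∈ Div(A). Here φ denotes Euler's totient, so φ(p_j^2) = p_j(p_j−1). -/
open Polynomial

/-- `A_m[x] = #{a ∈ A : (x - a, M) = m}`. -/
def boxCount (M : ℕ) (A : Finset (ZMod M)) (x : ZMod M) (m : ℕ) : ℕ :=
  (A.filter fun a => Nat.gcd (x - a).val M = m).card

/-!
For `d ∣ M`, the condition `(x, M) = M / d` says that `x` has additive order `d`.

The Fourier coefficient at `k` of the indicator function `f` of `A` is `A(ζ)`, where `ζ` is a root
of unity of the same order as `k`. If the shifts `u`, `v`, `w` have orders `p_i`, `p_j ^ m`, `p_k`,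
then `Δ_[u] Δ_[v] Δ_[w]` kills all frequencies except those of order `M / p_j ^ e` with `e < m`,
where the coefficient of `f` vanishes because `Φ_{M / p_j ^ e} ∣ A`. So the alternating sum of `f`
over the vertices of every cuboid with edges `u`, `v`, `w` is zero.

Consider the face `ai`, `a = ai + u`, `ak = ai + w`, `ai + u + w`, of which only the last vertex is
outside `A`, so that its alternating sum is `-1`. The opposite face, translated by `v`, has the same
sum, whence `a + v ∈ A` or `ak + v ∈ A`. Counting the `φ(p_j ^ m)` shifts `v` of order `p_j ^ m`
gives the inequality, and the divisors are read off from the orders of `v`, `a + v - ai`,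
`a + v - ak`, `ak + v - a` and `ak + v - ai`.
-/

open scoped Finset ZMod fwdDiff

section Fourier

variable {M : ℕ} [NeZero M]

lemma dft_fwdDiff (f : ZMod M → ℂ) (u k : ZMod M) :
    𝓕 (Δ_[u] f) k = (ZMod.stdAddChar (u * k) - 1) * 𝓕 f k := by
  have shift : ∑ j, ZMod.stdAddChar (-(j * k)) * f (j + u) =
      ZMod.stdAddChar (u * k) * ∑ j, ZMod.stdAddChar (-(j * k)) * f j := by
    rw [← Equiv.sum_comp (Equiv.addRight u) fun j ↦ ZMod.stdAddChar (-(j * k)) * f j,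
      Finset.mul_sum]
    refine Finset.sum_congr rfl fun j _ ↦ ?_
    rw [Equiv.coe_addRight, ← mul_assoc, ← AddChar.map_add_eq_mul]
    ring_nf
  simp only [ZMod.dft_apply, fwdDiff, smul_eq_mul, mul_sub, Finset.sum_sub_distrib, shift]
  ring

lemma fwdDiff_fwdDiff_fwdDiff_eq_zero {f : ZMod M → ℂ} {u v w : ZMod M}
    (hf : ∀ k, u * k ≠ 0 → v * k ≠ 0 → w * k ≠ 0 → 𝓕 f k = 0) :
    Δ_[u] (Δ_[v] (Δ_[w] f)) = 0 := by
  refine ZMod.dft.map_eq_zero_iff.mp (funext fun k ↦ ?_)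
  simp only [dft_fwdDiff, Pi.zero_apply, mul_eq_zero, sub_eq_zero]
  have char_eq_one {x : ZMod M} (hx : x * k = 0) : ZMod.stdAddChar (x * k) = (1 : ℂ) := by
    rw [hx, AddChar.map_zero_eq_one]
  by_cases hu : u * k = 0
  · exact .inl (char_eq_one hu)
  by_cases hv : v * k = 0
  · exact .inr (.inl (char_eq_one hv))
  by_cases hw : w * k = 0
  · exact .inr (.inr (.inl (char_eq_one hw)))
  exact .inr (.inr (.inr (hf k hu hv hw)))

lemma isPrimitiveRoot_stdAddChar (k : ZMod M) :
    IsPrimitiveRoot (ZMod.stdAddChar k) (addOrderOf k) := by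
  have := orderOf_injective ZMod.stdAddChar.toMonoidHom ZMod.injective_stdAddChar
    (Multiplicative.ofAdd k)
  rw [orderOf_ofAdd_eq_addOrderOf] at this
  exact this ▸ IsPrimitiveRoot.orderOf _

lemma aeval_maskPoly_stdAddChar (A : Finset (ZMod M)) (k : ZMod M) :
    aeval (ZMod.stdAddChar (-k)) (maskPoly M A) = 𝓕 ((A : Set (ZMod M)).indicator 1) k := by
  classical
  simp only [maskPoly, map_sum, map_pow, aeval_X, ZMod.dft_apply, smul_eq_mul, Set.indicator_apply,
    Finset.mem_coe, Pi.one_apply, mul_ite, mul_one, mul_zero, Finset.sum_ite_mem, Finset.univ_inter]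
  refine Finset.sum_congr rfl fun a _ ↦ ?_
  rw [← AddChar.map_nsmul_eq_pow, nsmul_eq_mul, ZMod.natCast_zmod_val, mul_neg]

lemma dft_indicator_eq_zero_of_cycDvd {A : Finset (ZMod M)} {k : ZMod M}
    (h : cycDvd M (addOrderOf k) A) : 𝓕 ((A : Set (ZMod M)).indicator 1) k = (0 : ℂ) := by
  have hprim : IsPrimitiveRoot (ZMod.stdAddChar (-k)) (addOrderOf k) :=
    addOrderOf_neg k ▸ isPrimitiveRoot_stdAddChar (-k)
  have hroot : aeval (ZMod.stdAddChar (-k)) (cyclotomic (addOrderOf k) ℤ) = 0 := by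
    rw [aeval_def, eval₂_eq_eval_map, map_cyclotomic]
    exact hprim.isRoot_cyclotomic (addOrderOf_pos k)
  rw [← aeval_maskPoly_stdAddChar]
  exact aeval_eq_zero_of_dvd_aeval_eq_zero h hroot

end Fourier

section Order

variable {M : ℕ} [NeZero M]

lemma addOrderOf_eq_div_gcd_val (x : ZMod M) : addOrderOf x = M / x.val.gcd M := by
  rw [Nat.gcd_comm, ← ZMod.addOrderOf_coe _ (NeZero.ne M), ZMod.natCast_zmod_val]

lemma gcd_val_eq_div_iff {d : ℕ} (hd : d ∣ M) (x : ZMod M) :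
    x.val.gcd M = M / d ↔ addOrderOf x = d := by
  rw [addOrderOf_eq_div_gcd_val]
  constructor <;> intro h
  · rw [h, Nat.div_div_self hd (NeZero.ne M)]
  · rw [← h, Nat.div_div_self (Nat.gcd_dvd_right _ _) (NeZero.ne M)]

lemma mem_gridSet_div_iff {d : ℕ} (hd : d ∣ M) (x y : ZMod M) :
    y ∈ gridSet M x (M / d) ↔ addOrderOf (y - x) ∣ d := by
  rw [gridSet, Set.mem_ofPred_eq, addOrderOf_dvd_iff_nsmul_eq_zero, nsmul_eq_mul]
  constructor
  · rintro ⟨c, hc⟩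
    rw [hc, ← mul_assoc, ← Nat.cast_mul, Nat.mul_div_cancel' hd, ZMod.natCast_self, zero_mul]
  · intro h
    rw [← ZMod.natCast_zmod_val (y - x), ← Nat.cast_mul, ZMod.natCast_eq_zero_iff] at h
    rw [← ZMod.natCast_zmod_val (y - x)]
    exact Nat.cast_dvd_cast ((Nat.div_dvd_iff_dvd_mul hd (Nat.pos_of_dvd_of_pos hd
      (NeZero.pos M))).mpr h)

lemma addOrderOf_sub_eq_of_mem_gridSet {p : ℕ} (hp : p.Prime) (hpM : p ∣ M) {x y : ZMod M}
    (hy : y ∈ gridSet M x (M / p)) (hyx : y ≠ x) : addOrderOf (y - x) = p :=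
  (hp.eq_one_or_self_of_dvd _ ((mem_gridSet_div_iff hpM x y).mp hy)).resolve_left fun h ↦
    hyx (sub_eq_zero.mp (AddMonoid.addOrderOf_eq_one_iff.mp h))

lemma not_dvd_val_of_mul_ne_zero {n : ℕ} {u k : ZMod M} (hu : n • u = 0) (huk : u * k ≠ 0) :
    ¬n ∣ k.val := by
  rintro ⟨c, hc⟩
  apply huk
  rw [← ZMod.natCast_zmod_val k, hc, Nat.cast_mul, ← mul_assoc, mul_comm u, ← nsmul_eq_mul, hu,
    zero_mul]

end Order

lemma exists_gcd_eq_pow {p q r : ℕ} (hp : p.Prime) (hq : q.Prime) (hr : r.Prime) {a b c m n : ℕ}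
    (hpn : ¬p ∣ n) (hqn : ¬q ^ m ∣ n) (hrn : ¬r ∣ n) :
    ∃ e < m, n.gcd (p ^ a * q ^ b * r ^ c) = q ^ e := by
  have hpc : (p ^ a).Coprime n := (hp.coprime_iff_not_dvd.mpr hpn).pow_left a
  have hrc : (r ^ c).Coprime n := (hr.coprime_iff_not_dvd.mpr hrn).pow_left c
  rw [Nat.Coprime.gcd_mul_right_cancel_right _ hrc,
    Nat.Coprime.gcd_mul_left_cancel_right _ hpc]
  obtain ⟨e, -, he⟩ := (Nat.dvd_prime_pow hq).mp (n.gcd_dvd_right (q ^ b))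
  refine ⟨e, ?_, he⟩
  by_contra! hme
  exact hqn ((pow_dvd_pow q hme).trans (he ▸ n.gcd_dvd_left (q ^ b)))

lemma fwdDiff_indicator_eq_zero_of_cycDvd {M : ℕ} [NeZero M] {A : Finset (ZMod M)}
    {p q r a b c m : ℕ} (hp : p.Prime) (hq : q.Prime) (hr : r.Prime)
    (hM : M = p ^ a * q ^ b * r ^ c) (hΦ : ∀ e < m, cycDvd M (M / q ^ e) A)
    {u v w : ZMod M} (hu : p • u = 0) (hv : q ^ m • v = 0) (hw : r • w = 0) :
    Δ_[u] (Δ_[v] (Δ_[w] ((A : Set (ZMod M)).indicator (1 : ZMod M → ℂ)))) = 0 := by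
  refine fwdDiff_fwdDiff_fwdDiff_eq_zero fun k huk hvk hwk ↦ dft_indicator_eq_zero_of_cycDvd ?_
  obtain ⟨e, hem, he⟩ := exists_gcd_eq_pow (a := a) (b := b) (c := c) hp hq hr
    (not_dvd_val_of_mul_ne_zero hu huk) (not_dvd_val_of_mul_ne_zero hv hvk)
    (not_dvd_val_of_mul_ne_zero hw hwk)
  rw [addOrderOf_eq_div_gcd_val, show k.val.gcd M = q ^ e from hM ▸ he]
  exact hΦ e hem

lemma mem_or_mem_of_fwdDiff_indicator_eq_zero {G R : Type*} [AddCommGroup G] [Ring R]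
    [CharZero R] {S : Set G} {u v w x : G}
    (h : Δ_[u] (Δ_[v] (Δ_[w] (S.indicator (1 : G → R)))) x = 0)
    (hx : x ∈ S) (hxu : x + u ∈ S) (hxw : x + w ∈ S) (hxuw : x + u + w ∉ S) :
    x + u + v ∈ S ∨ x + w + v ∈ S := by
  classical
  by_contra! hv
  rw [add_right_comm x w v] at hv
  simp only [fwdDiff, Set.indicator_apply, Pi.one_apply, hx, hxu, hxw, hxuw, hv, if_true,
    if_false] at h
  split_ifs at h <;> norm_num at h

section Count

variable {M : ℕ} [NeZero M] {A : Finset (ZMod M)} {d q : ℕ} {x y : ZMod M}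

lemma boxCount_div (hq : q ∣ M) :
    boxCount M A x (M / q) = #{v : ZMod M | addOrderOf v = q ∧ x + v ∈ A} := by
  have gcd_val_iff (b : ZMod M) : (x - b).val.gcd M = M / q ↔ addOrderOf (b - x) = q := by
    rw [gcd_val_eq_div_iff hq, ← neg_sub, addOrderOf_neg]
  refine Finset.card_bij' (fun b _ ↦ b - x) (fun v _ ↦ x + v) ?_ ?_ ?_ ?_
  all_goals simp +contextual [gcd_val_iff]

lemma totient_le_boxCount_add_boxCount (hq : q ∣ M)
    (h : ∀ v, addOrderOf v = q → x + v ∈ A ∨ y + v ∈ A) :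
    q.totient ≤ boxCount M A x (M / q) + boxCount M A y (M / q) := by
  have hcard : #{v : ZMod M | addOrderOf v = q} = q.totient :=
    IsAddCyclic.card_addOrderOf_eq_totient (by rwa [ZMod.card])
  rw [← hcard, boxCount_div hq, boxCount_div hq]
  refine (Finset.card_le_card fun v hv ↦ ?_).trans (Finset.card_union_le _ _)
  have hv : addOrderOf v = q := by simpa using hv
  simpa [hv] using h v hv

lemma div_mul_mem_divSet (hdq : d * q ∣ M) (hcop : d.Coprime q) (hy : y ∈ A)
    (hxy : addOrderOf (x - y) = d) (hpos : 0 < boxCount M A x (M / q)) :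
    M / (d * q) ∈ DivSet M M (A : Set (ZMod M)) := by
  rw [boxCount_div (dvd_of_mul_left_dvd hdq), Finset.card_pos] at hpos
  obtain ⟨v, hv⟩ := hpos
  obtain ⟨hv, hxv⟩ : addOrderOf v = q ∧ x + v ∈ A := by simpa using hv
  refine ⟨x + v, hxv, y, hy, (gcd_val_eq_div_iff hdq _).mpr ?_⟩
  subst hxy hv
  rw [add_sub_right_comm, (AddCommute.all _ _).addOrderOf_add_eq_mul_addOrderOf_of_coprime hcop]

lemma mem_divSet_of_totient_le {p r : ℕ} {z : ZMod M} (hpqr : p * q * r ∣ M) (hpq : p.Coprime q)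
    (hrq : r.Coprime q) (hpr : p.Coprime r) (hx : x ∈ A) (hy : y ∈ A) (hz : z ∈ A)
    (hxz : addOrderOf (x - z) = p) (hyz : addOrderOf (y - z) = r)
    (h : q.totient ≤ boxCount M A x (M / q) + boxCount M A y (M / q)) :
    M / q ∈ DivSet M M (A : Set (ZMod M)) ∧
    M / (p * q * r) ∈ DivSet M M (A : Set (ZMod M)) ∧
    (0 < boxCount M A x (M / q) → M / (p * q) ∈ DivSet M M (A : Set (ZMod M))) ∧
    (boxCount M A x (M / q) < q.totient → M / (q * r) ∈ DivSet M M (A : Set (ZMod M))) := by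
  have hpq_dvd : p * q ∣ M := dvd_of_mul_right_dvd hpqr
  have hq_dvd : q ∣ M := dvd_of_mul_left_dvd hpq_dvd
  have hrq_dvd : r * q ∣ M := by
    rw [mul_assoc, mul_comm q] at hpqr
    exact dvd_of_mul_left_dvd hpqr
  have hxy : addOrderOf (x - y) = p * r := by
    have hzy : addOrderOf (z - y) = r := by rw [← neg_sub, addOrderOf_neg, hyz]
    rw [← sub_add_sub_cancel x z y, (AddCommute.all _ _).addOrderOf_add_eq_mul_addOrderOf_of_coprime
      (by rwa [hxz, hzy]), hxz, hzy]
  have hpos : 0 < boxCount M A x (M / q) ∨ 0 < boxCount M A y (M / q) := by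
    have := Nat.totient_pos.mpr (Nat.pos_of_dvd_of_pos hq_dvd (NeZero.pos M))
    lia
  refine ⟨?_, ?_, div_mul_mem_divSet hpq_dvd hpq hz hxz, fun hlt ↦ ?_⟩
  · rw [← one_mul q] at hq_dvd
    rcases hpos with hpos | hpos
    · simpa using div_mul_mem_divSet hq_dvd q.coprime_one_left hx (by simp) hpos
    · simpa using div_mul_mem_divSet hq_dvd q.coprime_one_left hy (by simp) hpos
  · rw [mul_right_comm] at hpqr ⊢
    rcases hpos with hpos | hpos
    · exact div_mul_mem_divSet hpqr (hpq.mul_left hrq) hy hxy hpos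
    · exact div_mul_mem_divSet hpqr (hpq.mul_left hrq) hx
        (by rw [← neg_sub, addOrderOf_neg, hxy]) hpos
  · rw [mul_comm q]
    exact div_mul_mem_divSet hrq_dvd hrq hz hyz (by lia)

end Count

lemma totient_pow_le_boxCount_add_boxCount {M : ℕ} [NeZero M] {A : Finset (ZMod M)}
    {p q r a b c m : ℕ} (hp : p.Prime) (hq : q.Prime) (hr : r.Prime)
    (hM : M = p ^ a * q ^ b * r ^ c) (hmb : m ≤ b) (hΦ : ∀ e < m, cycDvd M (M / q ^ e) A)
    {x y z : ZMod M} (hx : x ∈ A) (hy : y ∈ A) (hz : z ∈ A) (hxyz : x + (y - z) ∉ A)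
    (hxz : addOrderOf (x - z) = p) (hyz : addOrderOf (y - z) = r) :
    (q ^ m).totient ≤ boxCount M A x (M / q ^ m) + boxCount M A y (M / q ^ m) := by
  have hqm : q ^ m ∣ M := hM ▸ ((pow_dvd_pow q hmb).mul_left _).mul_right _
  refine totient_le_boxCount_add_boxCount hqm fun v hv ↦ ?_
  have hΔ := fwdDiff_indicator_eq_zero_of_cycDvd hp hq hr hM hΦ (hxz ▸ addOrderOf_nsmul_eq_zero _)
    (hv ▸ addOrderOf_nsmul_eq_zero _) (hyz ▸ addOrderOf_nsmul_eq_zero _)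
  simpa using mem_or_mem_of_fwdDiff_indicator_eq_zero (congrFun hΔ z) hz (by simpa using hx)
    (by simpa using hy) (by simpa using hxyz)

theorem statement16_general
    (pi pj pk : ℕ) (hpi : pi.Prime) (hpj : pj.Prime) (hpk : pk.Prime)
    (hij : pi ≠ pj) (hik : pi ≠ pk) (hjk : pj ≠ pk)
    (ni nj nk m : ℕ) (hni : 1 ≤ ni) (hmj : m ≤ nj) (hnk : 1 ≤ nk)
    (M : ℕ) (hM : M = pi ^ ni * pj ^ nj * pk ^ nk)
    (A : Finset (ZMod M))
    (a ai : ZMod M) (ha : a ∈ A)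
    (hgcd : Nat.gcd (a - ai).val M = M / pi)
    (hfk : gridSet M ai (M / pk) ⊆ (A : Set (ZMod M)))
    (hnfk : ¬ gridSet M a (M / pk) ⊆ (A : Set (ZMod M)))
    (hPhi : ∀ e < m, cycDvd M (M / pj ^ e) A) :
    (∀ ak ∈ A, Nat.gcd (ak - ai).val M = M / pk →
      (∀ a' ∈ A, a' ∈ gridSet M a (M / pk ^ nk) → Nat.gcd (ak - a').val M ≠ M / pi) →
      Nat.totient (pj ^ m) ≤
        boxCount M A a (M / pj ^ m) + boxCount M A ak (M / pj ^ m)) ∧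
    (M / pj ^ m ∈ DivSet M M (A : Set (ZMod M)) ∧
     M / (pi * pj ^ m * pk) ∈ DivSet M M (A : Set (ZMod M)) ∧
     (0 < boxCount M A a (M / pj ^ m) →
        M / (pi * pj ^ m) ∈ DivSet M M (A : Set (ZMod M))) ∧
     (boxCount M A a (M / pj ^ m) < Nat.totient (pj ^ m) →
        M / (pj ^ m * pk) ∈ DivSet M M (A : Set (ZMod M)))) := by
  have : NeZero M := ⟨by simp [hM, hpi.ne_zero, hpj.ne_zero, hpk.ne_zero]⟩
  have hdvd : pi * pj ^ m * pk ∣ M := hM ▸ mul_dvd_mul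
    (mul_dvd_mul (dvd_pow_self pi (by lia)) (pow_dvd_pow pj hmj)) (dvd_pow_self pk (by lia))
  have hdi : pi ∣ M := dvd_of_mul_right_dvd (dvd_of_mul_right_dvd hdvd)
  have hdk : pk ∣ M := dvd_of_mul_left_dvd hdvd
  have hai : ai ∈ A := hfk ((mem_gridSet_div_iff hdk _ _).mpr (by simp))
  have hu : addOrderOf (a - ai) = pi := (gcd_val_eq_div_iff hdi _).mp hgcd
  have totient_le {ak : ZMod M} (hak : ak ∈ A) (hb : a + (ak - ai) ∉ A)
      (hw : addOrderOf (ak - ai) = pk) :=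
    totient_pow_le_boxCount_add_boxCount hpi hpj hpk hM hmj hPhi ha hak hai hb hu hw
  refine ⟨fun ak hak hgk hline ↦ ?_, ?_⟩
  · have hw : addOrderOf (ak - ai) = pk := (gcd_val_eq_div_iff hdk _).mp hgk
    refine totient_le hak (fun hb ↦ hline _ hb ?_ ?_) hw
    · rw [mem_gridSet_div_iff (hM ▸ dvd_mul_left _ _), add_sub_cancel_left, hw]
      exact dvd_pow_self pk (by lia)
    · rw [gcd_val_eq_div_iff hdi, ← hu, ← addOrderOf_neg (a - ai)]
      congr 1
      abel
  · obtain ⟨b, hbk, hbA⟩ := Set.not_subset.mp hnfk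
    obtain ⟨ak, rfl⟩ : ∃ ak, b = a + (ak - ai) := ⟨b - a + ai, by abel⟩
    have hw : addOrderOf (ak - ai) = pk := by
      simpa using addOrderOf_sub_eq_of_mem_gridSet hpk hdk hbk (ne_of_mem_of_not_mem ha hbA).symm
    have hak : ak ∈ A := hfk ((mem_gridSet_div_iff hdk _ _).mpr hw.dvd)
    exact mem_divSet_of_totient_le hdvd (((Nat.coprime_primes hpi hpj).mpr hij).pow_right m)
      (((Nat.coprime_primes hpk hpj).mpr hjk.symm).pow_right m)
      ((Nat.coprime_primes hpi hpk).mpr hik) ha hak hai hu hw (totient_le hak hbA hw)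

/-- **Size-Divisor Lemma.** -/
theorem statement16
    (pi pj pk : ℕ) (hpi : pi.Prime) (hpj : pj.Prime) (hpk : pk.Prime)
    (hij : pi ≠ pj) (hik : pi ≠ pk) (hjk : pj ≠ pk)
    (ni nj nk : ℕ) (hni : 1 ≤ ni) (hnj : 2 ≤ nj) (hnk : 1 ≤ nk)
    (M : ℕ) (hM : M = pi ^ ni * pj ^ nj * pk ^ nk)
    (A : Finset (ZMod M))
    (a ai : ZMod M) (ha : a ∈ A) (hai : ai ∈ A)
    (hgcd : Nat.gcd (a - ai).val M = M / pi)
    (hfj : gridSet M a (M / pj) ⊆ (A : Set (ZMod M)))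
    (hfk : gridSet M ai (M / pk) ⊆ (A : Set (ZMod M)))
    (hnfk : ¬ gridSet M a (M / pk) ⊆ (A : Set (ZMod M)))
    (hPhiM : cycDvd M M A) (hPhiMj : cycDvd M (M / pj) A) :
    (∀ ak ∈ A, Nat.gcd (ak - ai).val M = M / pk →
      (∀ a' ∈ A, a' ∈ gridSet M a (M / pk ^ nk) → Nat.gcd (ak - a').val M ≠ M / pi) →
      Nat.totient (pj ^ 2) ≤
        boxCount M A a (M / pj ^ 2) + boxCount M A ak (M / pj ^ 2)) ∧
    (M / pj ^ 2 ∈ DivSet M M (A : Set (ZMod M)) ∧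
     M / (pi * pj ^ 2 * pk) ∈ DivSet M M (A : Set (ZMod M)) ∧
     (0 < boxCount M A a (M / pj ^ 2) →
        M / (pi * pj ^ 2) ∈ DivSet M M (A : Set (ZMod M))) ∧
     (boxCount M A a (M / pj ^ 2) < Nat.totient (pj ^ 2) →
        M / (pj ^ 2 * pk) ∈ DivSet M M (A : Set (ZMod M)))) := by
  refine statement16_general pi pj pk hpi hpj hpk hij hik hjk ni nj nk 2 hni hnj hnk M hM A a ai ha
    hgcd hfk hnfk fun e he ↦ ?_
  interval_cases e
  · simpa using hPhiM
  · simpa using hPhiMj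
end
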